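/- Let d ≥ 2, 2 ≤ k ≤ d, and let E ⊂ ℝ^d be a compact set. If the Hausdorff dimension of E is greater than dk/(k+1), then the (k(k+1)/2 − 1)-dimensional Lebesgue measure of S_k(E) is positive. -/

import Mathlib

open MeasureTheory Metric Set Topology
open scoped ENNReal

noncomputable section

/-- `ℝ^d` as Euclidean space. -/
abbrev Pt (d : ℕ) := EuclideanSpace ℝ (Fin d)

/-- The index set of pairs `i < j` in `{1, …, k+1}` with `(i,j) ≠ (1,2)`;
it has `k(k+1)/2 - 1` elements. -/
abbrev PairIdx' (k : ℕ) : Type :=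
  {p : Fin (k+1) × Fin (k+1) // p.1 < p.2 ∧ p ≠ ((0 : Fin (k+1)), (1 : Fin (k+1)))}

/-- The map sending a `(k+1)`-tuple of points to the vector of its pairwise distances
normalized by the distance between the first two points (local coordinates for
similarity classes). -/
def simMap (d k : ℕ) (x : Fin (k+1) → Pt d) : PairIdx' k → ℝ :=
  fun p => dist (x p.1.1) (x p.1.2) / dist (x 0) (x 1)

/-- A `(k+1)`-tuple is nondegenerate if `x^2 - x^1, …, x^{k+1} - x^1` are linearly
independent. -/
def Nondeg (d k : ℕ) (x : Fin (k+1) → Pt d) : Prop :=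
  LinearIndependent ℝ (fun i : Fin k => x i.succ - x 0)

/-- `S_k(E)`: the set of similarity classes of nondegenerate `k`-simplices with vertices in `E`,
realized in local coordinates as a subset of `ℝ^{k(k+1)/2 - 1}`. -/
def Sconf (d k : ℕ) (E : Set (Pt d)) : Set (PairIdx' k → ℝ) :=
  simMap d k '' {x | (∀ i, x i ∈ E) ∧ Nondeg d k x}

lemma tree_mass {ι : Type*} (par : ι → ι) (h : ℕ → ι → ℝ≥0∞)
    (hfin : ∀ n p, ∑' q : {q // par q = p}, h n q ≠ ∞)
    (hsub : ∀ n p, h n p ≤ ∑' q : {q // par q = p}, h (n+1) q) :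
    ∃ m : ℕ → ι → ℝ≥0∞, m 0 = h 0 ∧ (∀ n q, m n q ≤ h n q) ∧
      ∀ n p, ∑' q : {q // par q = p}, m (n+1) q = m n p := by
  let m : ℕ → ι → ℝ≥0∞ := fun n => Nat.rec (h 0)
    (fun n f q => f (par q) * h (n+1) q / ∑' q' : {q' // par q' = par q}, h (n+1) q') n
  have hm : ∀ n q, m (n+1) q =
    m n (par q) * h (n+1) q / ∑' q' : {q' // par q' = par q}, h (n+1) q' := fun n q => rfl
  have hle : ∀ n q, m n q ≤ h n q := by
    intro n
    induction n with
    | zero => intro q; exact le_rfl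
    | succ n ih =>
      intro q
      rw [hm]
      refine ENNReal.div_le_of_le_mul ?_
      rw [mul_comm]
      gcongr
      exact (ih _).trans (hsub _ _)
  refine ⟨m, rfl, hle, ?_⟩
  intro n p
  have h1 : ∀ q : {q // par q = p}, m (n+1) q =
      m n p * (∑' q' : {q' // par q' = p}, h (n+1) q')⁻¹ * h (n+1) q := by
    rintro ⟨q, rfl⟩
    rw [hm, div_eq_mul_inv]; ring
  simp_rw [h1]
  rw [ENNReal.tsum_mul_left]
  by_cases h0 : ∑' q' : {q' // par q' = p}, h (n+1) q' = 0
  · have : m n p = 0 := le_antisymm ((hle n p).trans ((hsub n p).trans h0.le)) bot_le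
    simp [this]
  · rw [mul_assoc, ENNReal.inv_mul_cancel h0 (hfin _ _), mul_one]

lemma tree_mass_iter {ι : Type*} (par : ι → ι) (m : ℕ → ι → ℝ≥0∞)
    (hm : ∀ n p, ∑' q : {q // par q = p}, m (n+1) q = m n p) (l j : ℕ) (g : ι → ℝ≥0∞) :
    ∑' q, m (l + j) q * g (par^[j] q) = ∑' q, m l q * g q := by
  induction j generalizing g with
  | zero => rfl
  | succ j ih =>
    rw [← ih g]
    rw [← (Equiv.sigmaFiberEquiv par).tsum_eq, ENNReal.tsum_sigma']
    congr 1; ext p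
    rw [← hm (l + j) p, ← ENNReal.tsum_mul_right]
    congr 1; ext ⟨q, rfl⟩
    simp [Equiv.sigmaFiberEquiv, Function.iterate_succ_apply, add_assoc]

/-- dyadic cell -/
def dcell {d : ℕ} (n : ℕ) (x : Pt d) : Fin d → ℤ := fun i => ⌊(2:ℝ)^n * x i⌋

def dpar {d : ℕ} (q : Fin d → ℤ) : Fin d → ℤ := fun i => q i / 2

lemma dpar_dcell {d : ℕ} (n : ℕ) (x : Pt d) : dpar (dcell (n+1) x) = dcell n x := by
  ext i
  simp only [dpar, dcell]
  symm
  rw [Int.floor_eq_iff]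
  have h1 := Int.floor_le ((2:ℝ)^(n+1) * x i)
  have h2 := Int.lt_floor_add_one ((2:ℝ)^(n+1) * x i)
  set z := ⌊(2:ℝ)^(n+1) * x i⌋
  have e1 : 2 * (z / 2) ≤ z := by omega
  have e2 : z ≤ 2 * (z/2) + 1 := by omega
  have e1' : (2:ℝ) * ((z / 2 : ℤ) : ℝ) ≤ z := by exact_mod_cast e1
  have e2' : (z:ℝ) ≤ 2 * ((z/2 : ℤ) : ℝ) + 1 := by exact_mod_cast e2
  rw [pow_succ] at h1 h2
  constructor <;> nlinarith

lemma dpar_iter_dcell {d : ℕ} (l j : ℕ) (x : Pt d) : dpar^[j] (dcell (l+j) x) = dcell l x := by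
  induction j with
  | zero => rfl
  | succ j ih => rw [Function.iterate_succ_apply, ← add_assoc, dpar_dcell, ih]

lemma measurableSet_dcell {d : ℕ} (n : ℕ) (q : Fin d → ℤ) :
    MeasurableSet {x : Pt d | dcell n x = q} := by
  have : Measurable (fun x : Pt d => dcell n x) := by
    unfold dcell
    rw [measurable_pi_iff]
    intro i
    exact Int.measurable_floor.comp (by fun_prop)
  exact this (measurableSet_singleton q)

lemma dist_of_dcell_eq {d : ℕ} (n : ℕ) {x y : Pt d} (h : dcell n x = dcell n y) :
    dist x y ≤ (d + 1) * (2:ℝ)⁻¹^n := by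
  have h1 : ∀ i, |x i - y i| ≤ (2:ℝ)⁻¹^n := by
    intro i
    have hi := congrFun h i
    simp only [dcell] at hi
    have := Int.abs_sub_lt_one_of_floor_eq_floor hi
    rw [← mul_sub, abs_mul, abs_of_pos (by positivity)] at this
    rw [inv_pow, ← one_div, le_div_iff₀ (by positivity)]
    linarith
  rw [dist_eq_norm]
  refine (EuclideanSpace.norm_eq _).trans_le ?_
  rw [Real.sqrt_le_left (by positivity)]
  calc ∑ i, ‖(x - y) i‖^2 ≤ ∑ i : Fin d, ((2:ℝ)⁻¹^n)^2 := by
        gcongr with i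
        simpa using h1 i
    _ = d * ((2:ℝ)⁻¹^n)^2 := by simp
    _ ≤ _ := by
      rw [mul_pow]
      gcongr
      have : (0:ℝ) ≤ d := by positivity
      nlinarith

def scontent (X : Type*) [PseudoEMetricSpace X] (s : ℝ) (hs : 0 < s) : OuterMeasure X :=
  OuterMeasure.ofFunction (fun t => ediam t ^ s) (by simp [hs])

lemma scontent_pos {d : ℕ} (E : Set (Pt d)) (s : ℝ) (hs : 0 < s)
    (h : ENNReal.ofReal s < dimH E) : scontent (Pt d) s hs E ≠ 0 := by
  intro h0
  have htop : μH[s] E = ∞ := by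
    have := hausdorffMeasure_of_lt_dimH (s := E) (d := s.toNNReal) h
    rwa [Real.coe_toNNReal s hs.le] at this
  have : μH[s] E ≤ 1 := by
    rw [Measure.hausdorffMeasure_apply]
    refine iSup₂_le fun r hr => ?_
    have hr' : 0 < min 1 (r ^ s) := by
      refine lt_min one_pos ?_
      by_cases hrt : r = ∞
      · simp [hrt, hs]
      · exact ENNReal.rpow_pos hr hrt
    rw [scontent, OuterMeasure.ofFunction_apply] at h0
    rw [← h0, iInf_lt_iff] at hr'
    obtain ⟨t, ht⟩ := hr'
    rw [iInf_lt_iff] at ht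
    obtain ⟨hc, ht⟩ := ht
    refine iInf_le_of_le t (iInf_le_of_le hc (iInf_le_of_le (fun n => ?_) ?_))
    · have h1 : ediam (t n) ^ s ≤ r ^ s :=
        (ENNReal.le_tsum n).trans (ht.le.trans (min_le_right _ _))
      exact (ENNReal.rpow_le_rpow_iff hs).1 h1
    · refine (ENNReal.tsum_le_tsum fun n => ?_).trans (ht.le.trans (min_le_left _ _))
      exact iSup_le fun _ => le_rfl
  rw [htop] at this
  simp at this

theorem frostman {d : ℕ} (E : Set (Pt d)) (hE : IsCompact E) (s : ℝ) (hs : 0 < s)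
    (h : ENNReal.ofReal s < dimH E) :
    ∃ μ : Measure (Pt d), IsProbabilityMeasure μ ∧ μ Eᶜ = 0 ∧ ∃ C : ℝ, 0 < C ∧
      ∀ x : Pt d, ∀ r : ℝ, 0 < r → μ (ball x r) ≤ ENNReal.ofReal (C * r ^ s) := by
  set H := scontent (Pt d) s hs with hH
  let hh : ℕ → (Fin d → ℤ) → ℝ≥0∞ := fun n q => H (E ∩ {x | dcell n x = q})
  have hbound : ∀ n q, hh n q ≤ ENNReal.ofReal (((d + 1) * (2:ℝ)⁻¹^n) ^ s) := by
    intro n q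
    refine (OuterMeasure.ofFunction_le _).trans ?_
    rw [← ENNReal.ofReal_rpow_of_pos (by positivity)]
    refine ENNReal.rpow_le_rpow ?_ hs.le
    refine ediam_le fun x hx y hy => ?_
    rw [edist_dist]
    exact ENNReal.ofReal_le_ofReal (dist_of_dcell_eq n (hx.2.trans hy.2.symm))
  have hfib : ∀ p : Fin d → ℤ, Finite {q // dpar q = p} := by
    intro p
    refine Set.Finite.subset (Set.finite_Icc (fun i => 2 * p i) (fun i => 2 * p i + 1)) ?_
    intro q hq
    have hq : dpar q = p := hq
    rw [mem_Icc, Pi.le_def, Pi.le_def]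
    constructor <;> intro i <;> have := congrFun hq i <;> simp only [dpar] at this <;> omega
  obtain ⟨m, hm0, hmle, hmsum⟩ := tree_mass dpar hh
    (fun n p => by
      have := hfib p
      have := Fintype.ofFinite {q // dpar q = p}
      rw [tsum_fintype]
      exact (ENNReal.sum_lt_top.2 fun (q : {q // dpar q = p}) _ => (hbound n q.1).trans_lt ENNReal.ofReal_lt_top).ne)
    (fun n p => by
      have hsub : E ∩ {x | dcell n x = p} ⊆
          ⋃ q : {q // dpar q = p}, E ∩ {x | dcell (n+1) x = q} := by
        intro x hx
        rw [mem_iUnion]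
        exact ⟨⟨dcell (n+1) x, by rw [dpar_dcell]; exact hx.2⟩, hx.1, rfl⟩
      exact (measure_mono hsub).trans (measure_iUnion_le _))
  -- total mass
  set M := ∑' q, m 0 q with hM
  have hMtot : ∀ n, ∑' q, m n q = M := by
    intro n
    have := tree_mass_iter dpar m hmsum 0 n (fun _ => 1)
    simpa using this
  have hfin0 : (Set.Finite {q : Fin d → ℤ | ∃ x ∈ E, dcell 0 x = q}) := by
    obtain ⟨R, hR⟩ := hE.isBounded.subset_closedBall 0
    refine Set.Finite.subset (Set.finite_Icc (fun _ : Fin d => -⌈R⌉ - 1) (fun _ => ⌈R⌉ + 1)) ?_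
    rintro q ⟨x, hx, rfl⟩
    have hxR : ‖x‖ ≤ R := by simpa using hR hx
    have hc : ∀ i, |x i| ≤ ⌈R⌉ := fun i =>
      ((PiLp.norm_apply_le x i).trans hxR).trans (Int.le_ceil R)
    rw [mem_Icc, Pi.le_def, Pi.le_def]
    constructor <;> intro i
    · simp only [dcell, pow_zero, one_mul]
      rw [Int.le_floor]; push_cast
      have := abs_le.1 (hc i); linarith
    · simp only [dcell, pow_zero, one_mul]
      have h1 := Int.floor_le (x i)
      have h2 := (abs_le.1 (hc i)).2
      have : (⌊x i⌋ : ℝ) ≤ ⌈R⌉ := h1.trans h2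
      have : ⌊x i⌋ ≤ ⌈R⌉ := by exact_mod_cast this
      omega
  have hne : ∀ n q, (¬ ∃ x ∈ E, dcell n x = q) → m n q = 0 := by
    intro n q hq
    have : E ∩ {x | dcell n x = q} = ∅ := by
      ext x; simp only [mem_inter_iff, mem_ofPred_eq, mem_empty_iff_false, iff_false]
      exact fun hx => hq ⟨x, hx.1, hx.2⟩
    refine le_antisymm ((hmle n q).trans ?_) bot_le
    simp [hh, this]
  have hMtop : M ≠ ∞ := by
    rw [hM, tsum_eq_sum (s := hfin0.toFinset) (by
      intro q hq
      exact hne 0 q (by simpa using hq))]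
    exact (ENNReal.sum_lt_top.2 fun q _ =>
      ((hmle 0 q).trans (hbound 0 q)).trans_lt ENNReal.ofReal_lt_top).ne
  have hMpos : M ≠ 0 := by
    intro h0
    apply scontent_pos E s hs h
    refine le_antisymm ?_ bot_le
    have hsub : E ⊆ ⋃ q : Fin d → ℤ, E ∩ {x | dcell 0 x = q} := by
      intro x hx; rw [mem_iUnion]; exact ⟨_, hx, rfl⟩
    calc H E ≤ _ := measure_mono hsub
      _ ≤ ∑' q, hh 0 q := measure_iUnion_le _
      _ = 0 := by rw [← hm0]; exact h0
  have hEne : E.Nonempty := by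
    rw [nonempty_iff_ne_empty]; rintro rfl; simp at h
  obtain ⟨x0, hx0⟩ := hEne
  -- points
  have hpt : ∀ n q, ∃ x : E, (∃ x ∈ E, dcell n x = q) → dcell n (x : Pt d) = q := by
    intro n q
    by_cases hq : ∃ x ∈ E, dcell n x = q
    · obtain ⟨x, hx, hxq⟩ := hq
      exact ⟨⟨x, hx⟩, fun _ => hxq⟩
    · exact ⟨⟨x0, hx0⟩, fun h => absurd h hq⟩
  choose pt hpt using hpt
  have : CompactSpace E := isCompact_iff_compactSpace.1 hE
  let ν : ℕ → Measure E := fun n => M⁻¹ • Measure.sum fun q => m n q • Measure.dirac (pt n q)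
  have hν : ∀ n, IsProbabilityMeasure (ν n) := by
    intro n
    constructor
    simp only [ν, Measure.smul_apply, smul_eq_mul, Measure.sum_apply _ MeasurableSet.univ]
    simp only [measure_univ, mul_one, hMtot]
    exact ENNReal.inv_mul_cancel hMpos hMtop
  have hcellν : ∀ l j p, ν (l + j) {x : E | dcell l (x : Pt d) = p} ≤ M⁻¹ * hh l p := by
    intro l j p
    have hms : MeasurableSet {x : E | dcell l (x : Pt d) = p} :=
      measurable_subtype_coe (measurableSet_dcell l p)
    simp only [ν, Measure.smul_apply, smul_eq_mul, Measure.sum_apply _ hms]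
    gcongr
    classical
    have := tree_mass_iter dpar m hmsum l j (fun q => if q = p then 1 else 0)
    have h2 : ∑' q, m l q * (if q = p then 1 else 0) = m l p := by
      rw [tsum_eq_single p]
      · simp
      · intro q hq; simp [hq]
    rw [h2] at this
    refine le_trans ?_ (hmle l p)
    rw [← this]
    refine ENNReal.tsum_le_tsum fun q => ?_
    by_cases hq : ∃ x ∈ E, dcell (l+j) x = q
    · gcongr
      have e := hpt (l+j) q hq
      rw [Measure.dirac_apply' _ hms]
      simp only [indicator, mem_ofPred_eq, Pi.one_apply]
      rw [← dpar_iter_dcell l j, e]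
    · simp [hne _ _ hq]
  let P : ℕ → ProbabilityMeasure E := fun n => ⟨ν n, hν n⟩
  let F : Ultrafilter (ProbabilityMeasure E) := (Filter.hyperfilter ℕ).map P
  obtain ⟨ρ, -, hρ⟩ := isCompact_univ.ultrafilter_le_nhds F (by simp)
  have hlim : Filter.Tendsto P (Filter.hyperfilter ℕ : Filter ℕ) (𝓝 ρ) := hρ
  refine ⟨(ρ : Measure E).map Subtype.val, ?_, ?_, ?_⟩
  · exact Measure.isProbabilityMeasure_map measurable_subtype_coe.aemeasurable
  · rw [Measure.map_apply measurable_subtype_coe hE.measurableSet.compl]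
    convert measure_empty (μ := (ρ : Measure E))
    ext x; simp
  · set C0 : ℝ := M.toReal⁻¹ * 3 ^ d * (2 * (d + 1)) ^ s + 1
    have hMr : 0 < M.toReal := ENNReal.toReal_pos hMpos hMtop
    have hC0 : 0 < C0 := by positivity
    refine ⟨C0, hC0, fun x r hr => ?_⟩
    rw [Measure.map_apply measurable_subtype_coe measurableSet_ball]
    by_cases hr1 : 1 < r
    · refine prob_le_one.trans ?_
      rw [ENNReal.one_le_ofReal]
      have : 1 ≤ r ^ s := Real.one_le_rpow hr1.le hs.le
      have : 1 ≤ C0 := by simp only [C0]; linarith [show 0 ≤ M.toReal⁻¹ * 3 ^ d * (2 * ((d:ℝ) + 1)) ^ s by positivity]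
      nlinarith
    push Not at hr1
    obtain ⟨l, hl1, hl2⟩ := exists_nat_pow_near_of_lt_one hr hr1 (y := (2:ℝ)⁻¹) (by norm_num) (by norm_num)
    -- (2⁻¹)^(l+1) < r ≤ (2⁻¹)^l
    have hsub : ∀ n, ν (l + n) (Subtype.val ⁻¹' ball x r) ≤ ENNReal.ofReal (C0 * r ^ s) := by
      intro n
      have hcov : (Subtype.val ⁻¹' ball x r : Set E) ⊆
          ⋃ p ∈ Finset.Icc (fun i => dcell l x i - 1) (fun i => dcell l x i + 1),
            {y : E | dcell l (y : Pt d) = p} := by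
        intro y hy
        simp only [mem_iUnion, mem_ofPred_eq]
        refine ⟨dcell l (y : Pt d), ?_, rfl⟩
        have hyr : dist (y : Pt d) x < r := hy
        have hi : ∀ i, |(2:ℝ)^l * (y : Pt d) i - 2^l * x i| < 1 := by
          intro i
          rw [← mul_sub, abs_mul, abs_of_pos (by positivity)]
          have h3 : |(y : Pt d) i - x i| < (2:ℝ)⁻¹^l := by
            refine lt_of_lt_of_le (lt_of_le_of_lt ?_ hyr) hl2
            rw [dist_eq_norm]
            exact PiLp.norm_apply_le ((y : Pt d) - x) i
          calc _ < (2:ℝ)^l * (2:ℝ)⁻¹^l := by gcongr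
            _ = 1 := by rw [← mul_pow]; norm_num
        rw [Finset.mem_Icc, Pi.le_def, Pi.le_def]
        constructor <;> intro i <;> have := abs_lt.1 (hi i) <;> simp only [dcell]
        · have h1 := Int.floor_le ((2:ℝ)^l * x i)
          have : ⌊(2:ℝ)^l * x i⌋ - 1 ≤ ⌊(2:ℝ)^l * (y : Pt d) i⌋ := by
            rw [Int.le_floor]; push_cast; linarith
          exact this
        · have h1 := Int.floor_le ((2:ℝ)^l * (y : Pt d) i)
          have : ⌊(2:ℝ)^l * (y : Pt d) i⌋ - 1 ≤ ⌊(2:ℝ)^l * x i⌋ := by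
            rw [Int.le_floor]; push_cast; linarith
          omega
      have hcard : (Finset.Icc (fun i => dcell l x i - 1) (fun i => dcell l x i + 1)).card = 3 ^ d := by
        rw [Pi.card_Icc]
        simp only [Int.card_Icc]
        have : ∀ i, (dcell l x i + 1 + 1 - (dcell l x i - 1)).toNat = 3 := by intro i; omega
        simp [this]
      calc ν (l + n) (Subtype.val ⁻¹' ball x r) ≤ _ := measure_mono hcov
        _ ≤ ∑ p ∈ Finset.Icc (fun i => dcell l x i - 1) (fun i => dcell l x i + 1),
            ν (l + n) {y : E | dcell l (y : Pt d) = p} := measure_biUnion_finset_le _ _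
        _ ≤ ∑ p ∈ Finset.Icc (fun i => dcell l x i - 1) (fun i => dcell l x i + 1),
            M⁻¹ * ENNReal.ofReal (((d + 1) * (2:ℝ)⁻¹^l) ^ s) := by
            gcongr with p
            exact (hcellν l n p).trans (by gcongr; exact hbound l p)
        _ = ENNReal.ofReal (M.toReal⁻¹ * 3 ^ d * ((d + 1) * (2:ℝ)⁻¹^l) ^ s) := by
            rw [Finset.sum_const, hcard, ← ENNReal.ofReal_toReal (ENNReal.inv_ne_top.2 hMpos),
              ENNReal.toReal_inv, ← ENNReal.ofReal_mul (by positivity), nsmul_eq_mul]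
            rw [show ((3 ^ d : ℕ) : ℝ≥0∞) = ENNReal.ofReal (3 ^ d) by
              rw [← ENNReal.ofReal_natCast]; norm_num, ← ENNReal.ofReal_mul (by positivity)]
            congr 1; ring
        _ ≤ _ := by
            apply ENNReal.ofReal_le_ofReal
            have e : ((d + 1) * (2:ℝ)⁻¹^l) ≤ (2 * (d + 1)) * r := by
              rw [pow_succ] at hl1
              have : (0:ℝ) ≤ d := by positivity
              nlinarith
            have e2 : ((d + 1) * (2:ℝ)⁻¹^l) ^ s ≤ (2 * (d + 1)) ^ s * r ^ s := by
              rw [← Real.mul_rpow (by positivity) (by positivity)]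
              gcongr
            have e3 : 0 ≤ r ^ s := by positivity
            calc _ ≤ M.toReal⁻¹ * 3 ^ d * ((2 * (d + 1)) ^ s * r ^ s) := by gcongr
              _ ≤ _ := by simp only [C0]; nlinarith
    have hop : IsOpen (Subtype.val ⁻¹' ball x r : Set E) := isOpen_ball.preimage continuous_subtype_val
    refine (ProbabilityMeasure.le_liminf_measure_open_of_tendsto hlim hop).trans ?_
    refine Filter.liminf_le_of_le (by isBoundedDefault) ?_
    intro b hb
    have hge : ∀ᶠ n in (Filter.hyperfilter ℕ : Filter ℕ), l ≤ n := by
      have : (Filter.hyperfilter ℕ : Filter ℕ) ≤ Filter.atTop := by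
        rw [← Nat.cofinite_eq_atTop]; exact Filter.hyperfilter_le_cofinite
      exact this (Filter.eventually_ge_atTop l)
    obtain ⟨n, hn1, hn2⟩ := (hb.and hge).exists
    obtain ⟨j, rfl⟩ := Nat.exists_eq_add_of_le hn2
    exact hn1.trans (hsub j)

lemma exp_neg_eq_lintegral (f : ℝ) (hf : 0 ≤ f) : ENNReal.ofReal (Real.exp (-f)) =
    ∫⁻ l in Ioi (0:ℝ), (if f < l then ENNReal.ofReal (Real.exp (-l)) else 0) := by
  have h1 : ∫⁻ l in Ioi (0:ℝ), (if f < l then ENNReal.ofReal (Real.exp (-l)) else 0) =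
      ∫⁻ l in Ioi f, ENNReal.ofReal (Real.exp (-l)) := by
    rw [← lintegral_indicator measurableSet_Ioi, ← lintegral_indicator measurableSet_Ioi]
    congr 1; ext l
    by_cases h : f < l
    · simp [h, lt_of_le_of_lt hf h]
    · simp [h]
  rw [h1, ← ofReal_integral_eq_lintegral_ofReal (integrableOn_exp_neg_Ioi f)
    (Filter.Eventually.of_forall fun x => (Real.exp_pos _).le), integral_exp_neg_Ioi]

lemma gauss_pot {d : ℕ} (μ : Measure (Pt d)) [IsFiniteMeasure μ] (s C : ℝ) (hs : 0 < s) (hC : 0 < C)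
    (hμ : ∀ x : Pt d, ∀ r : ℝ, 0 < r → μ (ball x r) ≤ ENNReal.ofReal (C * r ^ s)) :
    ∃ C' : ℝ, 0 < C' ∧ ∀ a : ℝ, 0 < a → ∀ x : Pt d,
      ∫⁻ u, ENNReal.ofReal (Real.exp (-(‖x - u‖^2/(4*a)))) ∂μ ≤ ENNReal.ofReal (C' * a ^ (s/2)) := by
  have hG : IntegrableOn (fun l : ℝ => Real.exp (-l) * l ^ (s/2 + 1 - 1)) (Ioi 0) :=
    Real.GammaIntegral_convergent (by positivity)
  set G := ∫ l in Ioi (0:ℝ), Real.exp (-l) * l ^ (s/2 + 1 - 1) with hGdef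
  have hGnn : 0 ≤ G := setIntegral_nonneg measurableSet_Ioi fun l hl => by
    have : (0:ℝ) < l := hl
    positivity
  refine ⟨C * 2 ^ s * (G + 1), by positivity, fun a ha x => ?_⟩
  have e1 : ∀ u, ENNReal.ofReal (Real.exp (-(‖x - u‖^2/(4*a)))) = ∫⁻ l in Ioi (0:ℝ),
      (if ‖x - u‖^2/(4*a) < l then ENNReal.ofReal (Real.exp (-l)) else 0) :=
    fun u => exp_neg_eq_lintegral _ (by positivity)
  simp_rw [e1]
  rw [lintegral_lintegral_swap]
  · calc _ ≤ ∫⁻ l in Ioi (0:ℝ), ENNReal.ofReal (C * 2 ^ s * a ^ (s/2) * (Real.exp (-l) * l ^ (s/2+1-1))) := by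
          refine setLIntegral_mono' measurableSet_Ioi fun l hl => ?_
          have hl : 0 < l := hl
          have e2 : ∀ u, (if ‖x - u‖^2/(4*a) < l then ENNReal.ofReal (Real.exp (-l)) else 0) =
              (ball x (2 * Real.sqrt (a * l))).indicator (fun _ => ENNReal.ofReal (Real.exp (-l))) u := by
            intro u
            simp only [indicator, mem_ball]
            congr 1
            rw [dist_comm, dist_eq_norm, div_lt_iff₀ (by positivity)]
            rw [show 2 * Real.sqrt (a * l) = Real.sqrt (l * (4 * a)) by
              rw [show l * (4 * a) = 2^2 * (a*l) by ring, Real.sqrt_mul (by norm_num : (0:ℝ) ≤ 2^2) (a*l), Real.sqrt_sq (by norm_num)]]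
            rw [Real.lt_sqrt (by positivity)]
          simp_rw [e2]
          rw [lintegral_indicator_const measurableSet_ball]
          calc _ ≤ ENNReal.ofReal (Real.exp (-l)) * ENNReal.ofReal (C * (2 * Real.sqrt (a*l)) ^ s) := by
                gcongr; exact hμ _ _ (by positivity)
            _ = _ := by
              rw [← ENNReal.ofReal_mul (by positivity)]
              congr 1
              rw [Real.mul_rpow (by positivity) (by positivity), Real.sqrt_eq_rpow,
                ← Real.rpow_mul (by positivity), Real.mul_rpow (by positivity) (by positivity)]
              ring_nf
      _ = ENNReal.ofReal (C * 2 ^ s * a ^ (s/2) * G) := by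
          rw [← ofReal_integral_eq_lintegral_ofReal (hG.const_mul _), integral_const_mul]
          refine (ae_restrict_iff' measurableSet_Ioi).2 (Filter.Eventually.of_forall fun l hl => ?_)
          have : (0:ℝ) < l := hl
          simp only [Pi.zero_apply]
          positivity
      _ ≤ _ := by
          apply ENNReal.ofReal_le_ofReal
          have : 0 ≤ C * 2 ^ s * a ^ (s/2) := by positivity
          nlinarith
  · apply Measurable.aemeasurable
    refine Measurable.ite ?_ (by fun_prop) measurable_const
    exact measurableSet_lt (by fun_prop) (by fun_prop)

/-- gaussian kernel with transform `exp (-a |ξ|^2)` -/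
def gK (d : ℕ) (a : ℝ) (x : Pt d) : ℝ :=
  (Real.pi / a) ^ ((d:ℝ)/2) * Real.exp (-(‖x‖^2/(4*a)))

lemma gK_nonneg {d : ℕ} {a : ℝ} (ha : 0 < a) (x : Pt d) : 0 ≤ gK d a x := by
  unfold gK; positivity

lemma gK_continuous {d : ℕ} (a : ℝ) : Continuous (gK d a) := by
  unfold gK; fun_prop

lemma gK_le {d : ℕ} {a : ℝ} (ha : 0 < a) (x : Pt d) : gK d a x ≤ (Real.pi / a) ^ ((d:ℝ)/2) := by
  unfold gK
  have : Real.exp (-(‖x‖^2/(4*a))) ≤ 1 := by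
    rw [Real.exp_le_one_iff]; simp; positivity
  have h2 : 0 ≤ (Real.pi / a) ^ ((d:ℝ)/2) := by positivity
  nlinarith

lemma gK_hat {d : ℕ} {a : ℝ} (ha : 0 < a) (x : Pt d) :
    ∫ ξ : Pt d, Complex.exp (-(a * ‖ξ‖^2 : ℝ)) * Complex.exp ((inner ℝ x ξ : ℝ) * Complex.I) =
      (gK d a x : ℂ) := by
  have h := GaussianFourier.integral_cexp_neg_mul_sq_norm_add (V := Pt d) (b := (a:ℂ)) (by simpa using ha)
    Complex.I x
  have e : ∀ ξ : Pt d, Complex.exp (-(a * ‖ξ‖^2 : ℝ)) * Complex.exp ((inner ℝ x ξ : ℝ) * Complex.I)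
      = Complex.exp (-a * ‖ξ‖^2 + Complex.I * (inner ℝ x ξ : ℝ)) := by
    intro ξ; rw [← Complex.exp_add]; push_cast; congr 1; ring
  simp_rw [e]
  rw [h]
  unfold gK
  push_cast
  rw [Complex.ofReal_cpow (by positivity)]
  simp only [finrank_euclideanSpace, Fintype.card_fin]
  push_cast
  congr 2
  rw [Complex.I_sq]; ring

lemma gK_conv {d : ℕ} {a b : ℝ} (ha : 0 < a) (hb : 0 < b) (x y : Pt d) :
    Integrable (fun z => gK d a (x - z) * gK d b (y - z)) ∧
    ∫ z, gK d a (x - z) * gK d b (y - z) = (2 * Real.pi) ^ d * gK d (a + b) (x - y) := by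
  set β : ℝ := 1/(4*a) + 1/(4*b) with hβ
  have hβpos : 0 < β := by positivity
  have e : ∀ v : Pt d, Real.exp (-(‖x - (x - v)‖^2/(4*a))) * Real.exp (-(‖y - (x - v)‖^2/(4*b))) =
      Real.exp (-(‖x-y‖^2/(4*b))) * (Complex.exp (-(β:ℂ) * ‖v‖^2 + (1/(2*b) : ℝ) * (inner ℝ (x - y) v : ℝ))).re := by
    intro v
    have : (-(β:ℂ) * ‖v‖^2 + (1/(2*b) : ℝ) * (inner ℝ (x - y) v : ℝ)) =
        ((-β * ‖v‖^2 + (1/(2*b)) * (inner ℝ (x - y) v) : ℝ) : ℂ) := by push_cast; ring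
    rw [this, ← Complex.ofReal_exp, Complex.ofReal_re, ← Real.exp_add, ← Real.exp_add]
    congr 1
    have h1 : x - (x - v) = v := by abel
    have h2 : y - (x - v) = v - (x - y) := by abel
    rw [h1, h2, norm_sub_sq_real, real_inner_comm v]
    rw [hβ]; field_simp; ring
  have hint := GaussianFourier.integrable_cexp_neg_mul_sq_norm_add (V := Pt d) (b := (β:ℂ)) (by simpa using hβpos)
    ((1/(2*b) : ℝ) : ℂ) (x - y)
  have hval := GaussianFourier.integral_cexp_neg_mul_sq_norm_add (V := Pt d) (b := (β:ℂ)) (by simpa using hβpos)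
    ((1/(2*b) : ℝ) : ℂ) (x - y)
  have e' : ∀ v : Pt d, gK d a (x - (x - v)) * gK d b (y - (x - v)) =
      ((Real.pi / a) ^ ((d:ℝ)/2) * (Real.pi / b) ^ ((d:ℝ)/2) * Real.exp (-(‖x-y‖^2/(4*b)))) *
      (Complex.exp (-(β:ℂ) * ‖v‖^2 + (1/(2*b) : ℝ) * (inner ℝ (x - y) v : ℝ))).re := by
    intro v
    unfold gK
    rw [mul_mul_mul_comm, e v]; ring
  have hI : Integrable (fun v => gK d a (x - (x - v)) * gK d b (y - (x - v))) := by
    simp_rw [e']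
    exact hint.re.const_mul _
  constructor
  · have := hI.comp_sub_left x
    refine this.congr (Filter.Eventually.of_forall fun z => ?_)
    simp
  · rw [← integral_sub_left_eq_self _ _ x]
    simp_rw [e']
    rw [integral_const_mul]
    have : ∫ v : Pt d, (Complex.exp (-(β:ℂ) * ‖v‖^2 + (1/(2*b) : ℝ) * (inner ℝ (x - y) v : ℝ))).re =
      (Real.pi / β) ^ ((d:ℝ)/2) * Real.exp ((1/(2*b))^2 * ‖x-y‖^2 / (4 * β)) := by
      have h3 := integral_re hint
      simp only [RCLike.re_to_complex] at h3
      rw [h3, hval]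
      have : (↑Real.pi / ↑β : ℂ) ^ ((Module.finrank ℝ (Pt d) : ℂ) / 2) * Complex.exp (((1/(2*b) : ℝ):ℂ) ^ 2 * ‖x - y‖ ^ 2 / (4 * β))
        = (((Real.pi / β) ^ ((d:ℝ)/2) * Real.exp ((1/(2*b))^2 * ‖x-y‖^2 / (4 * β)) : ℝ) : ℂ) := by
        push_cast
        rw [Complex.ofReal_cpow (by positivity)]
        simp
      rw [this, Complex.ofReal_re]
    rw [this]
    unfold gK
    have h1 : Real.exp (-(‖x-y‖^2/(4*b))) * Real.exp ((1/(2*b))^2 * ‖x-y‖^2 / (4 * β)) =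
        Real.exp (-(‖x-y‖^2/(4*(a+b)))) := by
      rw [← Real.exp_add]; congr 1
      rw [hβ]; field_simp; ring
    have h2 : (Real.pi / a) ^ ((d:ℝ)/2) * (Real.pi / b) ^ ((d:ℝ)/2) * (Real.pi / β) ^ ((d:ℝ)/2) =
        (2 * Real.pi) ^ d * (Real.pi / (a+b)) ^ ((d:ℝ)/2) := by
      rw [← Real.mul_rpow (by positivity) (by positivity), ← Real.mul_rpow (by positivity) (by positivity)]
      have : (2 * Real.pi) ^ d = ((2*Real.pi)^2) ^ ((d:ℝ)/2) := by
        rw [← Real.rpow_natCast (2 * Real.pi) 2, ← Real.rpow_mul (by positivity), ← Real.rpow_natCast]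
        congr 1; push_cast; ring
      rw [this, ← Real.mul_rpow (by positivity) (by positivity)]
      congr 1
      rw [hβ]; field_simp; ring
    rw [← h1]
    linear_combination (Real.exp (-(‖x-y‖^2/(4*b))) * Real.exp ((1/(2*b))^2 * ‖x-y‖^2 / (4 * β))) * h2

lemma gK_integral {d : ℕ} {a : ℝ} (ha : 0 < a) : Integrable (gK d a) ∧ ∫ x, gK d a x = (2 * Real.pi) ^ d := by
  have h := GaussianFourier.integral_rexp_neg_mul_sq_norm (V := Pt d) (b := 1/(4*a)) (by positivity)
  have h2 : Integrable (fun v : Pt d => Real.exp (-(1/(4*a)) * ‖v‖^2)) := by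
    have := GaussianFourier.integrable_cexp_neg_mul_sq_norm_add (V := Pt d) (b := ((1/(4*a) : ℝ) : ℂ)) (by rw [Complex.ofReal_re]; positivity) 0 0
    refine this.re.congr (Filter.Eventually.of_forall fun v => ?_)
    have : (-((1/(4*a) : ℝ) : ℂ) * ‖v‖^2 + 0 * ((inner ℝ (0 : Pt d) v : ℝ) : ℂ)) = ((-(1/(4*a)) * ‖v‖^2 : ℝ) : ℂ) := by push_cast; ring
    simp only [RCLike.re_to_complex]
    rw [this, ← Complex.ofReal_exp, Complex.ofReal_re]
  have e : gK d a = fun v => (Real.pi / a) ^ ((d:ℝ)/2) * Real.exp (-(1/(4*a)) * ‖v‖^2) := by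
    ext v; unfold gK; congr 2; ring
  rw [e]
  refine ⟨h2.const_mul _, ?_⟩
  rw [integral_const_mul, h]
  simp only [finrank_euclideanSpace, Fintype.card_fin]
  rw [← Real.mul_rpow (by positivity) (by positivity)]
  have : (2 * Real.pi) ^ d = ((2*Real.pi)^2) ^ ((d:ℝ)/2) := by
    rw [← Real.rpow_natCast (2 * Real.pi) 2, ← Real.rpow_mul (by positivity), ← Real.rpow_natCast]
    congr 1; push_cast; ring
  rw [this]; congr 1; field_simp; ring

lemma lintegral_pi_prod {X : Type*} [MeasurableSpace X] : ∀ {n : ℕ} (μ : Fin n → Measure X) [∀ i, SigmaFinite (μ i)]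
    (f : Fin n → X → ℝ≥0∞) (_ : ∀ i, Measurable (f i)),
    ∫⁻ x, ∏ i, f i (x i) ∂(Measure.pi μ) = ∏ i, ∫⁻ x, f i x ∂(μ i) := by
  intro n
  induction n with
  | zero => intro μ _ f hf; simp
  | succ n ih =>
    intro μ _ f hf
    have h := (measurePreserving_piFinSuccAbove μ 0).symm
    rw [← h.lintegral_comp_emb (MeasurableEquiv.measurableEmbedding _)]
    have e : ∀ a : X × (Fin n → X), ∏ i, f i ((MeasurableEquiv.piFinSuccAbove (fun _ => X) 0).symm a i) =
        f 0 a.1 * ∏ i, f (Fin.succ i) (a.2 i) := by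
      intro a
      rw [Fin.prod_univ_succ]
      simp [MeasurableEquiv.piFinSuccAbove, Fin.insertNthEquiv]
    simp_rw [e]
    rw [lintegral_prod_mul (g := fun b : Fin n → X => ∏ i, f (Fin.succ i) (b i)) (hf 0).aemeasurable]
    · rw [Fin.prod_univ_succ]
      congr 1
      have := ih (fun i => μ (Fin.succ i)) (fun i => f (Fin.succ i)) (fun i => hf _)
      simpa using this
    · exact (Finset.measurable_prod _ fun i _ => (hf _).comp (measurable_pi_apply i)).aemeasurable

/-- row mixing -/
def rm {d : ℕ} (M : Matrix (Fin d) (Fin d) ℝ) : (Fin d → Pt d) →ₗ[ℝ] (Fin d → Pt d) where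
  toFun A i := ∑ j, M i j • A j
  map_add' A B := by ext1 i; simp [Finset.sum_add_distrib]
  map_smul' c A := by ext1 i; simp [Finset.smul_sum, smul_comm c]

lemma rm_det {d : ℕ} (M : Matrix (Fin d) (Fin d) ℝ) : LinearMap.det (rm M) = M.det ^ d := by
  let e : (Fin d → Pt d) ≃ₗ[ℝ] (Fin d → Fin d → ℝ) :=
    { toFun := fun A j i => A i j
      invFun := fun B i => WithLp.toLp 2 (fun j => B j i)
      map_add' := fun A B => rfl
      map_smul' := fun A B => rfl
      left_inv := fun A => rfl
      right_inv := fun A => rfl }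
  rw [← LinearMap.det_conj _ e]
  have : (e : (Fin d → Pt d) →ₗ[ℝ] (Fin d → Fin d → ℝ)) ∘ₗ (rm M) ∘ₗ (e.symm : (Fin d → Fin d → ℝ) →ₗ[ℝ] (Fin d → Pt d)) =
      LinearMap.pi (fun i => (Matrix.toLin' M).comp (LinearMap.proj i)) := by
    refine LinearMap.ext fun B => ?_
    funext j i
    change (∑ l, M i l • (WithLp.toLp 2 (fun j => B j l) : Pt d)) j = ∑ l, M i l * B j l
    simp
  rw [this, LinearMap.det_pi]
  simp

def tA {d : ℕ} (A : Fin d → Pt d) (ζ : Pt d) : Pt d := ∑ i, ζ i • A i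

lemma tA_inner {d : ℕ} (A : Fin d → Pt d) (ζ ζ' : Pt d) :
    inner ℝ (tA A ζ) (tA A ζ') = ∑ i, ∑ j, ζ i * ζ' j * inner ℝ (A i) (A j) := by
  unfold tA
  rw [sum_inner]
  simp_rw [inner_sum, real_inner_smul_left, real_inner_smul_right]
  refine Finset.sum_congr rfl fun i _ => Finset.sum_congr rfl fun j _ => by ring

lemma tA_continuous {d : ℕ} : Continuous (fun p : (Fin d → Pt d) × Pt d => tA p.1 p.2) := by
  unfold tA
  fun_prop

def NN (d : ℕ) (ρ₀ ρ₁ δ : ℝ) : Set (Fin d → Pt d) :=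
  {A | (∀ i j, i ≠ j → |inner ℝ (A i) (A j)| ≤ δ) ∧ (∀ i j, |‖A i‖^2 - ‖A j‖^2| ≤ δ) ∧
    (∀ i, ρ₀ ≤ ‖A i‖^2 ∧ ‖A i‖^2 ≤ ρ₁)}

lemma NN_closed {d : ℕ} {ρ₀ ρ₁ δ : ℝ} : IsClosed (NN d ρ₀ ρ₁ δ) := by
  unfold NN
  simp only [ofPred_and, ofPred_forall]
  refine IsClosed.inter ?_ (IsClosed.inter ?_ ?_)
  · exact isClosed_iInter fun i => isClosed_iInter fun j => isClosed_iInter fun _ =>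
      isClosed_le (by fun_prop) (by fun_prop)
  · exact isClosed_iInter fun i => isClosed_iInter fun j =>
      isClosed_le (by fun_prop) (by fun_prop)
  · exact isClosed_iInter fun i => (isClosed_le (by fun_prop) (by fun_prop)).inter
      (isClosed_le (by fun_prop) (by fun_prop))

lemma abs_coord_le {d : ℕ} (ζ : Pt d) (i : Fin d) : |ζ i| ≤ ‖ζ‖ := by
  simpa using PiLp.norm_apply_le ζ i

/-- Gram matrix of transformed rows -/
lemma NN_gram {n : ℕ} {ρ₀ ρ₁ δ : ℝ} {A : Fin (n+1) → Pt (n+1)} (hA : A ∈ NN (n+1) ρ₀ ρ₁ δ)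
    (ζ ζ' : Pt (n+1)) (h1 : ‖ζ‖ ≤ 1) (h2 : ‖ζ'‖ ≤ 1) :
    |inner ℝ (tA A ζ) (tA A ζ') - ‖A 0‖^2 * inner ℝ ζ ζ'| ≤ (n+1)^2 * δ := by
  have e : inner ℝ (tA A ζ) (tA A ζ') - ‖A 0‖^2 * inner ℝ ζ ζ' =
      ∑ i, ∑ j, ζ i * ζ' j * (inner ℝ (A i) (A j) - if i = j then ‖A 0‖^2 else 0) := by
    rw [tA_inner]
    simp_rw [mul_sub, Finset.sum_sub_distrib]
    congr 1
    simp [PiLp.inner_apply, Finset.mul_sum]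
    refine Finset.sum_congr rfl fun i _ => by ring
  rw [e]
  have hb : ∀ i j, |ζ i * ζ' j * (inner ℝ (A i) (A j) - if i = j then ‖A 0‖^2 else 0)| ≤ δ := by
    intro i j
    have h3 : |inner ℝ (A i) (A j) - if i = j then ‖A 0‖^2 else 0| ≤ δ := by
      split_ifs with h
      · subst h
        rw [real_inner_self_eq_norm_sq]
        exact hA.2.1 i 0
      · simpa using hA.1 i j h
    rw [abs_mul, abs_mul]
    have := (abs_coord_le ζ i).trans h1
    have := (abs_coord_le ζ' j).trans h2
    calc _ ≤ 1 * 1 * δ := by gcongr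
      _ = δ := by ring
  calc _ ≤ ∑ i, |∑ j, ζ i * ζ' j * (inner ℝ (A i) (A j) - if i = j then ‖A 0‖^2 else 0)| :=
        Finset.abs_sum_le_sum_abs _ _
    _ ≤ ∑ i : Fin (n+1), ∑ j : Fin (n+1), δ := by
        refine Finset.sum_le_sum fun i _ => (Finset.abs_sum_le_sum_abs _ _).trans ?_
        exact Finset.sum_le_sum fun j _ => hb i j
    _ = _ := by simp; ring

def extX {n : ℕ} (X : PairIdx' (n+1) → ℝ) : Matrix (Fin (n+1)) (Fin (n+1)) ℝ := fun i j =>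
  if h : (j.castSucc < i.succ ∧ (j.castSucc, i.succ) ≠ ((0 : Fin (n+1+1)), (1 : Fin (n+1+1)))) then
    X ⟨(j.castSucc, i.succ), h⟩ else 0

lemma extX_abs {n : ℕ} (X : PairIdx' (n+1) → ℝ) (i j) : |extX X i j| ≤ ‖X‖ := by
  unfold extX
  split_ifs with h
  · exact norm_le_pi_norm X _
  · simp

lemma extX_upper {n : ℕ} (X : PairIdx' (n+1) → ℝ) {i j} (h : i < j) : extX X i j = 0 := by
  unfold extX
  rw [dif_neg]
  rintro ⟨h1, -⟩
  rw [Fin.castSucc_lt_succ_iff] at h1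
  exact absurd h1 (not_le.2 h)

lemma extX_zero {n : ℕ} (X : PairIdx' (n+1) → ℝ) (j) : extX X 0 j = 0 := by
  unfold extX
  rw [dif_neg]
  rintro ⟨h1, h2⟩
  rw [Fin.castSucc_lt_succ_iff] at h1
  have : j = 0 := Fin.le_zero_iff.1 h1
  subst this
  exact h2 rfl

lemma extX_sub {n : ℕ} (X Y : PairIdx' (n+1) → ℝ) (i j) : extX (X - Y) i j = extX X i j - extX Y i j := by
  unfold extX
  split_ifs <;> simp

lemma extX_cont {n : ℕ} (i j) : Continuous fun X : PairIdx' (n+1) → ℝ => extX X i j := by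
  unfold extX
  split_ifs <;> fun_prop

lemma extX_surj {n : ℕ} (p : PairIdx' (n+1)) : ∃ i j, ∀ X : PairIdx' (n+1) → ℝ, extX X i j = X p := by
  obtain ⟨⟨a, b⟩, h1, h2⟩ := p
  have hb : b ≠ 0 := (Fin.zero_le a |>.trans_lt h1).ne'
  have ha : a ≠ Fin.last _ := (h1.trans_le (Fin.le_last b)).ne
  obtain ⟨i, rfl⟩ := Fin.exists_succ_eq.2 hb
  obtain ⟨j, rfl⟩ := Fin.exists_castSucc_eq.2 ha
  exact ⟨i, j, fun X => dif_pos ⟨h1, h2⟩⟩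

def Lm {n : ℕ} (X : PairIdx' (n+1) → ℝ) : Matrix (Fin (n+1)) (Fin (n+1)) ℝ := 1 + extX X

def LL {n : ℕ} (X : PairIdx' (n+1) → ℝ) (i j : Fin (n+1)) : ℝ := ∑ k, Lm X i k * Lm X j k

lemma Lm_inj {n : ℕ} {κ : ℝ} (hκ : 8 * (n+1) * κ ≤ 1) (hκ0 : 0 ≤ κ) {X Y : PairIdx' (n+1) → ℝ} (hX : ‖X‖ ≤ κ) (hY : ‖Y‖ ≤ κ)
    {S : ℝ} (hS : ∀ i j, |LL X i j - LL Y i j| ≤ S) : ‖X - Y‖ ≤ 2 * S := by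
  have hS0 : 0 ≤ S := (abs_nonneg _).trans (hS 0 0)
  have key : ∀ i j, |extX (X - Y) i j| ≤ S + 2 * (n+1) * κ * ‖X - Y‖ := by
    intro i j
    rcases lt_or_ge i j with h | h
    · rw [extX_upper _ h]; simp; positivity
    have e : LL X i j - LL Y i j = extX (X - Y) i j + extX (X - Y) j i +
        (∑ k, extX (X - Y) i k * extX X j k + ∑ k, extX Y i k * extX (X - Y) j k) := by
      have e1 : LL X i j - LL Y i j = ∑ k, (extX (X - Y) i k * (1 : Matrix (Fin (n+1)) (Fin (n+1)) ℝ) j k +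
        (1 : Matrix (Fin (n+1)) (Fin (n+1)) ℝ) i k * extX (X - Y) j k +
          (extX (X - Y) i k * extX X j k + extX Y i k * extX (X - Y) j k)) := by
        unfold LL Lm
        rw [← Finset.sum_sub_distrib]
        refine Finset.sum_congr rfl fun k _ => ?_
        simp only [Matrix.add_apply, extX_sub]
        ring
      rw [e1, Finset.sum_add_distrib, Finset.sum_add_distrib, Finset.sum_add_distrib]
      simp [Matrix.one_apply]
    have b1 : |∑ k, extX (X - Y) i k * extX X j k| ≤ (n+1) * (κ * ‖X-Y‖) := by
      refine (Finset.abs_sum_le_sum_abs _ _).trans ?_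
      calc _ ≤ ∑ k : Fin (n+1), κ * ‖X-Y‖ := by
            refine Finset.sum_le_sum fun k _ => ?_
            rw [abs_mul, mul_comm]
            exact mul_le_mul ((extX_abs _ _ _).trans hX) (extX_abs _ _ _) (abs_nonneg _) hκ0
        _ = _ := by simp
    have b2 : |∑ k, extX Y i k * extX (X - Y) j k| ≤ (n+1) * (κ * ‖X-Y‖) := by
      refine (Finset.abs_sum_le_sum_abs _ _).trans ?_
      calc _ ≤ ∑ k : Fin (n+1), κ * ‖X-Y‖ := by
            refine Finset.sum_le_sum fun k _ => ?_
            rw [abs_mul]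
            exact mul_le_mul ((extX_abs _ _ _).trans hY) (extX_abs _ _ _) (abs_nonneg _) hκ0
        _ = _ := by simp
    have b3 : |extX (X - Y) i j| ≤ |extX (X - Y) i j + extX (X - Y) j i| := by
      rcases h.eq_or_lt with h | h
      · subst h
        rw [← two_mul, abs_mul]
        have := abs_nonneg (extX (X - Y) j j)
        norm_num; linarith
      · rw [extX_upper _ h, add_zero]
    have b4 := hS i j
    rw [e] at b4
    have := abs_le.1 b1
    have := abs_le.1 b2
    have := abs_le.1 b4
    refine b3.trans (abs_le.2 ⟨?_, ?_⟩) <;> linarith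
  have h1 : ‖X - Y‖ ≤ S + 2 * (n+1) * κ * ‖X - Y‖ := by
    refine (pi_norm_le_iff_of_nonneg (by positivity)).2 fun p => ?_
    obtain ⟨i, j, h⟩ := extX_surj p
    rw [← h (X - Y), Real.norm_eq_abs]
    exact key i j
  have := norm_nonneg (X - Y)
  nlinarith

lemma LL_cont {n : ℕ} (i j) : Continuous fun X : PairIdx' (n+1) → ℝ => LL X i j := by
  unfold LL Lm
  have := fun i j => extX_cont (n := n) i j
  simp only [Matrix.add_apply]
  fun_prop

lemma Lm_abs {n : ℕ} {X : PairIdx' (n+1) → ℝ} (hX : ‖X‖ ≤ 1) (i j) : |Lm X i j| ≤ 2 := by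
  unfold Lm
  rw [Matrix.add_apply]
  refine (abs_add_le _ _).trans ?_
  have h1 := (extX_abs X i j).trans hX
  have h2 : |(1 : Matrix (Fin (n+1)) (Fin (n+1)) ℝ) i j| ≤ 1 := by
    rw [Matrix.one_apply]; split_ifs <;> simp
  linarith

lemma Lm_det {n : ℕ} {X : PairIdx' (n+1) → ℝ} (hX : ‖X‖ ≤ 1/2) : (1/2)^(n+1) ≤ |(Lm X).det| := by
  rw [Matrix.det_of_isLowerTriangular, Finset.abs_prod]
  · calc (1/2:ℝ)^(n+1) = ∏ i : Fin (n+1), (1/2:ℝ) := by simp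
      _ ≤ _ := by
        refine Finset.prod_le_prod (fun _ _ => by norm_num) fun i _ => ?_
        have h1 := abs_le.1 ((extX_abs X i i).trans hX)
        refine le_trans ?_ (le_abs_self _)
        simp only [Lm, Matrix.add_apply, Matrix.one_apply_eq]
        linarith
  · intro i j h
    have h : i < j := h
    simp [Lm, extX_upper _ h, h.ne]

def GG (n : ℕ) (ρ₀ δ R : ℝ) : Set ((PairIdx' (n+1) → ℝ) × (Fin (n+1) → Pt (n+1))) :=
  {p | (∀ i j, |inner ℝ (p.2 i) (p.2 j) - ‖p.2 0‖^2 * LL p.1 i j| ≤ 8 * (n+1)^4 * δ) ∧ ρ₀/2 ≤ ‖p.2 0‖^2 ∧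
    ∀ i, ‖p.2 i‖ ≤ R}

lemma GG_closed {n : ℕ} {ρ₀ δ R : ℝ} : IsClosed (GG n ρ₀ δ R) := by
  unfold GG
  simp only [ofPred_and, ofPred_forall]
  have hL := fun i j => (LL_cont (n := n) i j).comp (continuous_fst (X := (PairIdx' (n+1) → ℝ)) (Y := (Fin (n+1) → Pt (n+1))))
  simp only [Function.comp_def] at hL
  refine IsClosed.inter ?_ (IsClosed.inter ?_ ?_)
  · exact isClosed_iInter fun i => isClosed_iInter fun j =>
      isClosed_le (by have := hL i j; fun_prop) (by fun_prop)
  · exact isClosed_le (by fun_prop) (by fun_prop)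
  · exact isClosed_iInter fun i => (isClosed_le (by fun_prop) (by fun_prop))

def bm {n : ℕ} (b : OrthonormalBasis (Fin (n+1)) ℝ (Pt (n+1))) : Matrix (Fin (n+1)) (Fin (n+1)) ℝ :=
  Matrix.of fun i j => b i j

lemma GG_mem {n : ℕ} {ρ₀ ρ₁ δ : ℝ} (hδ : (n+1)^2 * δ ≤ ρ₀/2) {A : Fin (n+1) → Pt (n+1)}
    (hA : A ∈ NN (n+1) ρ₀ ρ₁ δ) {X : PairIdx' (n+1) → ℝ} (hX : ‖X‖ ≤ 1)
    (b : OrthonormalBasis (Fin (n+1)) ℝ (Pt (n+1))) :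
    (rm (Lm X) (rm (bm b) A)) 0 = tA A (b 0) ∧
    (X, rm (Lm X) (rm (bm b) A)) ∈ GG n ρ₀ δ (2 * (n+1)^2 * (1 + ρ₁)) := by
  set B : Fin (n+1) → Pt (n+1) := rm (bm b) A with hB
  have hBi : ∀ i, B i = tA A (b i) := fun i => rfl
  set c := rm (Lm X) B with hc
  have hci : ∀ i, c i = ∑ j, Lm X i j • B j := fun i => rfl
  have h0 : c 0 = B 0 := by
    rw [hci]
    have : ∀ j, Lm X 0 j = if 0 = j then 1 else 0 := by
      intro j; simp [Lm, extX_zero, Matrix.one_apply]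
    simp [this]
  have hb1 : ∀ i, ‖b i‖ = 1 := fun i => b.orthonormal.1 i
  have hδ0 : 0 ≤ δ := (abs_nonneg _).trans (hA.2.1 0 0)
  have hg : ∀ k l, |inner ℝ (B k) (B l) - ‖A 0‖^2 * (if k = l then 1 else 0)| ≤ (n+1)^2 * δ := by
    intro k l
    have := NN_gram hA (b k) (b l) (hb1 k).le (hb1 l).le
    rwa [orthonormal_iff_ite.1 b.orthonormal k l] at this
  have hg0 : |‖B 0‖^2 - ‖A 0‖^2| ≤ (n+1)^2 * δ := by
    simpa [real_inner_self_eq_norm_sq] using hg 0 0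
  refine ⟨h0, ?_, ?_, ?_⟩
  · intro i j
    simp only
    have hgg : ∀ k l, |inner ℝ (B k) (B l) - ‖B 0‖^2 * (if k = l then 1 else 0)| ≤ 2 * ((n+1)^2 * δ) := by
      intro k l
      have := hg k l
      split_ifs at this ⊢
      · simp only [mul_one] at this ⊢
        have := abs_le.1 this
        have := abs_le.1 hg0
        exact abs_le.2 ⟨by linarith, by linarith⟩
      · have h5 : 0 ≤ (n+1)^2 * δ := by positivity
        simp only [mul_zero] at this ⊢
        linarith
    have e : inner ℝ (c i) (c j) - ‖c 0‖^2 * LL X i j = ∑ k, ∑ l, Lm X i k * Lm X j l *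
        (inner ℝ (B k) (B l) - ‖B 0‖^2 * (if k = l then 1 else 0)) := by
      rw [hci i, hci j, sum_inner, h0]
      simp_rw [inner_sum, real_inner_smul_left, real_inner_smul_right, mul_sub, Finset.sum_sub_distrib]
      congr 1
      · refine Finset.sum_congr rfl fun k _ => Finset.sum_congr rfl fun l _ => by ring
      · simp [LL, Finset.mul_sum]
        refine Finset.sum_congr rfl fun k _ => by ring
    rw [e]
    calc _ ≤ ∑ k, |∑ l, Lm X i k * Lm X j l *
        (inner ℝ (B k) (B l) - ‖B 0‖^2 * (if k = l then 1 else 0))| := Finset.abs_sum_le_sum_abs _ _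
      _ ≤ ∑ k : Fin (n+1), ∑ l : Fin (n+1), 2 * 2 * (2 * ((n+1)^2 * δ)) := by
        refine Finset.sum_le_sum fun k _ => (Finset.abs_sum_le_sum_abs _ _).trans ?_
        refine Finset.sum_le_sum fun l _ => ?_
        rw [abs_mul, abs_mul]
        have h5 := hgg k l
        have h6 := Lm_abs hX i k
        have h7 := Lm_abs hX j l
        gcongr
      _ = _ := by simp; ring
  · simp only
    rw [h0]
    have := abs_le.1 hg0
    have := (hA.2.2 0).1
    linarith
  · intro i
    simp only
    have hAn : ∀ k, ‖A k‖ ≤ 1 + ρ₁ := by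
      intro k
      have := (hA.2.2 k).2
      nlinarith [sq_nonneg (‖A k‖ - 1), norm_nonneg (A k)]
    have hρ : 0 ≤ 1 + ρ₁ := (norm_nonneg _).trans (hAn 0)
    have hBn : ∀ j, ‖B j‖ ≤ (n+1) * (1 + ρ₁) := by
      intro j
      rw [hBi, tA]
      refine (norm_sum_le _ _).trans ?_
      calc _ ≤ ∑ k : Fin (n+1), 1 * (1 + ρ₁) := by
            refine Finset.sum_le_sum fun k _ => ?_
            rw [norm_smul]
            exact mul_le_mul ((abs_coord_le (b j) k).trans (hb1 j).le) (hAn k) (norm_nonneg _) zero_le_one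
        _ = _ := by simp; ring
    rw [hci]
    refine (norm_sum_le _ _).trans ?_
    calc _ ≤ ∑ k : Fin (n+1), 2 * ((n+1) * (1 + ρ₁)) := by
          refine Finset.sum_le_sum fun k _ => ?_
          rw [norm_smul]
          exact mul_le_mul (Lm_abs hX i k) (hBn k) (norm_nonneg _) zero_le_two
      _ = _ := by simp; ring

lemma GG_slice {n : ℕ} {ρ₀ δ R κ : ℝ} (hρ : 0 < ρ₀) (hδ : 0 < δ) (hκ : 8 * (n+1) * κ ≤ 1) (hκ0 : 0 ≤ κ) (c : Fin (n+1) → Pt (n+1)) :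
    volume {X : PairIdx' (n+1) → ℝ | ‖X‖ ≤ κ ∧ (X, c) ∈ GG n ρ₀ δ R} ≤
      ENNReal.ofReal ((128 * (n+1)^4 / ρ₀ * δ) ^ Fintype.card (PairIdx' (n+1))) := by
  rcases eq_empty_or_nonempty {X : PairIdx' (n+1) → ℝ | ‖X‖ ≤ κ ∧ (X, c) ∈ GG n ρ₀ δ R} with h | ⟨Y, hY1, hY2⟩
  · rw [h]; simp
  · have : {X : PairIdx' (n+1) → ℝ | ‖X‖ ≤ κ ∧ (X, c) ∈ GG n ρ₀ δ R} ⊆ closedBall Y (64 * (n+1)^4 / ρ₀ * δ) := by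
      rintro X ⟨hX1, hX2⟩
      rw [mem_closedBall, dist_eq_norm]
      have := Lm_inj hκ hκ0 hX1 hY1 (S := 32 * (n+1)^4 / ρ₀ * δ) ?_
      · refine this.trans (le_of_eq ?_); ring
      intro i j
      have h1 := abs_le.1 (hX2.1 i j)
      have h2 := abs_le.1 (hY2.1 i j)
      have h3 := hY2.2.1
      simp only at h1 h2 h3
      have h4 : |‖c 0‖^2 * (LL X i j - LL Y i j)| ≤ 16 * (n+1)^4 * δ := abs_le.2 ⟨by linarith, by linarith⟩
      rw [abs_mul, abs_of_nonneg (by positivity)] at h4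
      have h5 : ρ₀/2 * |LL X i j - LL Y i j| ≤ 16 * (n+1)^4 * δ := le_trans (by gcongr) h4
      rw [div_mul_eq_mul_div, le_div_iff₀ hρ]
      linarith
    refine (measure_mono this).trans ?_
    rw [Real.volume_pi_closedBall _ (by positivity)]
    refine le_of_eq ?_
    congr 2; ring

lemma exists_onb {n : ℕ} (ξ : Pt (n+1)) (h : ‖ξ‖ = 1) : ∃ b : OrthonormalBasis (Fin (n+1)) ℝ (Pt (n+1)), b 0 = ξ := by
  obtain ⟨b, hb⟩ := Orthonormal.exists_orthonormalBasis_extension_of_card_eq (𝕜 := ℝ) (E := Pt (n+1)) (ι := Fin (n+1)) (by simp)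
    (v := fun _ => ξ) (s := {0}) (by
      constructor
      · intro i; simpa using h
      · intro i j hij
        exact absurd (Subsingleton.elim i j) hij)
  exact ⟨b, hb 0 rfl⟩

lemma onb_det {n : ℕ} (b : OrthonormalBasis (Fin (n+1)) ℝ (Pt (n+1))) :
    |(bm b).det| = 1 := by
  set U : Matrix (Fin (n+1)) (Fin (n+1)) ℝ := bm b with hU
  have : U * U.transpose = 1 := by
    ext i j
    rw [Matrix.mul_apply, Matrix.one_apply, ← orthonormal_iff_ite.1 b.orthonormal i j]
    simp [hU, bm, PiLp.inner_apply, mul_comm]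
  have h2 := congrArg Matrix.det this
  rw [Matrix.det_mul, Matrix.det_transpose, Matrix.det_one] at h2
  rw [← abs_mul_self, abs_mul] at h2
  nlinarith [abs_nonneg U.det]

/-- density bound -/
lemma density (n : ℕ) (ρ₀ ρ₁ : ℝ) (hρ : 0 < ρ₀) (hρ1 : 0 ≤ ρ₁) : ∃ C R : ℝ, 0 < C ∧ 0 < R ∧ ∀ δ : ℝ, 0 < δ →
    (n+1)^2 * δ ≤ ρ₀/2 → ∀ ξ : Pt (n+1), ‖ξ‖ = 1 → ∀ f : Pt (n+1) → ℝ≥0∞, Measurable f →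
    ∫⁻ A in NN (n+1) ρ₀ ρ₁ δ, f (tA A ξ) ≤
      ENNReal.ofReal (C * δ ^ (Fintype.card (PairIdx' (n+1)))) * ∫⁻ η in closedBall 0 R, f η := by
  set D := Fintype.card (PairIdx' (n+1)) with hD
  set R : ℝ := 2 * (n+1)^2 * (1 + ρ₁) with hR
  set κ : ℝ := 1 / (8 * (n+1)) with hκ
  have hκ0 : 0 < κ := by positivity
  have hκ1 : 8 * (n+1) * κ ≤ 1 := by rw [hκ]; field_simp; exact le_rfl
  have hκ2 : κ ≤ 1/2 := by
    rw [hκ]; apply one_div_le_one_div_of_le (by norm_num)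
    have : (0:ℝ) ≤ n := by positivity
    linarith
  have hR0 : 0 < R := by positivity
  set W := volume (closedBall (0 : Pt (n+1)) R) with hW
  have hWf : W ≠ ∞ := measure_closedBall_lt_top.ne
  set C : ℝ := (2^(n+1))^(n+1) * (128 * (n+1)^4 / ρ₀) ^ D * (W.toReal + 1)^n / (2 * κ) ^ D with hC
  refine ⟨C, R, by positivity, hR0, ?_⟩
  intro δ hδ hδ2 ξ hξ f hf
  obtain ⟨b, hb⟩ := exists_onb ξ hξ
  set I := ∫⁻ A in NN (n+1) ρ₀ ρ₁ δ, f (tA A ξ) with hI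
  set g : ((PairIdx' (n+1) → ℝ) × (Fin (n+1) → Pt (n+1))) → ℝ≥0∞ :=
    (GG n ρ₀ δ R).indicator (fun p => f (p.2 0)) with hg
  have hgm : Measurable g := by
    refine Measurable.indicator ?_ GG_closed.measurableSet
    exact hf.comp ((measurable_pi_apply 0).comp measurable_snd)
  have s1 : ∀ X : PairIdx' (n+1) → ℝ, ‖X‖ ≤ κ → I ≤ ENNReal.ofReal ((2^(n+1))^(n+1)) * ∫⁻ c, g (X, c) := by
    intro X hX
    set T : (Fin (n+1) → Pt (n+1)) →ₗ[ℝ] (Fin (n+1) → Pt (n+1)) := rm (Lm X) ∘ₗ rm (bm b) with hT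
    have hdet : (1/2 ^ (n+1))^(n+1) ≤ |LinearMap.det T| := by
      rw [hT, LinearMap.det_comp, rm_det, rm_det, abs_mul, abs_pow, abs_pow, onb_det b, one_pow, mul_one]
      have := Lm_det (hX.trans hκ2)
      rw [div_pow, one_pow] at this
      gcongr
    have hdpos : 0 < |LinearMap.det T| := lt_of_lt_of_le (by positivity) hdet
    have hmap := Measure.map_linearMap_addHaar_eq_smul_addHaar (volume : Measure (Fin (n+1) → Pt (n+1))) (abs_pos.1 hdpos)
    calc I ≤ ∫⁻ A, g (X, T A) := by
          rw [hI, ← lintegral_indicator NN_closed.measurableSet]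
          refine lintegral_mono fun A => ?_
          by_cases hA : A ∈ NN (n+1) ρ₀ ρ₁ δ
          swap
          · rw [indicator_of_notMem hA]; exact zero_le
          rw [indicator_of_mem hA]
          have := GG_mem hδ2 hA (hX.trans (hκ2.trans (by norm_num))) b
          simp only [hg]
          rw [indicator_of_mem]
          · change f (tA A ξ) ≤ f ((rm (Lm X) (rm (bm b) A)) 0)
            rw [this.1, hb]
          · exact this.2
      _ = ∫⁻ c, g (X, c) ∂(Measure.map T volume) := by
          rw [lintegral_map]
          · exact hgm.comp (by fun_prop)
          · exact (LinearMap.continuous_of_finiteDimensional T).measurable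
      _ = ENNReal.ofReal |(LinearMap.det T)⁻¹| * ∫⁻ c, g (X, c) := by
          rw [hmap, lintegral_smul_measure, smul_eq_mul]
      _ ≤ _ := by
          gcongr
          rw [abs_inv]
          rw [one_div, inv_pow] at hdet
          exact inv_le_of_inv_le₀ (by positivity) hdet
  have s2 : ENNReal.ofReal ((2*κ)^D) * I ≤ ENNReal.ofReal ((2^(n+1))^(n+1)) *
      (ENNReal.ofReal ((128 * (n+1)^4 / ρ₀ * δ) ^ D) * (W ^ n * ∫⁻ η in closedBall 0 R, f η)) := by
    calc ENNReal.ofReal ((2*κ)^D) * I = ∫⁻ X in closedBall (0 : PairIdx' (n+1) → ℝ) κ, I := by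
          rw [setLIntegral_const, Real.volume_pi_closedBall _ hκ0.le, mul_comm]
      _ ≤ ∫⁻ X in closedBall (0 : PairIdx' (n+1) → ℝ) κ, ENNReal.ofReal ((2^(n+1))^(n+1)) * ∫⁻ c, g (X, c) := by
          refine setLIntegral_mono' measurableSet_closedBall fun X hX => s1 X ?_
          simpa using hX
      _ = ENNReal.ofReal ((2^(n+1))^(n+1)) * ∫⁻ X in closedBall (0 : PairIdx' (n+1) → ℝ) κ, ∫⁻ c, g (X, c) := by
          rw [lintegral_const_mul]
          exact hgm.lintegral_prod_right'
      _ = ENNReal.ofReal ((2^(n+1))^(n+1)) * ∫⁻ c, ∫⁻ X in closedBall (0 : PairIdx' (n+1) → ℝ) κ, g (X, c) := by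
          rw [lintegral_lintegral_swap]
          exact hgm.aemeasurable
      _ ≤ ENNReal.ofReal ((2^(n+1))^(n+1)) * ∫⁻ c : Fin (n+1) → Pt (n+1), ENNReal.ofReal ((128 * (n+1)^4 / ρ₀ * δ) ^ D) *
          ∏ i, (closedBall (0 : Pt (n+1)) R).indicator (fun y => if i = 0 then f y else 1) (c i) := by
          gcongr with c
          by_cases hc : ∀ i, ‖c i‖ ≤ R
          · have : ∏ i, (closedBall (0 : Pt (n+1)) R).indicator (fun y => if i = 0 then f y else 1) (c i) = f (c 0) := by
              rw [Finset.prod_congr rfl (g := fun i => if i = 0 then f (c i) else 1)]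
              · simp
              · intro i _
                rw [indicator_of_mem (by simpa using hc i)]
            rw [this]
            calc _ ≤ ∫⁻ X, {X : PairIdx' (n+1) → ℝ | ‖X‖ ≤ κ ∧ (X, c) ∈ GG n ρ₀ δ R}.indicator (fun _ => f (c 0)) X := by
                  rw [← lintegral_indicator measurableSet_closedBall]
                  refine lintegral_mono fun X => ?_
                  simp only [hg, indicator, mem_closedBall, dist_zero_right, mem_ofPred_eq]
                  split_ifs <;> simp_all
              _ ≤ f (c 0) * volume {X : PairIdx' (n+1) → ℝ | ‖X‖ ≤ κ ∧ (X, c) ∈ GG n ρ₀ δ R} := by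
                  exact lintegral_indicator_const_le _ _
              _ ≤ f (c 0) * ENNReal.ofReal ((128 * (n+1)^4 / ρ₀ * δ) ^ D) := by
                  gcongr
                  exact GG_slice hρ hδ hκ1 hκ0.le c
              _ = _ := mul_comm _ _
          · have : ∀ X, g (X, c) = 0 := by
              intro X
              rw [hg, indicator_of_notMem]
              intro h
              exact hc h.2.2
            simp [this]
      _ = _ := by
          rw [lintegral_const_mul]
          · congr 2
            have := lintegral_pi_prod (n := n+1) (fun _ => (volume : Measure (Pt (n+1))))
              (fun i => (closedBall (0 : Pt (n+1)) R).indicator (fun y => if i = 0 then f y else 1)) (by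
                intro i
                refine Measurable.indicator ?_ measurableSet_closedBall
                split_ifs <;> fun_prop)
            rw [volume_pi, this, Fin.prod_univ_succ, mul_comm]
            congr 1
            · simp [lintegral_indicator measurableSet_closedBall, hW]
            · simp [lintegral_indicator measurableSet_closedBall]
          · refine Finset.measurable_prod _ fun i _ => ?_
            have : Measurable ((closedBall (0 : Pt (n+1)) R).indicator (fun y => if i = 0 then f y else 1)) := by
              refine Measurable.indicator ?_ measurableSet_closedBall
              split_ifs <;> fun_prop
            exact this.comp (measurable_pi_apply i)
  have hk : 0 < (2*κ)^D := by positivity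
  calc I = ENNReal.ofReal (1/(2*κ)^D) * (ENNReal.ofReal ((2*κ)^D) * I) := by
        rw [← mul_assoc, ← ENNReal.ofReal_mul (by positivity), one_div_mul_cancel hk.ne']; simp
    _ ≤ ENNReal.ofReal (1/(2*κ)^D) * (ENNReal.ofReal ((2^(n+1))^(n+1)) *
      (ENNReal.ofReal ((128 * (n+1)^4 / ρ₀ * δ) ^ D) * (ENNReal.ofReal ((W.toReal+1) ^ n) * ∫⁻ η in closedBall 0 R, f η))) := by
        refine mul_le_mul_right (s2.trans ?_) _
        gcongr
        rw [ENNReal.ofReal_pow (by positivity)]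
        gcongr
        rw [ENNReal.le_ofReal_iff_toReal_le hWf (by positivity)]
        linarith
    _ = _ := by
        rw [← mul_assoc, ← mul_assoc, ← mul_assoc, ← ENNReal.ofReal_mul (by positivity),
          ← ENNReal.ofReal_mul (by positivity), ← ENNReal.ofReal_mul (by positivity)]
        congr 2
        rw [hC, mul_pow _ δ]; ring

lemma gauss_integrable {d : ℕ} {a : ℝ} (ha : 0 < a) : Integrable (fun v : Pt d => Real.exp (-(a * ‖v‖^2))) := by
  have := GaussianFourier.integrable_cexp_neg_mul_sq_norm_add (V := Pt d) (b := (a : ℂ)) (by rw [Complex.ofReal_re]; positivity) 0 0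
  refine this.re.congr (Filter.Eventually.of_forall fun v => ?_)
  have : (-(a : ℂ) * ‖v‖^2 + 0 * ((inner ℝ (0 : Pt d) v : ℝ) : ℂ)) = ((-(a * ‖v‖^2) : ℝ) : ℂ) := by push_cast; ring
  simp only [RCLike.re_to_complex]
  rw [this, ← Complex.ofReal_exp, Complex.ofReal_re]

lemma gaussChar_integrable {d : ℕ} {a : ℝ} (ha : 0 < a) (ν : Measure (Pt d)) [IsProbabilityMeasure ν] :
    Integrable (fun ξ : Pt d => Real.exp (-(a * ‖ξ‖^2)) * ‖charFun ν ξ‖^2) := by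
  refine (gauss_integrable ha).mono' ?_ (Filter.Eventually.of_forall fun ξ => ?_)
  · refine (Continuous.aestronglyMeasurable (by fun_prop)).mul ?_
    exact (measurable_charFun.norm.pow_const 2).aestronglyMeasurable
  · have h := norm_charFun_le_one (μ := ν) ξ
    have h2 : ‖charFun ν ξ‖^2 ≤ 1 := pow_le_one₀ (norm_nonneg _) h
    rw [Real.norm_of_nonneg (by positivity)]
    have := Real.exp_pos (-(a * ‖ξ‖^2))
    nlinarith

lemma gK_energy {d : ℕ} {a : ℝ} (ha : 0 < a) (ν : Measure (Pt d)) [IsProbabilityMeasure ν] :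
    ∫ p : Pt d × Pt d, gK d a (p.1 - p.2) ∂(ν.prod ν) = ∫ ξ, Real.exp (-(a * ‖ξ‖^2)) * ‖charFun ν ξ‖^2 := by
  have hc : ∀ ξ : Pt d, ∫ p : Pt d × Pt d, Complex.exp ((inner ℝ (p.1 - p.2) ξ : ℝ) * Complex.I) ∂(ν.prod ν) =
      ((‖charFun ν ξ‖^2 : ℝ) : ℂ) := by
    intro ξ
    have e : ∀ p : Pt d × Pt d, Complex.exp ((inner ℝ (p.1 - p.2) ξ : ℝ) * Complex.I) =
        Complex.exp ((inner ℝ p.1 ξ : ℝ) * Complex.I) * Complex.exp ((inner ℝ p.2 (-ξ) : ℝ) * Complex.I) := by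
      intro p
      rw [← Complex.exp_add, inner_sub_left, inner_neg_right]
      congr 1; push_cast; ring
    simp_rw [e]
    rw [integral_prod_mul (μ := ν) (ν := ν) (fun x : Pt d => Complex.exp ((inner ℝ x ξ : ℝ) * Complex.I))
      (fun x : Pt d => Complex.exp ((inner ℝ x (-ξ) : ℝ) * Complex.I)),
      ← charFun_apply, ← charFun_apply, charFun_neg, Complex.mul_conj, Complex.normSq_eq_norm_sq]
  have hI : Integrable (Function.uncurry fun (p : Pt d × Pt d) (ξ : Pt d) =>
      Complex.exp (-(a * ‖ξ‖^2 : ℝ)) * Complex.exp ((inner ℝ (p.1 - p.2) ξ : ℝ) * Complex.I)) ((ν.prod ν).prod volume) := by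
    have h1 : Integrable (fun q : (Pt d × Pt d) × Pt d => Real.exp (-(a * ‖q.2‖^2))) ((ν.prod ν).prod volume) := by
      have := (integrable_const (μ := ν.prod ν) (1:ℝ)).mul_prod (gauss_integrable (d := d) ha)
      simpa using this
    refine h1.mono' (Continuous.aestronglyMeasurable (by unfold Function.uncurry; fun_prop)) (Filter.Eventually.of_forall fun q => ?_)
    simp only [Function.uncurry]
    rw [norm_mul, Complex.norm_exp_ofReal_mul_I, mul_one, ← Complex.ofReal_neg, Complex.norm_exp_ofReal]
  have h : ((∫ p : Pt d × Pt d, gK d a (p.1 - p.2) ∂(ν.prod ν) : ℝ) : ℂ) =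
      ((∫ ξ, Real.exp (-(a * ‖ξ‖^2)) * ‖charFun ν ξ‖^2 : ℝ) : ℂ) := by
    rw [← integral_complex_ofReal, ← integral_complex_ofReal]
    simp_rw [← gK_hat ha]
    rw [integral_integral_swap hI]
    refine integral_congr_ae (Filter.Eventually.of_forall fun ξ => ?_)
    simp only
    rw [integral_const_mul, hc]
    push_cast; rfl
  exact_mod_cast h

lemma GG_prod {d : ℕ} {a b : ℝ} (ha : 0 < a) (hb : 0 < b) (ν : Measure (Pt d)) [IsProbabilityMeasure ν] :
    Integrable (fun z => (∫ w, gK d a (w - z) ∂ν) * (∫ w, gK d b (w - z) ∂ν)) ∧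
    ∫ z, (∫ w, gK d a (w - z) ∂ν) * (∫ w, gK d b (w - z) ∂ν) =
      (2 * Real.pi) ^ d * ∫ ξ, Real.exp (-((a+b) * ‖ξ‖^2)) * ‖charFun ν ξ‖^2 := by
  have e : ∀ z, (∫ w, gK d a (w - z) ∂ν) * (∫ w, gK d b (w - z) ∂ν) =
      ∫ p : Pt d × Pt d, gK d a (p.1 - z) * gK d b (p.2 - z) ∂(ν.prod ν) := by
    intro z
    rw [integral_prod_mul (μ := ν) (ν := ν) (fun w => gK d a (w - z)) (fun w => gK d b (w - z))]
  have ca := gK_continuous (d := d) a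
  have cb := gK_continuous (d := d) b
  have cab := gK_continuous (d := d) (a+b)
  have hI : Integrable (Function.uncurry fun (p : Pt d × Pt d) (z : Pt d) => gK d a (p.1 - z) * gK d b (p.2 - z)) ((ν.prod ν).prod volume) := by
    rw [integrable_prod_iff (Continuous.aestronglyMeasurable (by unfold Function.uncurry; fun_prop))]
    refine ⟨Filter.Eventually.of_forall fun p => (gK_conv ha hb p.1 p.2).1, ?_⟩
    have : (fun p : Pt d × Pt d => ∫ z, ‖Function.uncurry (fun (p : Pt d × Pt d) (z : Pt d) => gK d a (p.1 - z) * gK d b (p.2 - z)) (p, z)‖) =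
        fun p => (2 * Real.pi) ^ d * gK d (a + b) (p.1 - p.2) := by
      ext p
      rw [← (gK_conv ha hb p.1 p.2).2]
      congr 1; ext z
      exact Real.norm_of_nonneg (mul_nonneg (gK_nonneg ha _) (gK_nonneg hb _))
    rw [this]
    refine Integrable.const_mul ?_ _
    refine (integrable_const ((Real.pi / (a+b)) ^ ((d:ℝ)/2))).mono' (Continuous.aestronglyMeasurable (by fun_prop)) (Filter.Eventually.of_forall fun p => ?_)
    rw [Real.norm_of_nonneg (gK_nonneg (by positivity) _)]
    exact gK_le (by positivity) _
  simp_rw [e]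
  refine ⟨hI.integral_prod_right, ?_⟩
  rw [← integral_integral_swap hI]
  simp_rw [(gK_conv ha hb _ _).2]
  rw [integral_const_mul, gK_energy (by positivity)]

/-- general kernel -/
def QK {ι : Type} (d : ℕ) (S : Finset ι) (c a : ι → ℝ) (x : Pt d) : ℝ := ∑ i ∈ S, c i * gK d (a i) x

def qh {ι : Type} (S : Finset ι) (c a : ι → ℝ) (x : ℝ) : ℝ := ∑ i ∈ S, c i * Real.exp (-(a i * x))

lemma gK_int_fin {d : ℕ} {a : ℝ} (ha : 0 < a) {X : Type*} [MeasurableSpace X] (ν : Measure X) [IsFiniteMeasure ν]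
    (g : X → Pt d) (hg : Measurable g) :
    Integrable (fun w => gK d a (g w)) ν := by
  have ca := gK_continuous (d := d) a
  refine (integrable_const ((Real.pi / a) ^ ((d:ℝ)/2))).mono' (ca.measurable.comp hg).aestronglyMeasurable (Filter.Eventually.of_forall fun p => ?_)
  rw [Real.norm_of_nonneg (gK_nonneg (by positivity) _)]
  exact gK_le (by positivity) _

lemma QK_L2 {ι : Type} {d : ℕ} (S : Finset ι) (c a : ι → ℝ) (ha : ∀ i ∈ S, 0 < a i) (ν : Measure (Pt d)) [IsProbabilityMeasure ν] :
    ∫⁻ z, ENNReal.ofReal ((∫ w, QK d S c a (w - z) ∂ν)^2) =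
      ENNReal.ofReal ((2 * Real.pi) ^ d) * ∫⁻ ξ, ENNReal.ofReal ((qh S c a (‖ξ‖^2))^2 * ‖charFun ν ξ‖^2) := by
  have e1 : ∀ z, (∫ w, QK d S c a (w - z) ∂ν)^2 = ∑ i ∈ S, ∑ j ∈ S, c i * c j *
      ((∫ w, gK d (a i) (w - z) ∂ν) * (∫ w, gK d (a j) (w - z) ∂ν)) := by
    intro z
    have : ∫ w, QK d S c a (w - z) ∂ν = ∑ i ∈ S, c i * ∫ w, gK d (a i) (w - z) ∂ν := by
      unfold QK
      rw [integral_finsetSum]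
      · simp_rw [integral_const_mul]
      · exact fun i hi => (gK_int_fin (ha i hi) ν _ (by fun_prop)).const_mul _
    rw [this, sq, Finset.sum_mul_sum]
    refine Finset.sum_congr rfl fun i _ => Finset.sum_congr rfl fun j _ => by ring
  have e2 : ∀ ξ : Pt d, (qh S c a (‖ξ‖^2))^2 * ‖charFun ν ξ‖^2 = ∑ i ∈ S, ∑ j ∈ S, c i * c j *
      (Real.exp (-((a i + a j) * ‖ξ‖^2)) * ‖charFun ν ξ‖^2) := by
    intro ξ
    unfold qh
    rw [sq (∑ i ∈ S, _), Finset.sum_mul_sum, Finset.sum_mul]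
    refine Finset.sum_congr rfl fun i _ => ?_
    rw [Finset.sum_mul]
    refine Finset.sum_congr rfl fun j _ => ?_
    rw [show -((a i + a j) * ‖ξ‖^2) = -(a i * ‖ξ‖^2) + -(a j * ‖ξ‖^2) by ring, Real.exp_add]
    ring
  have I1 : Integrable (fun z => (∫ w, QK d S c a (w - z) ∂ν)^2) := by
    simp_rw [e1]
    exact integrable_finsetSum _ fun i hi => integrable_finsetSum _ fun j hj =>
      (GG_prod (ha i hi) (ha j hj) ν).1.const_mul _
  have I2 : Integrable (fun ξ : Pt d => (qh S c a (‖ξ‖^2))^2 * ‖charFun ν ξ‖^2) := by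
    simp_rw [e2]
    exact integrable_finsetSum _ fun i hi => integrable_finsetSum _ fun j hj =>
      (gaussChar_integrable (add_pos (ha i hi) (ha j hj)) ν).const_mul _
  rw [← ofReal_integral_eq_lintegral_ofReal I1 (Filter.Eventually.of_forall fun z => by positivity),
    ← ofReal_integral_eq_lintegral_ofReal I2 (Filter.Eventually.of_forall fun z => by positivity),
    ← ENNReal.ofReal_mul (by positivity)]
  congr 1
  simp_rw [e1, e2]
  rw [integral_finsetSum _ fun i hi => integrable_finsetSum _ fun j hj =>
      (GG_prod (ha i hi) (ha j hj) ν).1.const_mul _,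
    integral_finsetSum _ fun i hi => integrable_finsetSum _ fun j hj =>
      (gaussChar_integrable (add_pos (ha i hi) (ha j hj)) ν).const_mul _, Finset.mul_sum]
  refine Finset.sum_congr rfl fun i hi => ?_
  rw [integral_finsetSum _ fun j hj =>
      (GG_prod (ha i hi) (ha j hj) ν).1.const_mul _,
    integral_finsetSum _ fun j hj =>
      (gaussChar_integrable (add_pos (ha i hi) (ha j hj)) ν).const_mul _, Finset.mul_sum]
  refine Finset.sum_congr rfl fun j hj => ?_
  rw [integral_const_mul, integral_const_mul, (GG_prod (ha i hi) (ha j hj) ν).2]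
  ring

def actA {d : ℕ} (A : Fin d → Pt d) (v : Pt d) : Pt d := WithLp.toLp 2 fun i => inner ℝ (A i) v

lemma actA_continuous {d : ℕ} : Continuous (fun p : (Fin d → Pt d) × Pt d => actA p.1 p.2) := by
  unfold actA
  refine (PiLp.continuous_toLp 2 _).comp ?_
  fun_prop

lemma actA_inner {d : ℕ} (A : Fin d → Pt d) (v ξ : Pt d) : inner ℝ (actA A v) ξ = inner ℝ v (tA A ξ) := by
  unfold actA tA
  rw [inner_sum]
  rw [PiLp.inner_apply]
  refine Finset.sum_congr rfl fun i _ => ?_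
  rw [real_inner_smul_right, real_inner_comm (A i) v]
  simp [mul_comm]

lemma tA_smul {d : ℕ} (A : Fin d → Pt d) (r : ℝ) (ξ : Pt d) : tA A (r • ξ) = r • tA A ξ := by
  unfold tA
  simp [Finset.smul_sum, smul_smul]

def nuA {d : ℕ} (μ : Measure (Pt d)) (A : Fin d → Pt d) : Measure (Pt d) :=
  (μ.prod μ).map (fun p => p.1 - actA A p.2)

lemma nuA_meas {d : ℕ} (A : Fin d → Pt d) : Continuous (fun p : Pt d × Pt d => p.1 - actA A p.2) := by
  have := actA_continuous (d := d)
  have h2 : Continuous (fun p : Pt d × Pt d => actA A p.2) := this.comp (by fun_prop : Continuous fun p : Pt d × Pt d => (A, p.2))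
  fun_prop

instance {d : ℕ} (μ : Measure (Pt d)) [IsProbabilityMeasure μ] (A : Fin d → Pt d) : IsProbabilityMeasure (nuA μ A) :=
  Measure.isProbabilityMeasure_map (nuA_meas A).measurable.aemeasurable

lemma nuA_charFun {d : ℕ} (μ : Measure (Pt d)) [IsProbabilityMeasure μ] (A : Fin d → Pt d) (ξ : Pt d) :
    ‖charFun (nuA μ A) ξ‖^2 = ‖charFun μ ξ‖^2 * ‖charFun μ (tA A ξ)‖^2 := by
  have : charFun (nuA μ A) ξ = charFun μ ξ * charFun μ (-(tA A ξ)) := by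
    rw [charFun_apply, nuA, integral_map (nuA_meas A).measurable.aemeasurable (Continuous.aestronglyMeasurable (by fun_prop))]
    have e : ∀ p : Pt d × Pt d, Complex.exp ((inner ℝ (p.1 - actA A p.2) ξ : ℝ) * Complex.I) =
        Complex.exp ((inner ℝ p.1 ξ : ℝ) * Complex.I) * Complex.exp ((inner ℝ p.2 (-(tA A ξ)) : ℝ) * Complex.I) := by
      intro p
      rw [← Complex.exp_add, inner_sub_left, inner_neg_right, actA_inner]
      congr 1; push_cast; ring
    simp_rw [e]
    rw [integral_prod_mul (μ := μ) (ν := μ) (fun x : Pt d => Complex.exp ((inner ℝ x ξ : ℝ) * Complex.I))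
      (fun x : Pt d => Complex.exp ((inner ℝ x (-(tA A ξ)) : ℝ) * Complex.I)),
      ← charFun_apply, ← charFun_apply]
  rw [this, charFun_neg, norm_mul, RCLike.norm_conj, mul_pow]

lemma energy_le {d : ℕ} {a B : ℝ} (ha : 0 < a) (ν : Measure (Pt d)) [IsProbabilityMeasure ν]
    (h : ∀ x, ∫⁻ w, ENNReal.ofReal (gK d a (x - w)) ∂ν ≤ ENNReal.ofReal B) :
    ∫⁻ ξ, ENNReal.ofReal (Real.exp (-(a * ‖ξ‖^2)) * ‖charFun ν ξ‖^2) ≤ ENNReal.ofReal B := by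
  have ca := gK_continuous (d := d) a
  rw [← ofReal_integral_eq_lintegral_ofReal (gaussChar_integrable ha ν) (Filter.Eventually.of_forall fun z => by positivity),
    ← gK_energy ha, ofReal_integral_eq_lintegral_ofReal (gK_int_fin ha _ _ (by fun_prop))
      (Filter.Eventually.of_forall fun z => gK_nonneg ha _), lintegral_prod]
  · calc _ ≤ ∫⁻ x, ENNReal.ofReal B ∂ν := lintegral_mono fun x => h x
      _ = _ := by simp
  · exact (Continuous.measurable (by fun_prop : Continuous fun p : Pt d × Pt d => gK d a (p.1 - p.2))).ennreal_ofReal.aemeasurable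

/-- potential hypothesis -/
def PotB {d : ℕ} (μ : Measure (Pt d)) (s C : ℝ) : Prop := ∀ a : ℝ, 0 < a → ∀ x : Pt d,
      ∫⁻ u, ENNReal.ofReal (Real.exp (-(‖x - u‖^2/(4*a)))) ∂μ ≤ ENNReal.ofReal (C * a ^ (s/2))

lemma pot_gK {d : ℕ} {μ : Measure (Pt d)} {s C : ℝ} (hC : 0 < C) (h : PotB μ s C) {a : ℝ} (ha : 0 < a) (x : Pt d) :
    ∫⁻ u, ENNReal.ofReal (gK d a (x - u)) ∂μ ≤ ENNReal.ofReal (Real.pi ^ ((d:ℝ)/2) * C * a ^ ((s - d)/2)) := by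
  unfold gK
  simp_rw [fun u => ENNReal.ofReal_mul (p := (Real.pi / a) ^ ((d:ℝ)/2)) (q := Real.exp (-(‖x - u‖^2/(4*a)))) (by positivity)]
  rw [lintegral_const_mul _ (by fun_prop)]
  calc _ ≤ ENNReal.ofReal ((Real.pi / a) ^ ((d:ℝ)/2)) * ENNReal.ofReal (C * a ^ (s/2)) := by gcongr; exact h a ha x
    _ = _ := by
      rw [← ENNReal.ofReal_mul (by positivity)]
      congr 1
      rw [Real.div_rpow (by positivity) (by positivity), show (s - d)/2 = s/2 - (d:ℝ)/2 by ring, Real.rpow_sub ha]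
      field_simp

lemma energy_mu {d : ℕ} {μ : Measure (Pt d)} [IsProbabilityMeasure μ] {s C : ℝ} (hC : 0 < C) (h : PotB μ s C) {a : ℝ} (ha : 0 < a) :
    ∫⁻ ξ, ENNReal.ofReal (Real.exp (-(a * ‖ξ‖^2)) * ‖charFun μ ξ‖^2) ≤
      ENNReal.ofReal (Real.pi ^ ((d:ℝ)/2) * C * a ^ ((s - d)/2)) :=
  energy_le ha μ fun x => pot_gK hC h ha x

lemma energy_scaled {d : ℕ} {μ : Measure (Pt d)} [IsProbabilityMeasure μ] {s C : ℝ} (hC : 0 < C) (h : PotB μ s C) {r : ℝ} (hr : 0 < r) :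
    ∫⁻ η, ENNReal.ofReal (Real.exp (-(1 * ‖η‖^2)) * ‖charFun μ (r • η)‖^2) ≤
      ENNReal.ofReal (Real.pi ^ ((d:ℝ)/2) * (1 + C) * min 1 (r ^ (-s))) := by
  have hm : Measurable (fun u : Pt d => r • u) := by fun_prop
  have : IsProbabilityMeasure (μ.map (fun u => r • u)) := Measure.isProbabilityMeasure_map hm.aemeasurable
  have e := fun η => charFun_map_smul (μ := μ) r η
  simp_rw [← e]
  refine energy_le one_pos _ fun x => ?_
  have cg := gK_continuous (d := d) 1
  rw [lintegral_map ((Continuous.measurable (by fun_prop : Continuous fun w : Pt d => gK d 1 (x - w))).ennreal_ofReal) hm]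
  have hm1 : Real.pi ^ ((d:ℝ)/2) * (1 + C) * min 1 (r ^ (-s)) = min (Real.pi ^ ((d:ℝ)/2) * (1 + C)) (Real.pi ^ ((d:ℝ)/2) * (1 + C) * r ^ (-s)) := by
    rw [mul_min_of_nonneg _ _ (by positivity), mul_one]
  rw [hm1]
  have h1 : ∫⁻ u, ENNReal.ofReal (gK d 1 (x - r • u)) ∂μ ≤ ENNReal.ofReal (Real.pi ^ ((d:ℝ)/2) * (1 + C)) := by
    calc _ ≤ ∫⁻ u, ENNReal.ofReal (Real.pi ^ ((d:ℝ)/2) * (1 + C)) ∂μ := by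
          refine lintegral_mono fun u => ENNReal.ofReal_le_ofReal ((gK_le one_pos _).trans ?_)
          rw [div_one]
          have : 0 < Real.pi ^ ((d:ℝ)/2) := by positivity
          nlinarith
      _ = _ := by simp
  have h2 : ∫⁻ u, ENNReal.ofReal (gK d 1 (x - r • u)) ∂μ ≤ ENNReal.ofReal (Real.pi ^ ((d:ℝ)/2) * (1 + C) * r ^ (-s)) := by
    have e2 : ∀ u, gK d 1 (x - r • u) = Real.pi ^ ((d:ℝ)/2) * Real.exp (-(‖r⁻¹ • x - u‖^2/(4*(r^(-2:ℝ))))) := by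
      intro u
      unfold gK
      rw [div_one]
      congr 3
      have : x - r • u = r • (r⁻¹ • x - u) := by rw [smul_sub, smul_smul, mul_inv_cancel₀ hr.ne', one_smul]
      rw [this, norm_smul, Real.norm_of_nonneg hr.le, Real.rpow_neg hr.le, Real.rpow_two]
      field_simp
    simp_rw [e2]
    simp_rw [fun u => ENNReal.ofReal_mul (p := Real.pi ^ ((d:ℝ)/2)) (q := Real.exp (-(‖r⁻¹ • x - u‖^2/(4*(r^(-2:ℝ)))))) (by positivity)]
    rw [lintegral_const_mul _ (by fun_prop)]
    calc _ ≤ ENNReal.ofReal (Real.pi ^ ((d:ℝ)/2)) * ENNReal.ofReal (C * (r^(-2:ℝ)) ^ (s/2)) := by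
          gcongr; exact h _ (by positivity) _
      _ ≤ _ := by
        rw [← ENNReal.ofReal_mul (by positivity), ← Real.rpow_mul hr.le, mul_assoc (Real.pi ^ _)]
        apply ENNReal.ofReal_le_ofReal
        rw [show -2 * (s/2) = -s by ring]
        gcongr; linarith
  rcases min_cases (Real.pi ^ ((d:ℝ)/2) * (1 + C)) (Real.pi ^ ((d:ℝ)/2) * (1 + C) * r ^ (-s)) with ⟨h3, -⟩ | ⟨h3, -⟩ <;> rw [h3]
  · exact h1
  · exact h2

lemma sigma_bound (n : ℕ) (ρ₀ ρ₁ : ℝ) (hρ : 0 < ρ₀) (hρ1 : 0 ≤ ρ₁) {μ : Measure (Pt (n+1))} [IsProbabilityMeasure μ]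
    {s C : ℝ} (hC : 0 < C) (h : PotB μ s C) :
    ∃ C' : ℝ, 0 < C' ∧ ∀ δ : ℝ, 0 < δ → (n+1)^2 * δ ≤ ρ₀/2 → ∀ ξ : Pt (n+1), ξ ≠ 0 →
      ∫⁻ A in NN (n+1) ρ₀ ρ₁ δ, ENNReal.ofReal (‖charFun μ (tA A ξ)‖^2) ≤
        ENNReal.ofReal (C' * δ ^ (Fintype.card (PairIdx' (n+1))) * min 1 (‖ξ‖ ^ (-s))) := by
  obtain ⟨C1, R, hC1, hR, hd⟩ := density n ρ₀ ρ₁ hρ hρ1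
  refine ⟨C1 * Real.exp (R^2) * (Real.pi ^ (((n+1:ℕ):ℝ)/2) * (1 + C)), by positivity, ?_⟩
  intro δ hδ hδ2 ξ hξ
  have hr : 0 < ‖ξ‖ := norm_pos_iff.2 hξ
  have h1 := hd δ hδ hδ2 (‖ξ‖⁻¹ • ξ) (by rw [norm_smul, norm_inv, norm_norm, inv_mul_cancel₀ hr.ne'])
    (fun η => ENNReal.ofReal (‖charFun μ (‖ξ‖ • η)‖^2)) (by
      have := measurable_charFun (μ := μ)
      fun_prop)
  simp_rw [← tA_smul, smul_smul, mul_inv_cancel₀ hr.ne', one_smul] at h1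
  refine h1.trans ?_
  have hm : Measurable (fun η : Pt (n+1) => ENNReal.ofReal (Real.exp (-(1 * ‖η‖^2)) * ‖charFun μ (‖ξ‖ • η)‖^2)) := by
    have := measurable_charFun (μ := μ)
    fun_prop
  calc _ ≤ ENNReal.ofReal (C1 * δ ^ (Fintype.card (PairIdx' (n+1)))) * ∫⁻ η in closedBall 0 R,
        ENNReal.ofReal (Real.exp (R^2)) * ENNReal.ofReal (Real.exp (-(1 * ‖η‖^2)) * ‖charFun μ (‖ξ‖ • η)‖^2) := by
        gcongr ENNReal.ofReal _ * ?_
        refine setLIntegral_mono' measurableSet_closedBall fun η hη => ?_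
        rw [← ENNReal.ofReal_mul (by positivity)]
        apply ENNReal.ofReal_le_ofReal
        rw [← mul_assoc, ← Real.exp_add]
        have : ‖η‖ ≤ R := by simpa using hη
        have h5 : ‖η‖^2 ≤ R^2 := by gcongr
        have : 1 ≤ Real.exp (R^2 + -(1 * ‖η‖^2)) := by
          rw [Real.one_le_exp_iff]; linarith
        nlinarith [sq_nonneg ‖charFun μ (‖ξ‖ • η)‖]
    _ ≤ ENNReal.ofReal (C1 * δ ^ (Fintype.card (PairIdx' (n+1)))) * (ENNReal.ofReal (Real.exp (R^2)) *
        ENNReal.ofReal (Real.pi ^ (((n+1:ℕ):ℝ)/2) * (1 + C) * min 1 (‖ξ‖ ^ (-s)))) := by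
        rw [lintegral_const_mul _ hm]
        gcongr
        exact (setLIntegral_le_lintegral _ _).trans (energy_scaled hC h hr)
    _ = _ := by
        rw [← ENNReal.ofReal_mul (by positivity), ← ENNReal.ofReal_mul (by positivity)]
        congr 1; ring

def FF {ι : Type} {d : ℕ} (μ : Measure (Pt d)) (S : Finset ι) (c a : ι → ℝ) (A : Fin d → Pt d) (z : Pt d) : ℝ :=
  ∫ p : Pt d × Pt d, QK d S c a (p.1 - actA A p.2 - z) ∂(μ.prod μ)

lemma QK_continuous {ι : Type} {d : ℕ} (S : Finset ι) (c a : ι → ℝ) : Continuous (QK d S c a) := by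
  unfold QK
  exact continuous_finsetSum _ fun i _ => (gK_continuous (a i)).const_mul _

lemma FF_meas {ι : Type} {d : ℕ} (μ : Measure (Pt d)) [IsProbabilityMeasure μ] (S : Finset ι) (c a : ι → ℝ) :
    StronglyMeasurable (fun q : (Fin d → Pt d) × Pt d => FF μ S c a q.1 q.2) := by
  unfold FF
  apply StronglyMeasurable.integral_prod_right (f := fun (q : (Fin d → Pt d) × Pt d) (p : Pt d × Pt d) => QK d S c a (p.1 - actA q.1 p.2 - q.2))
  have h1 := QK_continuous (d := d) S c a
  have h2 : Continuous fun x : ((Fin d → Pt d) × Pt d) × (Pt d × Pt d) => actA x.1.1 x.2.2 :=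
    actA_continuous.comp (by fun_prop : Continuous fun x : ((Fin d → Pt d) × Pt d) × (Pt d × Pt d) => (x.1.1, x.2.2))
  refine Continuous.stronglyMeasurable ?_
  unfold Function.uncurry
  fun_prop

lemma FF_eq {ι : Type} {d : ℕ} (μ : Measure (Pt d)) [IsProbabilityMeasure μ] (S : Finset ι) (c a : ι → ℝ)  (A : Fin d → Pt d) (z : Pt d) :
    FF μ S c a A z = ∫ w, QK d S c a (w - z) ∂(nuA μ A) := by
  have h1 := QK_continuous (d := d) S c a
  rw [nuA, integral_map (nuA_meas A).measurable.aemeasurable (Continuous.aestronglyMeasurable (by fun_prop))]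
  rfl

lemma swap_aux {X Y : Type*} [MeasurableSpace X] [MeasurableSpace Y] (μ : Measure X) (ν : Measure Y) [SFinite μ] [SFinite ν]
    (K : ℝ≥0∞) (f : Y → ℝ≥0∞) (g : X → Y → ℝ≥0∞) (hf : Measurable f) (hg : Measurable fun p : X × Y => g p.1 p.2)
    (hfg : Measurable fun p : X × Y => f p.2 * g p.1 p.2) :
    ∫⁻ x, K * ∫⁻ y, f y * g x y ∂ν ∂μ = K * ∫⁻ y, f y * ∫⁻ x, g x y ∂μ ∂ν := by
  rw [lintegral_const_mul _ hfg.lintegral_prod_right', lintegral_lintegral_swap hfg.aemeasurable]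
  congr 2; ext y
  simp only
  rw [lintegral_const_mul]
  exact hg.comp (by fun_prop : Measurable fun A : X => (A, y))

lemma piece_L2 (n : ℕ) (ρ₀ ρ₁ : ℝ) (hρ : 0 < ρ₀) (hρ1 : 0 ≤ ρ₁) {μ : Measure (Pt (n+1))} [IsProbabilityMeasure μ]
    {s C : ℝ} (hC : 0 < C) (h : PotB μ s C) :
    ∃ C' : ℝ, 0 < C' ∧ ∀ δ : ℝ, 0 < δ → (n+1)^2 * δ ≤ ρ₀/2 → ∀ (ι : Type) (S : Finset ι) (c a : ι → ℝ) (τ C1 : ℝ),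
      0 < τ → 0 ≤ C1 → (∀ i ∈ S, 0 < a i) →
      (∀ x : ℝ, 0 < x → (qh S c a x)^2 * min 1 (x ^ (-(s/2))) ≤ C1 * τ ^ (s/2) * Real.exp (-(τ * x))) →
      ∫⁻ A in NN (n+1) ρ₀ ρ₁ δ, ∫⁻ z, ENNReal.ofReal ((FF μ S c a A z)^2) ≤
        ENNReal.ofReal (C' * δ ^ (Fintype.card (PairIdx' (n+1))) * C1 * τ ^ (s - ((n+1:ℕ):ℝ)/2)) := by
  obtain ⟨C2, hC2, hσ⟩ := sigma_bound n ρ₀ ρ₁ hρ hρ1 hC h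
  refine ⟨(2 * Real.pi)^(n+1) * C2 * (Real.pi ^ (((n+1:ℕ):ℝ)/2) * C), by positivity, ?_⟩
  intro δ hδ hδ2 ι S c a τ C1 hτ hC1 ha hq
  set D := Fintype.card (PairIdx' (n+1))
  have mch := measurable_charFun (μ := μ)
  have mqh : Continuous (qh S c a) := by unfold qh; fun_prop
  have mtA := tA_continuous (d := n+1)
  have mj : Measurable fun p : (Fin (n+1) → Pt (n+1)) × Pt (n+1) => ENNReal.ofReal (‖charFun μ (tA p.1 p.2)‖^2) := by
    have : Measurable fun p : (Fin (n+1) → Pt (n+1)) × Pt (n+1) => charFun μ (tA p.1 p.2) := mch.comp mtA.measurable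
    fun_prop
  have mj2 : Measurable fun ξ : Pt (n+1) => ENNReal.ofReal ((qh S c a (‖ξ‖^2))^2 * ‖charFun μ ξ‖^2) := by
    have : Measurable fun ξ : Pt (n+1) => qh S c a (‖ξ‖^2) := (mqh.comp (by fun_prop)).measurable
    fun_prop
  calc _ = ∫⁻ A in NN (n+1) ρ₀ ρ₁ δ, ENNReal.ofReal ((2 * Real.pi) ^ (n+1)) *
          ∫⁻ ξ, ENNReal.ofReal ((qh S c a (‖ξ‖^2))^2 * ‖charFun μ ξ‖^2) * ENNReal.ofReal (‖charFun μ (tA A ξ)‖^2) := by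
        congr 1; ext A
        simp_rw [FF_eq]
        rw [QK_L2 S c a ha]
        congr 2; ext ξ
        rw [nuA_charFun, ← ENNReal.ofReal_mul (by positivity), mul_assoc]
    _ = ENNReal.ofReal ((2 * Real.pi) ^ (n+1)) * ∫⁻ ξ, ENNReal.ofReal ((qh S c a (‖ξ‖^2))^2 * ‖charFun μ ξ‖^2) *
          ∫⁻ A in NN (n+1) ρ₀ ρ₁ δ, ENNReal.ofReal (‖charFun μ (tA A ξ)‖^2) := by
        have mm : Measurable (fun p : (Fin (n+1) → Pt (n+1)) × Pt (n+1) => ENNReal.ofReal ((qh S c a (‖p.2‖^2))^2 * ‖charFun μ p.2‖^2) * ENNReal.ofReal (‖charFun μ (tA p.1 p.2)‖^2)) :=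
          (mj2.comp measurable_snd).mul mj
        exact swap_aux _ _ _ _ _ mj2 mj mm
    _ ≤ ENNReal.ofReal ((2 * Real.pi) ^ (n+1)) * ∫⁻ ξ, ENNReal.ofReal (C2 * δ ^ D * C1 * τ ^ (s/2)) *
          ENNReal.ofReal (Real.exp (-(τ * ‖ξ‖^2)) * ‖charFun μ ξ‖^2) := by
        gcongr ENNReal.ofReal _ * ?_
        refine lintegral_mono_ae ?_
        have hne : ∀ᵐ ξ : Pt (n+1), ξ ≠ 0 := by
          rw [ae_iff]; simp
        filter_upwards [hne] with ξ hξ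
        have hr : 0 < ‖ξ‖ := norm_pos_iff.2 hξ
        calc _ ≤ ENNReal.ofReal ((qh S c a (‖ξ‖^2))^2 * ‖charFun μ ξ‖^2) * ENNReal.ofReal (C2 * δ ^ D * min 1 (‖ξ‖ ^ (-s))) := by
              gcongr; exact hσ δ hδ hδ2 ξ hξ
          _ ≤ _ := by
              rw [← ENNReal.ofReal_mul (by positivity), ← ENNReal.ofReal_mul (by positivity)]
              apply ENNReal.ofReal_le_ofReal
              have h5 := hq (‖ξ‖^2) (by positivity)
              rw [← Real.rpow_natCast ‖ξ‖ 2, ← Real.rpow_mul hr.le, show ((2:ℕ):ℝ) * -(s/2) = -s by push_cast; ring, Real.rpow_natCast] at h5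
              have h6 : 0 ≤ C2 * δ^D * ‖charFun μ ξ‖^2 := by positivity
              nlinarith [mul_le_mul_of_nonneg_left h5 h6]
    _ ≤ ENNReal.ofReal ((2 * Real.pi) ^ (n+1)) * (ENNReal.ofReal (C2 * δ ^ D * C1 * τ ^ (s/2)) *
          ENNReal.ofReal (Real.pi ^ (((n+1:ℕ):ℝ)/2) * C * τ ^ ((s - (n+1:ℕ))/2))) := by
        rw [lintegral_const_mul _ (by fun_prop)]
        gcongr
        exact energy_mu hC h hτ
    _ = _ := by
        rw [← ENNReal.ofReal_mul (by positivity), ← ENNReal.ofReal_mul (by positivity)]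
        congr 1
        rw [show s - ((n+1:ℕ):ℝ)/2 = s/2 + (s - (n+1:ℕ))/2 by ring, Real.rpow_add hτ]
        ring

lemma piece_sup {d : ℕ} {μ : Measure (Pt d)} [IsProbabilityMeasure μ]
    {s C : ℝ} (hC : 0 < C) (hs : s ≤ d) (h : PotB μ s C) {ι : Type} (S : Finset ι) (c a : ι → ℝ) (τ C1 : ℝ)
    (hτ : 0 < τ) (ha : ∀ i ∈ S, τ ≤ a i) (hc : ∑ i ∈ S, |c i| ≤ C1) (A : Fin d → Pt d) (z : Pt d) :
    |FF μ S c a A z| ≤ C1 * (Real.pi ^ ((d:ℝ)/2) * C * τ ^ ((s - d)/2)) := by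
  have hcont := nuA_meas A
  have hm : Measurable fun p : Pt d × Pt d => p.1 - actA A p.2 - z := (hcont.sub continuous_const).measurable
  have ha0 : ∀ i ∈ S, 0 < a i := fun i hi => hτ.trans_le (ha i hi)
  have e : FF μ S c a A z = ∑ i ∈ S, c i * ∫ p : Pt d × Pt d, gK d (a i) (p.1 - actA A p.2 - z) ∂(μ.prod μ) := by
    unfold FF QK
    rw [integral_finsetSum _ fun i hi => (gK_int_fin (ha0 i hi) _ _ hm).const_mul _]
    simp_rw [integral_const_mul]
  have hb : ∀ i ∈ S, |∫ p : Pt d × Pt d, gK d (a i) (p.1 - actA A p.2 - z) ∂(μ.prod μ)| ≤ Real.pi ^ ((d:ℝ)/2) * C * τ ^ ((s - d)/2) := by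
    intro i hi
    have hai := ha0 i hi
    rw [abs_of_nonneg (integral_nonneg fun p => gK_nonneg hai _)]
    rw [← ENNReal.ofReal_le_ofReal_iff (by positivity), ofReal_integral_eq_lintegral_ofReal (gK_int_fin hai _ _ hm)
      (Filter.Eventually.of_forall fun z => gK_nonneg hai _)]
    have cg := gK_continuous (d := d) (a i)
    have hme : AEMeasurable (fun p : Pt d × Pt d => ENNReal.ofReal (gK d (a i) (p.1 - actA A p.2 - z))) (μ.prod μ) := (cg.measurable.comp hm).ennreal_ofReal.aemeasurable
    rw [lintegral_prod_symm _ hme]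
    calc _ ≤ ∫⁻ v, ENNReal.ofReal (Real.pi ^ ((d:ℝ)/2) * C * (a i) ^ ((s - d)/2)) ∂μ := by
          refine lintegral_mono fun v => ?_
          refine le_trans (le_of_eq ?_) (pot_gK hC h hai (actA A v + z))
          congr 1; ext u
          have : gK d (a i) (u - actA A v - z) = gK d (a i) (actA A v + z - u) := by
            unfold gK
            rw [show u - actA A v - z = -(actA A v + z - u) by abel, norm_neg]
          rw [this]
      _ = ENNReal.ofReal (Real.pi ^ ((d:ℝ)/2) * C * (a i) ^ ((s - d)/2)) := by simp
      _ ≤ _ := by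
          apply ENNReal.ofReal_le_ofReal
          gcongr _ * ?_
          exact Real.rpow_le_rpow_of_nonpos hτ (ha i hi) (by linarith)
  rw [e]
  calc _ ≤ ∑ i ∈ S, |c i| * (Real.pi ^ ((d:ℝ)/2) * C * τ ^ ((s - d)/2)) := by
        refine (Finset.abs_sum_le_sum_abs _ _).trans (Finset.sum_le_sum fun i hi => ?_)
        rw [abs_mul]
        gcongr
        exact hb i hi
    _ ≤ _ := by
        rw [← Finset.sum_mul]
        gcongr

def Lam {d : ℕ} (μ : Measure (Pt d)) (a : ℝ) (A : Fin d → Pt d) (z : Pt d) : ℝ :=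
  ∫ p : Pt d × Pt d, gK d a (p.1 - actA A p.2 - z) ∂(μ.prod μ)

lemma FF_expand {ι : Type} {d : ℕ} {μ : Measure (Pt d)} [IsProbabilityMeasure μ] (S : Finset ι) (c a : ι → ℝ)
    (ha : ∀ i ∈ S, 0 < a i) (A : Fin d → Pt d) (z : Pt d) :
    FF μ S c a A z = ∑ i ∈ S, c i * Lam μ (a i) A z := by
  have hm : Measurable fun p : Pt d × Pt d => p.1 - actA A p.2 - z := ((nuA_meas A).sub continuous_const).measurable
  unfold FF QK Lam
  rw [integral_finsetSum _ fun i hi => (gK_int_fin (ha i hi) _ _ hm).const_mul _]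
  simp_rw [integral_const_mul]

lemma mink {α : Type*} [MeasurableSpace α] (m : Measure α) (p : ℕ) (hp : 1 ≤ p) (J : ℕ) (F : ℕ → α → ℝ)
    (hF : ∀ j, Measurable (F j)) (B r : ℝ) (hB : 0 ≤ B) (hr : 0 ≤ r) (hr1 : r < 1)
    (h : ∀ j ∈ Finset.range J, ∫⁻ x, ENNReal.ofReal (|F j x|^p) ∂m ≤ ENNReal.ofReal (B * (r^j)^p)) :
    ∫⁻ x, ENNReal.ofReal (|∑ j ∈ Finset.range J, F j x|^p) ∂m ≤ ENNReal.ofReal (B * (1/(1-r))^p) := by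
  have hp0 : (p : ℝ≥0∞) ≠ 0 := by simp; omega
  have hpr : (0:ℝ) < p := by exact_mod_cast hp
  have key : ∀ f : α → ℝ, eLpNorm f p m = (∫⁻ x, ENNReal.ofReal (|f x|^p) ∂m) ^ (1/(p:ℝ)) := by
    intro f
    rw [eLpNorm_eq_lintegral_rpow_enorm_toReal hp0 (by simp)]
    simp only [ENNReal.toReal_natCast]
    congr 2; ext x
    rw [ENNReal.ofReal_pow (abs_nonneg _), ENNReal.rpow_natCast, Real.enorm_eq_ofReal_abs]
  have h1 : eLpNorm (∑ j ∈ Finset.range J, F j) p m ≤ ∑ j ∈ Finset.range J, eLpNorm (F j) p m :=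
    eLpNorm_sum_le (fun j _ => (hF j).aestronglyMeasurable) (by exact_mod_cast hp)
  have h2 : ∑ j ∈ Finset.range J, eLpNorm (F j) p m ≤ ENNReal.ofReal (B ^ (1/(p:ℝ)) * (1/(1-r))) := by
    calc _ ≤ ∑ j ∈ Finset.range J, ENNReal.ofReal (B ^ (1/(p:ℝ)) * r^j) := by
          refine Finset.sum_le_sum fun j hj => ?_
          rw [key]
          calc _ ≤ (ENNReal.ofReal (B * (r^j)^p)) ^ (1/(p:ℝ)) := by gcongr; exact h j hj
            _ = _ := by
              rw [ENNReal.ofReal_rpow_of_nonneg (by positivity) (by positivity), Real.mul_rpow hB (by positivity)]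
              congr 2
              rw [one_div, Real.pow_rpow_inv_natCast (by positivity) (by omega)]
      _ = ENNReal.ofReal (∑ j ∈ Finset.range J, B ^ (1/(p:ℝ)) * r^j) := by
          rw [ENNReal.ofReal_sum_of_nonneg]; intros; positivity
      _ ≤ _ := by
          apply ENNReal.ofReal_le_ofReal
          rw [← Finset.mul_sum]
          gcongr
          have := (summable_geometric_of_lt_one hr hr1).sum_le_tsum (Finset.range J) (fun i _ => by positivity)
          rw [tsum_geometric_of_lt_one hr hr1] at this
          simpa using this
  have h3 := h1.trans h2
  rw [key] at h3
  have h4 := ENNReal.rpow_le_rpow h3 hpr.le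
  rw [← ENNReal.rpow_mul, one_div, inv_mul_cancel₀ hpr.ne', ENNReal.rpow_one] at h4
  simp only [Finset.sum_apply] at h4
  refine h4.trans (le_of_eq ?_)
  have : 0 < 1 - r := by linarith
  rw [ENNReal.ofReal_rpow_of_nonneg (by positivity) hpr.le, Real.mul_rpow (by positivity) (by positivity), ← Real.rpow_mul hB,
    inv_mul_cancel₀ hpr.ne', Real.rpow_one, Real.rpow_natCast]

lemma ypow {y p : ℝ} {m : ℕ} (hy : 0 < y) (hp : 0 ≤ p) (hpm : p ≤ (m:ℝ)) : y ^ p * Real.exp (-y) ≤ 1 + (m.factorial : ℝ) := by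
  have h1 : y ^ p ≤ 1 + y ^ m := by
    rcases le_total y 1 with h | h
    · have := Real.rpow_le_one hy.le h hp
      have : 0 ≤ y^m := by positivity
      linarith
    · have := Real.rpow_le_rpow_of_exponent_le h hpm
      rw [Real.rpow_natCast] at this
      linarith
  have h2 := Real.pow_div_factorial_le_exp y hy.le m
  have hf : (0:ℝ) < m.factorial := by positivity
  rw [div_le_iff₀ hf] at h2
  rw [Real.exp_neg, ← div_eq_mul_inv, div_le_iff₀ (Real.exp_pos _)]
  have : 1 ≤ Real.exp y := Real.one_le_exp hy.le
  nlinarith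

lemma qfin {m : ℕ} {s τ x q : ℝ} (hs0 : 0 ≤ s) (hs : s ≤ m) (hτ : 0 < τ) (hx : 0 < x)
    (hq : |q| ≤ 2^m * (τ * x)^m * Real.exp (-(τ*x))) :
    q^2 * min 1 (x ^ (-(s/2))) ≤ (4^m * (1 + ((2*m).factorial : ℝ))) * τ^(s/2) * Real.exp (-(τ*x)) := by
  set y := τ * x with hy
  have hy0 : 0 < y := by positivity
  have h1 : q^2 ≤ (2^m * y^m * Real.exp (-y))^2 := by rw [← sq_abs]; gcongr
  have h2 : min 1 (x ^ (-(s/2))) ≤ τ^(s/2) * y^(-(s/2)) := by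
    refine (min_le_right _ _).trans (le_of_eq ?_)
    rw [hy, Real.mul_rpow hτ.le hx.le, Real.rpow_neg hτ.le (s/2)]
    have : 0 < τ^(s/2) := by positivity
    field_simp
  have h3 := ypow (y := y) (p := 2*m - s/2) (m := 2*m) hy0 (by linarith) (by push_cast; linarith)
  calc _ ≤ (2^m * y^m * Real.exp (-y))^2 * (τ^(s/2) * y^(-(s/2))) := by gcongr
    _ = 4^m * τ^(s/2) * (y ^ (2*(m:ℝ) - s/2) * Real.exp (-y)) * Real.exp (-y) := by
      rw [sub_eq_add_neg, Real.rpow_add hy0]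
      have : y ^ (2*(m:ℝ)) = (y^m)^2 := by
        rw [← pow_mul, ← Real.rpow_natCast y (m*2)]; push_cast; rw [mul_comm]
      rw [this, show (4:ℝ)^m = (2^m)^2 by rw [← pow_mul, mul_comm, pow_mul]; norm_num]
      ring
    _ ≤ 4^m * τ^(s/2) * (1 + ((2*m).factorial : ℝ)) * Real.exp (-y) := by gcongr
    _ = _ := by ring

/-- binomial coefficients for base -/
def cb (m : ℕ) (i : ℕ) : ℝ := -((-1)^(i+1) * (m.choose (i+1) : ℝ))

lemma cb_sum (m : ℕ) (E : ℝ) : ∑ i ∈ Finset.range m, cb m i * E^(i+1) = 1 - (1 - E)^m := by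
  have : (1 - E)^m = ∑ i ∈ Finset.range (m+1), (-1)^i * E^i * (m.choose i : ℝ) := by
    rw [show (1 - E) = (-E) + 1 by ring, add_pow]
    refine Finset.sum_congr rfl fun i _ => ?_
    rw [neg_eq_neg_one_mul, mul_pow, one_pow]; ring
  rw [this, Finset.sum_range_succ']
  simp only [cb, pow_zero, Nat.choose_zero_right, Nat.cast_one]
  have e : ∑ i ∈ Finset.range m, -((-1)^(i+1) * (m.choose (i+1) : ℝ)) * E^(i+1) = - ∑ i ∈ Finset.range m, (-1)^(i+1) * E^(i+1) * (m.choose (i+1) : ℝ) := by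
    rw [← Finset.sum_neg_distrib]
    refine Finset.sum_congr rfl fun i _ => by ring
  rw [e]; ring

lemma cb_abs (m : ℕ) : ∑ i ∈ Finset.range m, |cb m i| ≤ 2^m := by
  have h : ∑ i ∈ Finset.range (m+1), (m.choose i : ℝ) = 2^m := by exact_mod_cast Nat.sum_range_choose m
  rw [Finset.sum_range_succ'] at h
  have : ∑ i ∈ Finset.range m, |cb m i| = ∑ i ∈ Finset.range m, (m.choose (i+1) : ℝ) := by
    refine Finset.sum_congr rfl fun i _ => ?_
    rw [cb, abs_neg, abs_mul, abs_pow]; simp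
  rw [this]
  have : (0:ℝ) ≤ m.choose 0 := by positivity
  linarith

lemma qh_base (m : ℕ) (t h x : ℝ) : qh (Finset.range m) (cb m) (fun i => t + ((i:ℝ)+1)*h) x =
    Real.exp (-(t*x)) * (1 - (1 - Real.exp (-(h*x)))^m) := by
  unfold qh
  rw [← cb_sum, Finset.mul_sum]
  refine Finset.sum_congr rfl fun i _ => ?_
  rw [← Real.exp_nat_mul, show -((t + ((i:ℝ)+1)*h) * x) = -(t*x) + ((i+1:ℕ):ℝ) * -(h*x) by push_cast; ring, Real.exp_add]
  ring

lemma base_bound {m : ℕ} {t h x : ℝ} (ht : 0 ≤ t) (hh : 0 ≤ h) (hx : 0 ≤ x) :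
    |Real.exp (-(t*x)) * (1 - (1 - Real.exp (-(h*x)))^m)| ≤ 2^m * Real.exp (-(h*x)) := by
  set E := Real.exp (-(h*x))
  have hE : 0 < E := Real.exp_pos _
  have hE1 : E ≤ 1 := Real.exp_le_one_iff.2 (by have := mul_nonneg hh hx; linarith)
  have h1 : Real.exp (-(t*x)) ≤ 1 := Real.exp_le_one_iff.2 (by have := mul_nonneg ht hx; linarith)
  have h2 : 1 - (1-E)^m ≤ m * E := by
    have := one_add_mul_le_pow (a := -E) (by linarith) m
    rw [← sub_eq_add_neg] at this
    linarith
  have h3 : (1-E)^m ≤ 1 := pow_le_one₀ (by linarith) (by linarith)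
  have h4 : (m:ℝ) ≤ 2^m := by exact_mod_cast Nat.lt_two_pow_self.le
  rw [abs_of_nonneg (mul_nonneg (Real.exp_pos _).le (by linarith))]
  calc _ ≤ 1 * (m * E) := by gcongr
    _ ≤ _ := by rw [one_mul]; gcongr

lemma mid_bound {m : ℕ} {t h x : ℝ} (ht : 0 ≤ t) (hh : 0 ≤ h) (hx : 0 ≤ x) :
    |Real.exp (-(t*x)) * (1 - (1 - Real.exp (-(h*x)))^m) - Real.exp (-(t*x)) * (1 - (1 - Real.exp (-((2*h)*x)))^m)| ≤
      2^m * (h*x)^m * Real.exp (-(h*x)) := by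
  have e2 : Real.exp (-((2*h)*x)) = Real.exp (-(h*x))^2 := by rw [← Real.exp_nat_mul]; congr 1; push_cast; ring
  rw [e2]
  have h0 : 1 - h*x ≤ Real.exp (-(h*x)) := by linarith [Real.add_one_le_exp (-(h*x))]
  set E := Real.exp (-(h*x))
  have hE : 0 < E := Real.exp_pos _
  have hE1 : E ≤ 1 := Real.exp_le_one_iff.2 (by have := mul_nonneg hh hx; linarith)
  have h1 : Real.exp (-(t*x)) ≤ 1 := Real.exp_le_one_iff.2 (by have := mul_nonneg ht hx; linarith)
  have e : Real.exp (-(t*x)) * (1 - (1 - E)^m) - Real.exp (-(t*x)) * (1 - (1 - E^2)^m) =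
    Real.exp (-(t*x)) * ((1 - E)^m * ((1+E)^m - 1)) := by
    rw [show 1 - E^2 = (1-E)*(1+E) by ring, mul_pow]; ring
  have h5 : 1 ≤ (1+E)^m := one_le_pow₀ (by linarith)
  have h6 : (1+E)^m - 1 ≤ 2^m * E := by
    rw [add_comm, add_pow, Finset.sum_range_succ']
    simp only [one_pow, mul_one, pow_zero, Nat.choose_zero_right, Nat.cast_one, add_sub_cancel_right]
    have h : ∑ i ∈ Finset.range (m+1), (m.choose i : ℝ) = 2^m := by exact_mod_cast Nat.sum_range_choose m
    rw [Finset.sum_range_succ'] at h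
    calc _ ≤ ∑ i ∈ Finset.range m, E * (m.choose (i+1) : ℝ) := by
          refine Finset.sum_le_sum fun i _ => ?_
          gcongr
          exact pow_le_of_le_one hE.le hE1 (by omega)
      _ ≤ _ := by
          rw [← Finset.mul_sum, mul_comm]
          gcongr
          have : (0:ℝ) ≤ m.choose 0 := by positivity
          linarith
  have h7 : (1-E)^m ≤ (h*x)^m := by
    gcongr
    linarith
  have h8 : 0 ≤ (1-E)^m := pow_nonneg (by linarith) _
  rw [e, abs_of_nonneg (mul_nonneg (Real.exp_pos _).le (mul_nonneg h8 (by linarith)))]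
  calc _ ≤ 1 * ((h*x)^m * (2^m * E)) := by gcongr
    _ = _ := by ring

lemma last_bound {m : ℕ} {h x : ℝ} (hh : 0 ≤ h) (hx : 0 ≤ x) :
    |Real.exp (-(h*x)) - Real.exp (-(h*x)) * (1 - (1 - Real.exp (-(h*x)))^m)| ≤
      2^m * (h*x)^m * Real.exp (-(h*x)) := by
  have h0 : 1 - h*x ≤ Real.exp (-(h*x)) := by linarith [Real.add_one_le_exp (-(h*x))]
  set E := Real.exp (-(h*x))
  have hE : 0 < E := Real.exp_pos _
  have hE1 : E ≤ 1 := Real.exp_le_one_iff.2 (by have := mul_nonneg hh hx; linarith)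
  have h8 : 0 ≤ (1-E)^m := pow_nonneg (by linarith) _
  rw [show E - E * (1 - (1-E)^m) = E * (1-E)^m by ring, abs_of_nonneg (mul_nonneg hE.le h8)]
  have h7 : (1-E)^m ≤ (h*x)^m := by
    gcongr
    linarith
  have h9 : (1:ℝ) ≤ 2^m := one_le_pow₀ (by norm_num)
  calc _ ≤ E * (h*x)^m := by gcongr
    _ = 1 * (h*x)^m * E := by ring
    _ ≤ _ := by gcongr

lemma piece_full (n k m : ℕ) (hk : 1 ≤ k) (ρ₀ ρ₁ : ℝ) (hρ : 0 < ρ₀) (hρ1 : 0 ≤ ρ₁) {μ : Measure (Pt (n+1))} [IsProbabilityMeasure μ]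
    {s C : ℝ} (hC : 0 < C) (hs : s ≤ ((n+1:ℕ):ℝ)) (h : PotB μ s C) :
    ∃ C' : ℝ, 0 < C' ∧ ∀ δ : ℝ, 0 < δ → (n+1)^2 * δ ≤ ρ₀/2 → ∀ (ι : Type) (S : Finset ι) (c a : ι → ℝ) (τ : ℝ),
      0 < τ → (∀ i ∈ S, τ ≤ a i) → ∑ i ∈ S, |c i| ≤ 2 * 2^m →
      (∀ x : ℝ, 0 < x → (qh S c a x)^2 * min 1 (x ^ (-(s/2))) ≤ (4^m * (1 + ((2*m).factorial : ℝ))) * τ ^ (s/2) * Real.exp (-(τ * x))) →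
      ∫⁻ A in NN (n+1) ρ₀ ρ₁ δ, ∫⁻ z, ENNReal.ofReal (|FF μ S c a A z|^(k+1)) ≤
        ENNReal.ofReal (C' * δ ^ (Fintype.card (PairIdx' (n+1))) * τ ^ ((s * (k+1) - (n+1:ℕ) * k)/2)) := by
  obtain ⟨C1, hC1, h1⟩ := piece_L2 n ρ₀ ρ₁ hρ hρ1 hC h
  set P := Real.pi ^ (((n+1:ℕ):ℝ)/2) with hP
  have hP0 : 0 < P := by positivity
  refine ⟨(2 * 2^m * (P * C))^(k-1) * C1 * (4^m * (1 + ((2*m).factorial : ℝ))), by positivity, ?_⟩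
  intro δ hδ hδ2 ι S c a τ hτ ha hc hq
  have h2 := h1 δ hδ hδ2 ι S c a τ _ hτ (by positivity) (fun i hi => hτ.trans_le (ha i hi)) hq
  set K := 2 * 2^m * (P * C * τ ^ ((s - (n+1:ℕ))/2)) with hK
  have hK0 : 0 < K := by positivity
  calc _ ≤ ∫⁻ A in NN (n+1) ρ₀ ρ₁ δ, ∫⁻ z, ENNReal.ofReal (K^(k-1)) * ENNReal.ofReal ((FF μ S c a A z)^2) := by
        refine lintegral_mono fun A => lintegral_mono fun z => ?_
        rw [← ENNReal.ofReal_mul (by positivity)]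
        apply ENNReal.ofReal_le_ofReal
        rw [show k + 1 = (k-1) + 2 by omega, pow_add, sq_abs]
        gcongr
        exact piece_sup hC hs h S c a τ _ hτ ha hc A z
    _ = ENNReal.ofReal (K^(k-1)) * ∫⁻ A in NN (n+1) ρ₀ ρ₁ δ, ∫⁻ z, ENNReal.ofReal ((FF μ S c a A z)^2) := by
        simp_rw [lintegral_const_mul' _ _ ENNReal.ofReal_ne_top]
    _ ≤ _ := mul_le_mul_right h2 _
    _ = _ := by
        rw [← ENNReal.ofReal_mul (by positivity)]
        congr 1
        have e : τ ^ ((s * (k+1) - (n+1:ℕ) * k)/2) = (τ ^ ((s - (n+1:ℕ))/2))^(k-1) * τ ^ (s - ((n+1:ℕ):ℝ)/2) := by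
          rw [← Real.rpow_natCast, ← Real.rpow_mul hτ.le, ← Real.rpow_add hτ, Nat.cast_sub hk]
          congr 1; push_cast; ring
        rw [e, hK, show 2 * 2^m * (P * C * τ ^ ((s - (n+1:ℕ))/2)) = (2 * 2^m * (P * C)) * τ ^ ((s - (n+1:ℕ))/2) by ring, mul_pow]
        ring

theorem lam_bound (n k : ℕ) (hk : 1 ≤ k) (ρ₀ ρ₁ : ℝ) (hρ : 0 < ρ₀) (hρ1 : 0 ≤ ρ₁) {μ : Measure (Pt (n+1))} [IsProbabilityMeasure μ]
    {s C : ℝ} (hC : 0 < C) (hs : s ≤ ((n+1:ℕ):ℝ)) (hs1 : ((n+1:ℕ):ℝ) * k < s * (k+1)) (h : PotB μ s C) :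
    ∃ C' : ℝ, 0 < C' ∧ ∀ δ : ℝ, 0 < δ → (n+1)^2 * δ ≤ ρ₀/2 → ∀ J : ℕ,
      ∫⁻ A in NN (n+1) ρ₀ ρ₁ δ, ∫⁻ z, ENNReal.ofReal ((Lam μ ((1/2)^J) A z)^(k+1)) ≤
        ENNReal.ofReal (C' * δ ^ (Fintype.card (PairIdx' (n+1)))) := by
  obtain ⟨C1, hC1, hp⟩ := piece_full n k (n+1) hk ρ₀ ρ₁ hρ hρ1 hC hs h
  set γ := (s * (k+1) - (n+1:ℕ) * k)/2 with hγ
  have hγ0 : 0 < γ := by rw [hγ]; linarith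
  have hs0 : 0 < s := by
    have : (0:ℝ) ≤ ((n+1:ℕ):ℝ) * k := by positivity
    by_contra hh
    push Not at hh
    have : s * (k+1) ≤ 0 := mul_nonpos_of_nonpos_of_nonneg hh (by positivity)
    linarith
  set r : ℝ := (1/2:ℝ) ^ (γ/((k+1:ℕ):ℝ)) with hr
  have hr0 : 0 < r := by positivity
  have hr1 : r < 1 := Real.rpow_lt_one (by norm_num) (by norm_num) (by positivity)
  have hrp : ∀ j : ℕ, (r^j)^(k+1) = ((1/2:ℝ)^j)^γ := by
    intro j
    rw [← pow_mul, hr, ← Real.rpow_natCast, ← Real.rpow_mul (by norm_num), ← Real.rpow_natCast (1/2) j, ← Real.rpow_mul (by norm_num)]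
    congr 1
    push_cast
    field_simp
  refine ⟨C1 * 2^γ * (1/(1-r))^(k+1), by have : 0 < 1 - r := by linarith
                                         positivity, ?_⟩
  intro δ hδ hδ2 J
  set D := Fintype.card (PairIdx' (n+1)) with hD
  set t : ℝ := (1/2)^J with ht
  have ht0 : 0 < t := by positivity
  let V : ℝ → (Fin (n+1) → Pt (n+1)) × Pt (n+1) → ℝ := fun h q => FF μ (Finset.range (n+1)) (cb (n+1)) (fun i => t + ((i:ℝ)+1)*h) q.1 q.2
  let F : ℕ → (Fin (n+1) → Pt (n+1)) × Pt (n+1) → ℝ := fun j q => if j = 0 then V 1 q else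
    if j ≤ J then V ((1/2)^j) q - V (2 * (1/2)^j) q else Lam μ t q.1 q.2 - V t q
  have hLam : ∀ A z, Lam μ t A z = FF μ {()} (fun _ => 1) (fun _ => t) A z := by
    intro A z
    rw [FF_expand _ _ _ (by intros; exact ht0)]; simp
  have hV : ∀ h, Measurable (V h) := fun h => (FF_meas μ _ _ _).measurable
  have hL : Measurable fun q : (Fin (n+1) → Pt (n+1)) × Pt (n+1) => Lam μ t q.1 q.2 := by
    simp_rw [hLam]; exact (FF_meas μ _ _ _).measurable
  have hF : ∀ j, Measurable (F j) := by
    intro j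
    by_cases h0 : j = 0
    · simp only [F, h0, if_true]; exact hV 1
    · by_cases h1 : j ≤ J
      · simp only [F, h0, h1, if_false, if_true]; exact (hV _).sub (hV _)
      · simp only [F, h0, h1, if_false]; exact hL.sub (hV _)
  have hsum : ∀ q, ∑ j ∈ Finset.range (J+2), F j q = Lam μ t q.1 q.2 := by
    intro q
    have : ∀ i, i ≤ J → ∑ j ∈ Finset.range (i+1), F j q = V ((1/2)^i) q := by
      intro i
      induction i with
      | zero => intro _; simp [F]
      | succ i ih =>
        intro hi
        rw [Finset.sum_range_succ, ih (by omega)]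
        simp only [F, Nat.succ_ne_zero, if_false, hi, if_true]
        rw [show (2:ℝ) * (1/2)^(i+1) = (1/2)^i by rw [pow_succ]; ring]
        ring
    rw [Finset.sum_range_succ, this J le_rfl]
    simp only [F, Nat.succ_ne_zero, if_false, show ¬ (J + 1 ≤ J) by omega]
    ring
  set N := NN (n+1) ρ₀ ρ₁ δ with hN
  have conv : ∀ G : (Fin (n+1) → Pt (n+1)) × Pt (n+1) → ℝ, Measurable G → ∫⁻ q, ENNReal.ofReal (|G q|^(k+1)) ∂((volume.restrict N).prod volume)
      = ∫⁻ A in N, ∫⁻ z, ENNReal.ofReal (|G (A,z)|^(k+1)) := by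
    intro G hG
    rw [lintegral_prod]
    have : Measurable fun q => |G q|^(k+1) := by fun_prop
    exact this.ennreal_ofReal.aemeasurable
  have hcb := cb_abs (n+1)
  have hsm : s ≤ ((n+1:ℕ):ℝ) := hs
  have h2m : (1:ℝ) ≤ 2^(n+1) := one_le_pow₀ (by norm_num)
  have hh : ∀ j ∈ Finset.range (J+2), ∫⁻ q, ENNReal.ofReal (|F j q|^(k+1)) ∂((volume.restrict N).prod volume) ≤
      ENNReal.ofReal (C1 * δ^D * 2^γ * (r^j)^(k+1)) := by
    intro j hj
    rw [conv _ (hF j), hrp]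
    have h2γ : (1:ℝ) ≤ 2^γ := Real.one_le_rpow (by norm_num) hγ0.le
    by_cases h0 : j = 0
    · subst h0
      have := hp δ hδ hδ2 ℕ (Finset.range (n+1)) (cb (n+1)) (fun i => t + ((i:ℝ)+1)*1) 1 one_pos
        (fun i _ => by have : (0:ℝ) ≤ i := by positivity
                       linarith) (by linarith) (fun x hx => by
          rw [qh_base]
          have hb := base_bound (m := n+1) ht0.le zero_le_one hx.le
          have h5 : (Real.exp (-(t*x)) * (1 - (1 - Real.exp (-(1*x)))^(n+1)))^2 ≤ (2^(n+1) * Real.exp (-(1*x)))^2 := by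
            rw [← sq_abs]; gcongr
          have h6 : Real.exp (-(1*x)) ≤ 1 := Real.exp_le_one_iff.2 (by linarith)
          have h7 : min 1 (x ^ (-(s/2))) ≤ 1 := min_le_left _ _
          have h8 : 0 ≤ min 1 (x ^ (-(s/2))) := by positivity
          calc _ ≤ (2^(n+1) * Real.exp (-(1*x)))^2 * 1 := by gcongr
            _ = 4^(n+1) * 1 * 1 * (Real.exp (-(1*x)) * Real.exp (-(1*x))) := by
              rw [show (4:ℝ)^(n+1) = (2^(n+1))^2 by rw [← pow_mul, mul_comm, pow_mul]; norm_num]; ring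
            _ ≤ 4^(n+1) * (1 + ((2*(n+1)).factorial : ℝ)) * 1 * (1 * Real.exp (-(1*x))) := by
              gcongr
              have : (0:ℝ) ≤ (2*(n+1)).factorial := by positivity
              linarith
            _ = _ := by rw [Real.one_rpow]; ring)
      simp only [F, if_true]
      refine this.trans (ENNReal.ofReal_le_ofReal ?_)
      rw [Real.one_rpow, pow_zero, Real.one_rpow, mul_one, mul_one]
      exact le_mul_of_one_le_right (by positivity) h2γ
    · by_cases h1 : j ≤ J
      · set τ : ℝ := (1/2)^j with hτ
        have hτ0 : 0 < τ := by positivity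
        let a : ℕ × Bool → ℝ := fun i => t + ((i.1:ℝ)+1)* (if i.2 then τ else 2 * τ)
        let c : ℕ × Bool → ℝ := fun i => if i.2 then cb (n+1) i.1 else - cb (n+1) i.1
        have haτ : ∀ i, τ ≤ a i := by
          intro i
          have : (0:ℝ) ≤ i.1 := by positivity
          have h5 : τ ≤ (if i.2 then τ else 2 * τ) := by split_ifs <;> linarith
          have : 1 * τ ≤ ((i.1:ℝ)+1)* (if i.2 then τ else 2 * τ) := by
            apply mul_le_mul (by linarith) h5 hτ0.le (by linarith)
          simp only [a]; linarith
        have hqh : ∀ x, qh (Finset.range (n+1) ×ˢ Finset.univ) c a x = Real.exp (-(t*x)) * (1 - (1 - Real.exp (-(τ*x)))^(n+1)) - Real.exp (-(t*x)) * (1 - (1 - Real.exp (-((2*τ)*x)))^(n+1)) := by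
          intro x
          rw [← qh_base, ← qh_base]
          unfold qh
          rw [Finset.sum_product, ← Finset.sum_sub_distrib]
          refine Finset.sum_congr rfl fun i _ => ?_
          rw [Fintype.sum_bool]
          simp [c, a]; ring
        have hFF : ∀ A z, FF μ (Finset.range (n+1) ×ˢ Finset.univ) c a A z = V τ (A,z) - V (2*τ) (A,z) := by
          intro A z
          simp only [V]
          rw [FF_expand _ _ _ (fun i _ => hτ0.trans_le (haτ i)), FF_expand _ _ _ (fun i _ => by positivity), FF_expand _ _ _ (fun i _ => by positivity),
            Finset.sum_product, ← Finset.sum_sub_distrib]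
          refine Finset.sum_congr rfl fun i _ => ?_
          rw [Fintype.sum_bool]
          simp [c, a]; ring
        have := hp δ hδ hδ2 (ℕ × Bool) (Finset.range (n+1) ×ˢ Finset.univ) c a τ hτ0 (fun i _ => haτ i) (by
            rw [Finset.sum_product]
            simp_rw [Fintype.sum_bool]
            simp only [c, if_true, Bool.false_eq_true, if_false, abs_neg]
            rw [Finset.sum_add_distrib]; linarith) (fun x hx => by
            apply qfin hs0.le hsm hτ0 hx
            rw [hqh]
            exact mid_bound ht0.le hτ0.le hx.le)
        simp only [F, h0, h1, if_false, if_true]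
        simp_rw [hFF] at this
        refine this.trans (ENNReal.ofReal_le_ofReal ?_)
        refine mul_le_mul_of_nonneg_right ?_ (by positivity)
        exact le_mul_of_one_le_right (by positivity) h2γ
      · have hjJ : j = J + 1 := by rw [Finset.mem_range] at hj; omega
        let a : Option ℕ → ℝ := fun i => i.elim t (fun i => t + ((i:ℝ)+1)*t)
        let c : Option ℕ → ℝ := fun i => i.elim 1 (fun i => -cb (n+1) i)
        have haτ : ∀ i, t ≤ a i := by
          intro i
          rcases i with _ | i
          · simp [a]
          · simp only [a, Option.elim]
            have : 0 ≤ ((i:ℝ)+1)*t := by positivity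
            linarith
        have hqh : ∀ x, qh (Finset.insertNone (Finset.range (n+1))) c a x = Real.exp (-(t*x)) - Real.exp (-(t*x)) * (1 - (1 - Real.exp (-(t*x)))^(n+1)) := by
          intro x
          rw [← qh_base]
          unfold qh
          rw [Finset.sum_insertNone, sub_eq_add_neg, ← Finset.sum_neg_distrib]
          simp [c, a]
        have hFF : ∀ A z, FF μ (Finset.insertNone (Finset.range (n+1))) c a A z = Lam μ t A z - V t (A,z) := by
          intro A z
          simp only [V]
          rw [FF_expand _ _ _ (fun i _ => ht0.trans_le (haτ i)), FF_expand _ _ _ (fun i _ => by positivity),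
            Finset.sum_insertNone, sub_eq_add_neg, ← Finset.sum_neg_distrib]
          simp [c, a]
        have := hp δ hδ hδ2 (Option ℕ) (Finset.insertNone (Finset.range (n+1))) c a t ht0 (fun i _ => haτ i) (by
            rw [Finset.sum_insertNone]
            simp only [c, Option.elim, abs_neg, abs_one]
            linarith) (fun x hx => by
            apply qfin hs0.le hsm ht0 hx
            rw [hqh]
            exact last_bound ht0.le hx.le)
        simp only [F, h0, h1, if_false]
        simp_rw [hFF] at this
        refine this.trans (ENNReal.ofReal_le_ofReal (le_of_eq ?_))
        rw [hjJ, mul_assoc (C1 * δ^D), ← Real.mul_rpow (by norm_num) (by positivity), ht]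
        congr 2
        rw [pow_succ]; ring
  have := mink ((volume.restrict N).prod volume) (k+1) (by omega) (J+2) F hF (C1 * δ^D * 2^γ) r (by positivity) hr0.le hr1 hh
  simp_rw [hsum] at this
  rw [conv _ hL] at this
  have hLn : ∀ A z, |Lam μ t A z| = Lam μ t A z := fun A z => abs_of_nonneg (integral_nonneg fun p => gK_nonneg ht0 _)
  simp only [hLn] at this
  refine this.trans (ENNReal.ofReal_le_ofReal (le_of_eq ?_))
  ring

def Xm {d : ℕ} (x : Fin (d+1) → Pt d) : Matrix (Fin d) (Fin d) ℝ := Matrix.of fun a i => (x i.succ - x 0) a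

def nm {d : ℕ} (X : Matrix (Fin d) (Fin d) ℝ) : ℝ := ∑ i, ∑ j, |X i j|

lemma nm_entry {d : ℕ} (X : Matrix (Fin d) (Fin d) ℝ) (i j : Fin d) : |X i j| ≤ nm X := by
  unfold nm
  calc |X i j| ≤ ∑ j, |X i j| := Finset.single_le_sum (f := fun j => |X i j|) (fun _ _ => abs_nonneg _) (Finset.mem_univ j)
    _ ≤ _ := Finset.single_le_sum (f := fun i => ∑ j, |X i j|) (fun _ _ => Finset.sum_nonneg fun _ _ => abs_nonneg _) (Finset.mem_univ i)

lemma nm_nonneg {d : ℕ} (X : Matrix (Fin d) (Fin d) ℝ) : 0 ≤ nm X :=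
  Finset.sum_nonneg fun _ _ => Finset.sum_nonneg fun _ _ => abs_nonneg _

lemma nm_transpose {d : ℕ} (X : Matrix (Fin d) (Fin d) ℝ) : nm X.transpose = nm X := by
  unfold nm; rw [Finset.sum_comm]; rfl

lemma nm_mul {d : ℕ} (X Y : Matrix (Fin d) (Fin d) ℝ) : nm (X * Y) ≤ nm X * nm Y := by
  have h1 : nm (X * Y) ≤ ∑ i, ∑ j, ∑ k, |X i k| * |Y k j| := by
    unfold nm
    refine Finset.sum_le_sum fun i _ => Finset.sum_le_sum fun j _ => ?_
    rw [Matrix.mul_apply]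
    refine (Finset.abs_sum_le_sum_abs _ _).trans (le_of_eq ?_)
    simp_rw [abs_mul]
  refine h1.trans ?_
  calc _ = ∑ i, ∑ k, |X i k| * ∑ j, |Y k j| := by
        refine Finset.sum_congr rfl fun i _ => ?_
        rw [Finset.sum_comm]
        simp_rw [Finset.mul_sum]
    _ ≤ ∑ i, ∑ k, |X i k| * nm Y := by
        gcongr with i _ k _
        exact Finset.single_le_sum (f := fun i => ∑ j, |Y i j|) (fun _ _ => Finset.sum_nonneg fun _ _ => abs_nonneg _) (Finset.mem_univ k)
    _ = _ := by
        simp_rw [← Finset.sum_mul]; rfl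

lemma nm_le {d : ℕ} (X : Matrix (Fin d) (Fin d) ℝ) {B : ℝ} (h : ∀ i j, |X i j| ≤ B) : nm X ≤ d^2 * B := by
  unfold nm
  calc _ ≤ ∑ i : Fin d, ∑ j : Fin d, B := Finset.sum_le_sum fun i _ => Finset.sum_le_sum fun j _ => h i j
    _ = _ := by simp; ring

lemma Xm_continuous {d : ℕ} : Continuous (Xm (d := d)) := by
  unfold Xm
  refine continuous_matrix fun i j => ?_
  simp only [Matrix.of_apply]
  fun_prop

lemma nm_continuous {d : ℕ} : Continuous (nm (d := d)) := by
  unfold nm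
  refine continuous_finsetSum _ fun i _ => continuous_finsetSum _ fun j _ => ?_
  exact (continuous_id.matrix_elem i j).abs

lemma Xm_inv_cont {d : ℕ} {K : Set (Fin (d+1) → Pt d)} (hK : ∀ x ∈ K, (Xm x).det ≠ 0) :
    ContinuousOn (fun x => (Xm x)⁻¹) K := by
  simp_rw [Matrix.inv_def, Ring.inverse_eq_inv']
  have h := Xm_continuous (d := d)
  refine ContinuousOn.smul (ContinuousOn.inv₀ h.matrix_det.continuousOn hK) h.matrix_adjugate.continuousOn

lemma Nondeg_iff {d : ℕ} (x : Fin (d+1) → Pt d) : Nondeg d d x ↔ (Xm x).det ≠ 0 := by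
  unfold Nondeg
  rw [← isUnit_iff_ne_zero, ← Matrix.isUnit_iff_isUnit_det, ← Matrix.linearIndependent_cols_iff_isUnit]
  have := (WithLp.linearEquiv 2 ℝ (Fin d → ℝ)).toLinearMap.linearIndependent_iff (v := fun i : Fin d => x i.succ - x 0) (LinearEquiv.ker _)
  rw [← this]
  rfl

lemma bdd_on {α : Type*} [TopologicalSpace α] {K : Set α} (hK : IsCompact K) {f : α → ℝ} (hf : ContinuousOn f K) :
    ∃ M : ℝ, ∀ x ∈ K, f x ≤ M := by
  obtain ⟨M, hM⟩ := hK.bddAbove_image hf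
  exact ⟨M, fun x hx => hM (mem_image_of_mem f hx)⟩

lemma norm_le_coord {d : ℕ} (v : Pt d) {t : ℝ} (ht : 0 ≤ t) (h : ∀ i, |v i| ≤ t) : ‖v‖ ≤ d * t := by
  apply abs_le_of_sq_le_sq' _ (by positivity) |>.2
  rw [EuclideanSpace.norm_sq_eq]
  calc _ ≤ ∑ i : Fin d, t^2 := Finset.sum_le_sum fun i _ => by rw [Real.norm_eq_abs]; gcongr; exact h i
    _ = d * t^2 := by simp
    _ ≤ _ := by
      rw [mul_pow]
      gcongr
      rcases Nat.eq_zero_or_pos d with rfl | hd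
      · simp
      · have : (1:ℝ) ≤ d := by exact_mod_cast hd
        nlinarith

lemma gram_id {d : ℕ} (X Y Xi Yi : Matrix (Fin d) (Fin d) ℝ) (r : ℝ) (hX : X * Xi = 1) (hY : Y * Yi = 1) :
    (X * Yi) * (X * Yi).transpose - r • (1 : Matrix (Fin d) (Fin d) ℝ) =
      X * (Yi * (Yi.transpose * ((X.transpose * X - r • (Y.transpose * Y)) * Xi))) := by
  have hY' : Yi * Y = 1 := mul_eq_one_comm.1 hY
  have hYt : Yi.transpose * Y.transpose = 1 := by rw [← Matrix.transpose_mul, hY, Matrix.transpose_one]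
  rw [Matrix.transpose_mul, Matrix.sub_mul, Matrix.mul_sub, Matrix.mul_sub, Matrix.mul_sub]
  congr 1
  · rw [Matrix.mul_assoc X.transpose X Xi, hX, Matrix.mul_one]
    simp only [Matrix.mul_assoc]
  · simp only [Matrix.smul_mul, Matrix.mul_smul]
    congr 1
    rw [Matrix.mul_assoc Y.transpose Y Xi, ← Matrix.mul_assoc Yi.transpose, hYt, Matrix.one_mul, ← Matrix.mul_assoc Yi, hY', Matrix.one_mul, hX]

lemma unif_bds {n : ℕ} {K : Set (Fin (n+2) → Pt (n+1))} (hK : IsCompact K) (hKd : ∀ x ∈ K, (Xm x).det ≠ 0) :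
    ∃ M : ℝ, 1 ≤ M ∧ ∀ x ∈ K, nm (Xm x) ≤ M ∧ nm (Xm x)⁻¹ ≤ M ∧ 0 < dist (x 0) (x 1) ∧ (dist (x 0) (x 1))⁻¹ ≤ M ∧
      (∀ i j, dist (x i) (x j) ≤ M) ∧ (∀ i, ‖x i‖ ≤ M) := by
  have hpos : ∀ x ∈ K, 0 < dist (x 0) (x 1) := by
    intro x hx
    rw [dist_pos]
    intro h
    have hn := (Nondeg_iff x).2 (hKd x hx)
    have := LinearIndependent.ne_zero (0 : Fin (n+1)) hn
    apply this
    rw [sub_eq_zero]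
    exact h.symm
  obtain ⟨M1, h1⟩ := bdd_on hK (f := fun x => nm (Xm x)) (nm_continuous.comp Xm_continuous).continuousOn
  obtain ⟨M2, h2⟩ := bdd_on hK (f := fun x => nm (Xm x)⁻¹) (nm_continuous.comp_continuousOn (Xm_inv_cont hKd))
  obtain ⟨M3, h3⟩ := bdd_on hK (f := fun x => (dist (x 0) (x 1))⁻¹) (ContinuousOn.inv₀ (by fun_prop) fun x hx => (hpos x hx).ne')
  obtain ⟨M4, h4⟩ := bdd_on hK (f := fun x => ∑ i, ‖x i‖) (by fun_prop)
  have h5 : ∀ x ∈ K, ∀ i, ‖x i‖ ≤ M4 := fun x hx i =>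
    (Finset.single_le_sum (f := fun i => ‖x i‖) (fun _ _ => norm_nonneg _) (Finset.mem_univ i)).trans (h4 x hx)
  refine ⟨1 + |M1| + |M2| + |M3| + 2 * |M4|, ?_, ?_⟩
  · have := abs_nonneg M1; have := abs_nonneg M2; have := abs_nonneg M3; have := abs_nonneg M4
    linarith
  intro x hx
  have a1 := abs_nonneg M1; have a2 := abs_nonneg M2; have a3 := abs_nonneg M3; have a4 := abs_nonneg M4
  have b1 := le_abs_self M1; have b2 := le_abs_self M2; have b3 := le_abs_self M3; have b4 := le_abs_self M4
  have c1 := h1 x hx; have c2 := h2 x hx; have c3 := h3 x hx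
  refine ⟨by linarith, by linarith, hpos x hx, by linarith, ?_, ?_⟩
  · intro i j
    have := h5 x hx i; have := h5 x hx j
    rw [dist_eq_norm]
    have := norm_sub_le (x i) (x j)
    linarith
  · intro i
    have := h5 x hx i
    linarith

lemma gram_close {n : ℕ} {M ε : ℝ} (hM : 1 ≤ M) (hε : 0 < ε) (x y : Fin (n+2) → Pt (n+1))
    (hx0 : 0 < dist (x 0) (x 1)) (hy0 : 0 < dist (y 0) (y 1))
    (hxi : (dist (x 0) (x 1))⁻¹ ≤ M) (hyi : (dist (y 0) (y 1))⁻¹ ≤ M)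
    (hxM : ∀ i j, dist (x i) (x j) ≤ M) (hyM : ∀ i j, dist (y i) (y j) ≤ M)
    (h : ‖simMap (n+1) (n+1) x - simMap (n+1) (n+1) y‖ ≤ ε) (a b : Fin (n+1)) :
    |((Xm x).transpose * Xm x - ((dist (x 0) (x 1) / dist (y 0) (y 1))^2) • ((Xm y).transpose * Xm y)) a b| ≤ 3 * M^4 * ε := by
  set r := dist (x 0) (x 1) / dist (y 0) (y 1) with hr
  have key : ∀ i j, i < j → |dist (x i) (x j)^2 - r^2 * dist (y i) (y j)^2| ≤ 2 * M^4 * ε := by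
    intro i j hij
    by_cases h01 : (i, j) = ((0 : Fin (n+2)), (1 : Fin (n+2)))
    · rw [Prod.mk.injEq] at h01
      obtain ⟨rfl, rfl⟩ := h01
      rw [hr, div_pow, div_mul_cancel₀ _ (by positivity), sub_self, abs_zero]
      positivity
    · have h1 := (norm_le_pi_norm _ (⟨(i,j), hij, h01⟩ : PairIdx' (n+1))).trans h
      simp only [Pi.sub_apply, simMap, Real.norm_eq_abs] at h1
      set α := dist (x i) (x j) / dist (x 0) (x 1) with hα
      set β := dist (y i) (y j) / dist (y 0) (y 1) with hβ
      have hα0 : 0 ≤ α := by positivity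
      have hβ0 : 0 ≤ β := by positivity
      have hαM : α ≤ M^2 := by
        rw [hα, div_eq_mul_inv, sq]; exact mul_le_mul (hxM i j) hxi (by positivity) (by linarith)
      have hβM : β ≤ M^2 := by
        rw [hβ, div_eq_mul_inv, sq]; exact mul_le_mul (hyM i j) hyi (by positivity) (by linarith)
      have e : dist (x i) (x j)^2 - r^2 * dist (y i) (y j)^2 = dist (x 0) (x 1)^2 * ((α - β) * (α + β)) := by
        rw [hr, hα, hβ]; field_simp; ring
      rw [e, abs_mul, abs_mul, abs_of_nonneg (sq_nonneg (dist (x 0) (x 1))), abs_of_nonneg (add_nonneg hα0 hβ0)]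
      calc _ ≤ M^2 * (ε * (M^2 + M^2)) := by
            gcongr
            exact hxM 0 1
        _ = _ := by ring
  have key2 : ∀ i j, |dist (x i) (x j)^2 - r^2 * dist (y i) (y j)^2| ≤ 2 * M^4 * ε := by
    intro i j
    rcases lt_trichotomy i j with h1 | h1 | h1
    · exact key i j h1
    · subst h1; simp; positivity
    · rw [dist_comm (x i), dist_comm (y i)]; exact key j i h1
  have ip : ∀ w : Fin (n+2) → Pt (n+1), ((Xm w).transpose * Xm w) a b = (dist (w a.succ) (w 0)^2 + dist (w b.succ) (w 0)^2 - dist (w a.succ) (w b.succ)^2)/2 := by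
    intro w
    have h1 : ((Xm w).transpose * Xm w) a b = inner ℝ (w a.succ - w 0) (w b.succ - w 0) := by
      rw [Matrix.mul_apply, PiLp.inner_apply]
      refine Finset.sum_congr rfl fun i _ => ?_
      simp [Xm, mul_comm]
    rw [h1, real_inner_eq_norm_mul_self_add_norm_mul_self_sub_norm_sub_mul_self_div_two, sub_sub_sub_cancel_right]
    simp only [dist_eq_norm]; ring
  rw [Matrix.sub_apply, Matrix.smul_apply, ip, ip, smul_eq_mul]
  have k1 := key2 a.succ 0
  have k2 := key2 b.succ 0
  have k3 := key2 a.succ b.succ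
  rw [abs_le] at k1 k2 k3 ⊢
  constructor <;> linarith [k1.1, k1.2, k2.1, k2.2, k3.1, k3.2]

lemma count_geom {n : ℕ} {K : Set (Fin (n+2) → Pt (n+1))} (hK : IsCompact K) (hKd : ∀ x ∈ K, (Xm x).det ≠ 0) :
    ∃ ρ₀ ρ₁ C ε₀ : ℝ, 0 < ρ₀ ∧ 0 ≤ ρ₁ ∧ 0 < C ∧ 0 < ε₀ ∧ ∀ ε, 0 < ε → ε ≤ ε₀ → ∀ x ∈ K, ∀ y ∈ K,
      ‖simMap (n+1) (n+1) x - simMap (n+1) (n+1) y‖ ≤ ε →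
      ∃ (A₀ : Fin (n+1) → Pt (n+1)) (z₀ : Pt (n+1)), ∀ A z, (∀ i, ‖A i - A₀ i‖ ≤ ε) → ‖z - z₀‖ ≤ ε →
        A ∈ NN (n+1) ρ₀ ρ₁ (C * ε) ∧ ∀ i, ‖x i - actA A (y i) - z‖ ≤ C * ε := by
  obtain ⟨M, hM, hb⟩ := unif_bds hK hKd
  set C2 : ℝ := M * (M * (M * (((n+1:ℕ):ℝ)^2 * (3 * M^4) * M))) with hC2
  have hC20 : 0 < C2 := by positivity
  set C3 := C2 + 3 * M^2 with hC3
  have hC30 : 0 < C3 := by positivity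
  refine ⟨1/(2*M^4), M^4 + 1, 2 * C3 + ((n+1:ℕ):ℝ) * M + 1, min 1 (1/(2*M^4*C3)), by positivity, by positivity, by positivity, by positivity, ?_⟩
  intro ε hε hε0 x hx y hy hxy
  have hε1 : ε ≤ 1 := hε0.trans (min_le_left _ _)
  have hε2 : C3 * ε ≤ 1/(2*M^4) := by
    have := hε0.trans (min_le_right _ _)
    calc C3 * ε ≤ C3 * (1/(2*M^4*C3)) := by gcongr
      _ = _ := by field_simp
  obtain ⟨x1, x2, x3, x4, x5, x6⟩ := hb x hx
  obtain ⟨y1, y2, y3, y4, y5, y6⟩ := hb y hy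
  have hg := gram_close hM hε x y x3 y3 x4 y4 x5 y5 hxy
  set r := dist (x 0) (x 1) / dist (y 0) (y 1) with hr
  have hXu : Xm x * (Xm x)⁻¹ = 1 := Matrix.mul_nonsing_inv _ (isUnit_iff_ne_zero.2 (hKd x hx))
  have hYu : Xm y * (Xm y)⁻¹ = 1 := Matrix.mul_nonsing_inv _ (isUnit_iff_ne_zero.2 (hKd y hy))
  have hYu' : (Xm y)⁻¹ * Xm y = 1 := Matrix.nonsing_inv_mul _ (isUnit_iff_ne_zero.2 (hKd y hy))
  have hid := gram_id (Xm x) (Xm y) (Xm x)⁻¹ (Xm y)⁻¹ (r^2) hXu hYu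
  set B := Xm x * (Xm y)⁻¹ with hB
  have hBM : nm B ≤ M^2 := (nm_mul _ _).trans (by rw [sq]; exact mul_le_mul x1 y2 (nm_nonneg _) (by linarith))
  have hgram : nm (B * B.transpose - r^2 • (1 : Matrix (Fin (n+1)) (Fin (n+1)) ℝ)) ≤ C2 * ε := by
    rw [hid]
    have hH := nm_le _ hg
    set H := (Xm x).transpose * Xm x - r^2 • ((Xm y).transpose * Xm y)
    have s1 : nm (H * (Xm x)⁻¹) ≤ ((n+1:ℕ):ℝ)^2 * (3 * M^4 * ε) * M := (nm_mul _ _).trans (mul_le_mul hH x2 (nm_nonneg _) (by positivity))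
    have yt : nm (Xm y)⁻¹.transpose ≤ M := by rw [nm_transpose]; exact y2
    have s2 := (nm_mul (Xm y)⁻¹.transpose (H * (Xm x)⁻¹)).trans (mul_le_mul yt s1 (nm_nonneg _) (by linarith))
    have s3 := (nm_mul (Xm y)⁻¹ ((Xm y)⁻¹.transpose * (H * (Xm x)⁻¹))).trans (mul_le_mul y2 s2 (nm_nonneg _) (by linarith))
    have s4 := (nm_mul (Xm x) _).trans (mul_le_mul x1 s3 (nm_nonneg _) (by linarith))
    refine s4.trans (le_of_eq ?_)
    rw [hC2]; ring
  let A₀ : Fin (n+1) → Pt (n+1) := fun i => WithLp.toLp 2 (fun j => B i j)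
  have hA0g : ∀ i j, inner ℝ (A₀ i) (A₀ j) = (B * B.transpose) i j := by
    intro i j
    rw [Matrix.mul_apply, PiLp.inner_apply]
    refine Finset.sum_congr rfl fun l _ => ?_
    simp [A₀, mul_comm]
  have hA0n : ∀ i, ‖A₀ i‖ ≤ M^2 := by
    intro i
    apply abs_le_of_sq_le_sq' _ (by positivity) |>.2
    rw [← real_inner_self_eq_norm_sq, hA0g]
    calc _ ≤ nm (B * B.transpose) := (le_abs_self _).trans (nm_entry _ _ _)
      _ ≤ nm B * nm B := (nm_mul _ _).trans (by rw [nm_transpose])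
      _ ≤ M^2 * M^2 := mul_le_mul hBM hBM (nm_nonneg _) (by positivity)
      _ = _ := by ring
  have hA0act : ∀ i : Fin (n+1), actA A₀ (y i.succ) - actA A₀ (y 0) = x i.succ - x 0 := by
    intro i
    ext a
    have h1 : (B * Xm y) a i = Xm x a i := by rw [hB, Matrix.mul_assoc, hYu', Matrix.mul_one]
    rw [Matrix.mul_apply] at h1
    have h2 : (x i.succ - x 0) a = Xm x a i := rfl
    rw [h2, ← h1]
    simp only [actA, PiLp.sub_apply, PiLp.inner_apply, A₀, ← Finset.sum_sub_distrib]
    refine Finset.sum_congr rfl fun l _ => ?_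
    simp [Xm]; ring
  have hz0 : ∀ i, x i = actA A₀ (y i) + (x 0 - actA A₀ (y 0)) := by
    intro i
    refine Fin.cases ?_ (fun i => ?_) i
    · abel
    · have := hA0act i
      have h3 : actA A₀ (y i.succ) = actA A₀ (y 0) + (x i.succ - x 0) := by rw [← this]; abel
      rw [h3]; abel
  refine ⟨A₀, x 0 - actA A₀ (y 0), ?_⟩
  intro A z hA hz
  have hM2 : 1 ≤ M^2 := one_le_pow₀ hM
  have hAg : ∀ i j, |inner ℝ (A i) (A j) - (r^2 • (1 : Matrix (Fin (n+1)) (Fin (n+1)) ℝ)) i j| ≤ C3 * ε := by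
    intro i j
    have h1 : |inner ℝ (A₀ i) (A₀ j) - (r^2 • (1 : Matrix (Fin (n+1)) (Fin (n+1)) ℝ)) i j| ≤ C2 * ε := by
      rw [hA0g]; exact (nm_entry (B * B.transpose - r^2 • (1 : Matrix (Fin (n+1)) (Fin (n+1)) ℝ)) i j).trans hgram
    have h2 : |inner ℝ (A i) (A j) - inner ℝ (A₀ i) (A₀ j)| ≤ 3 * M^2 * ε := by
      have e : inner ℝ (A i) (A j) - inner ℝ (A₀ i) (A₀ j) = inner ℝ (A i - A₀ i) (A j) + inner ℝ (A₀ i) (A j - A₀ j) := by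
        rw [inner_sub_left, inner_sub_right]; ring
      rw [e]
      have hAj : ‖A j‖ ≤ M^2 + 1 := by
        have := norm_add_le (A j - A₀ j) (A₀ j)
        rw [sub_add_cancel] at this
        have := hA j; have := hA0n j
        linarith
      calc _ ≤ ‖A i - A₀ i‖ * ‖A j‖ + ‖A₀ i‖ * ‖A j - A₀ j‖ :=
            (abs_add_le _ _).trans (add_le_add (abs_real_inner_le_norm _ _) (abs_real_inner_le_norm _ _))
        _ ≤ ε * (M^2 + 1) + M^2 * ε := by
            gcongr
            · exact hA i
            · exact hA0n i
            · exact hA j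
        _ ≤ _ := by nlinarith
    calc _ ≤ |inner ℝ (A i) (A j) - inner ℝ (A₀ i) (A₀ j)| + |inner ℝ (A₀ i) (A₀ j) - (r^2 • (1 : Matrix (Fin (n+1)) (Fin (n+1)) ℝ)) i j| := abs_sub_le _ _ _
      _ ≤ 3 * M^2 * ε + C2 * ε := add_le_add h2 h1
      _ = _ := by rw [hC3]; ring
  have hdiag : ∀ i, |‖A i‖^2 - r^2| ≤ C3 * ε := by
    intro i
    have := hAg i i
    simpa using this
  have hn1 : 0 ≤ ((n+1:ℕ):ℝ) * M * ε := by positivity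
  have hr0 : 0 < r := by positivity
  have hrM : r ≤ M^2 := by
    rw [hr, div_eq_mul_inv, sq]; exact mul_le_mul (x5 0 1) y4 (by positivity) (by linarith)
  have hrM' : 1/M^2 ≤ r := by
    have h1 : 1/M ≤ dist (x 0) (x 1) := by
      rw [one_div]; exact inv_le_of_inv_le₀ x3 x4
    have h2 : 1/M ≤ (dist (y 0) (y 1))⁻¹ := by
      rw [one_div]; exact inv_anti₀ y3 (y5 0 1)
    calc 1/M^2 = (1/M) * (1/M) := by ring
      _ ≤ dist (x 0) (x 1) * (dist (y 0) (y 1))⁻¹ := mul_le_mul h1 h2 (by positivity) (by positivity)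
      _ = r := by rw [hr, div_eq_mul_inv]
  have hr2 : r^2 ≤ M^4 := by calc r^2 ≤ (M^2)^2 := by gcongr
                               _ = _ := by ring
  have hr2' : 1/M^4 ≤ r^2 := by calc 1/M^4 = (1/M^2)^2 := by rw [div_pow]; ring
                               _ ≤ _ := by gcongr
  have hM4 : 1 ≤ M^4 := one_le_pow₀ hM
  have hM4' : 1/(2*M^4) ≤ 1 := by rw [div_le_one (by positivity)]; linarith
  refine ⟨⟨?_, ?_, ?_⟩, ?_⟩
  · intro i j hij
    have := hAg i j
    rw [Matrix.smul_apply, Matrix.one_apply_ne hij, smul_zero, sub_zero] at this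
    have h3 := mul_pos hC30 hε
    have h4 : (2 * C3 + ((n+1:ℕ):ℝ) * M + 1) * ε = 2 * (C3 * ε) + ((n+1:ℕ):ℝ) * M * ε + ε := by ring
    rw [h4]
    linarith
  · intro i j
    have h1 := hdiag i; have h2 := hdiag j
    rw [abs_le] at h1 h2 ⊢
    have : 2 * C3 * ε ≤ (2 * C3 + ((n+1:ℕ):ℝ) * M + 1) * ε := by nlinarith
    constructor <;> linarith [h1.1, h1.2, h2.1, h2.2]
  · intro i
    have h1 := hdiag i
    rw [abs_le] at h1
    have : 1/M^4 = 1/(2*M^4) + 1/(2*M^4) := by field_simp; norm_num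
    constructor <;> linarith [h1.1, h1.2]
  · intro i
    have e : x i - actA A (y i) - z = actA (A₀ - A) (y i) + ((x 0 - actA A₀ (y 0)) - z) := by
      have : actA (A₀ - A) (y i) = actA A₀ (y i) - actA A (y i) := by
        ext a; simp only [actA, Pi.sub_apply, inner_sub_left, PiLp.sub_apply]
      rw [this]
      conv_lhs => rw [hz0 i]
      abel
    rw [e]
    have h1 : ‖actA (A₀ - A) (y i)‖ ≤ ((n+1:ℕ):ℝ) * (ε * M) := by
      apply norm_le_coord _ (by positivity)
      intro a
      simp only [actA, Pi.sub_apply]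
      refine (abs_real_inner_le_norm _ _).trans ?_
      rw [norm_sub_rev]
      exact mul_le_mul (hA a) (y6 i) (norm_nonneg _) hε.le
    have h2 : ‖(x 0 - actA A₀ (y 0)) - z‖ ≤ ε := by rw [norm_sub_rev]; exact hz
    refine (norm_add_le _ _).trans ((add_le_add h1 h2).trans ?_)
    have h3 := mul_pos hC30 hε
    have h4 : (2 * C3 + ((n+1:ℕ):ℝ) * M + 1) * ε = 2 * (C3 * ε) + ((n+1:ℕ):ℝ) * (ε * M) + ε := by ring
    rw [h4]
    linarith

lemma pos_vol {ι : Type*} [Fintype ι] (ν : Measure (ι → ℝ)) [IsFiniteMeasure ν] (Z : Set (ι → ℝ)) (hZ : IsCompact Z)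
    (hνZ : ν Zᶜ = 0) (hν : ν univ ≠ 0) (C : ℝ) (j0 : ℕ)
    (h : ∀ j, j0 ≤ j → (ν.prod ν) {p | dist p.1 p.2 ≤ (1/2)^j} ≤ ENNReal.ofReal (C * ((1/2)^j)^(Fintype.card ι))) :
    0 < (volume : Measure (ι → ℝ)) Z := by
  have step : ∀ j, j0 ≤ j → (ν univ)^2 ≤ ENNReal.ofReal C * volume (cthickening ((1/2)^j) Z) := by
    intro j hj
    set ε : ℝ := (1/2)^j with hε
    have hε0 : 0 < ε := by positivity
    set D := Fintype.card ι
    have hvol : ∀ ω : ι → ℝ, volume (closedBall ω (ε/2)) = ENNReal.ofReal (ε^D) := by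
      intro ω
      rw [Real.volume_pi_closedBall _ (by positivity)]
      congr 2; ring
    have hU : MeasurableSet (cthickening ε Z) := isClosed_cthickening.measurableSet
    set f : (ι → ℝ) → ℝ≥0∞ := fun τ => ν (closedBall τ (ε/2)) with hf
    have hcl : MeasurableSet {p : (ι → ℝ) × (ι → ℝ) | dist p.2 p.1 ≤ ε/2} :=
      (isClosed_le (by fun_prop) (by fun_prop)).measurableSet
    have hfm : Measurable f := measurable_measure_prodMk_left hcl
    have h1 : ∫⁻ τ, f τ = ENNReal.ofReal (ε^D) * ν univ := by
      have e1 := Measure.prod_apply (μ := (volume : Measure (ι → ℝ))) (ν := ν) hcl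
      have e2 := Measure.prod_apply_symm (μ := (volume : Measure (ι → ℝ))) (ν := ν) hcl
      have e3 : ∫⁻ τ, f τ = ∫⁻ x, ν (Prod.mk x ⁻¹' {p : (ι → ℝ) × (ι → ℝ) | dist p.2 p.1 ≤ ε/2}) := rfl
      rw [e3, ← e1, e2]
      calc _ = ∫⁻ y, ENNReal.ofReal (ε^D) ∂ν := by
            congr 1; ext y
            rw [← hvol y]
            congr 1; ext x
            simp [dist_comm]
        _ = _ := by simp
    have h2 : ∀ τ, τ ∉ cthickening ε Z → f τ = 0 := by
      intro τ hτ
      refine measure_mono_null ?_ hνZ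
      intro ω hω hωZ
      apply hτ
      refine mem_cthickening_of_dist_le τ ω ε Z hωZ ?_
      rw [mem_closedBall, dist_comm] at hω
      linarith
    have h3 : ∫⁻ τ, f τ ^ (2:ℝ) ≤ ENNReal.ofReal (ε^D) * ENNReal.ofReal (C * ε^D) := by
      have hcl3 : MeasurableSet {q : (ι → ℝ) × ((ι → ℝ) × (ι → ℝ)) | dist q.2.1 q.1 ≤ ε/2 ∧ dist q.2.2 q.1 ≤ ε/2} :=
        MeasurableSet.inter (s₁ := {q : (ι → ℝ) × ((ι → ℝ) × (ι → ℝ)) | dist q.2.1 q.1 ≤ ε/2})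
          (s₂ := {q : (ι → ℝ) × ((ι → ℝ) × (ι → ℝ)) | dist q.2.2 q.1 ≤ ε/2})
          (isClosed_le (by fun_prop) (by fun_prop)).measurableSet (isClosed_le (by fun_prop) (by fun_prop)).measurableSet
      have e1 := Measure.prod_apply (μ := (volume : Measure (ι → ℝ))) (ν := ν.prod ν) hcl3
      have e2 := Measure.prod_apply_symm (μ := (volume : Measure (ι → ℝ))) (ν := ν.prod ν) hcl3
      have e3 : ∫⁻ τ, f τ ^ (2:ℝ) = ∫⁻ x, (ν.prod ν) (Prod.mk x ⁻¹' {q : (ι → ℝ) × ((ι → ℝ) × (ι → ℝ)) | dist q.2.1 q.1 ≤ ε/2 ∧ dist q.2.2 q.1 ≤ ε/2}) := by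
        congr 1; ext τ
        rw [ENNReal.rpow_two, sq, hf]
        simp only
        rw [← Measure.prod_prod]
        rfl
      rw [e3, ← e1, e2]
      have hcl2 : MeasurableSet {p : (ι → ℝ) × (ι → ℝ) | dist p.1 p.2 ≤ ε} :=
        (isClosed_le (by fun_prop) (by fun_prop)).measurableSet
      calc _ ≤ ∫⁻ p, indicator {p : (ι → ℝ) × (ι → ℝ) | dist p.1 p.2 ≤ ε} (fun _ => ENNReal.ofReal (ε^D)) p ∂(ν.prod ν) := by
            refine lintegral_mono fun p => ?_
            by_cases hp : dist p.1 p.2 ≤ ε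
            · rw [indicator_of_mem (by exact hp), ← hvol p.1]
              refine measure_mono fun τ hτ => ?_
              rw [mem_closedBall, dist_comm]
              exact hτ.1
            · rw [indicator_of_notMem (by exact hp)]
              refine le_of_eq ?_
              convert measure_empty (μ := (volume : Measure (ι → ℝ)))
              ext τ
              simp only [mem_preimage, mem_ofPred_eq, mem_empty_iff_false, iff_false, not_and]
              intro h1 h2
              apply hp
              have := dist_triangle_right p.1 p.2 τ
              linarith
        _ = ENNReal.ofReal (ε^D) * (ν.prod ν) {p | dist p.1 p.2 ≤ ε} := by rw [lintegral_indicator_const hcl2]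
        _ ≤ _ := mul_le_mul_right (h j hj) _
    have h4 : ∫⁻ τ, f τ ≤ (∫⁻ τ, f τ ^ (2:ℝ)) ^ (1/(2:ℝ)) * (volume (cthickening ε Z)) ^ (1/(2:ℝ)) := by
      have := ENNReal.lintegral_mul_le_Lp_mul_Lq (volume : Measure (ι → ℝ)) Real.HolderConjugate.two_two hfm.aemeasurable
        (g := indicator (cthickening ε Z) (1 : (ι → ℝ) → ℝ≥0∞)) (measurable_one.indicator hU).aemeasurable
      have e1 : ∫⁻ τ, (f * indicator (cthickening ε Z) (1 : (ι → ℝ) → ℝ≥0∞)) τ = ∫⁻ τ, f τ := by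
        congr 1; ext τ
        by_cases hτ : τ ∈ cthickening ε Z
        · simp [hτ]
        · simp [hτ, h2 τ hτ]
      have e2 : ∫⁻ τ, (indicator (cthickening ε Z) (1 : (ι → ℝ) → ℝ≥0∞) τ) ^ (2:ℝ) = volume (cthickening ε Z) := by
        rw [← lintegral_indicator_one hU]
        congr 1; ext τ
        by_cases hτ : τ ∈ cthickening ε Z
        · simp [hτ]
        · simp [hτ]
      rw [e1, e2] at this
      exact this
    have h5 : (ENNReal.ofReal (ε^D) * ν univ)^2 ≤ (ENNReal.ofReal (ε^D))^2 * (ENNReal.ofReal C * volume (cthickening ε Z)) := by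
      rw [← h1]
      calc _ ≤ ((∫⁻ τ, f τ ^ (2:ℝ)) ^ (1/(2:ℝ)) * (volume (cthickening ε Z)) ^ (1/(2:ℝ)))^2 := by gcongr
        _ = (∫⁻ τ, f τ ^ (2:ℝ)) * volume (cthickening ε Z) := by
            rw [mul_pow, ← ENNReal.rpow_two, ← ENNReal.rpow_two, ← ENNReal.rpow_mul, ← ENNReal.rpow_mul]; norm_num
        _ ≤ (ENNReal.ofReal (ε^D) * ENNReal.ofReal (C * ε^D)) * volume (cthickening ε Z) := by gcongr
        _ = _ := by rw [ENNReal.ofReal_mul' (by positivity)]; ring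
    rw [mul_pow] at h5
    have hne : (ENNReal.ofReal (ε^D))^2 ≠ 0 := by
      apply pow_ne_zero
      rw [ENNReal.ofReal_ne_zero_iff]; positivity
    exact (ENNReal.mul_le_mul_iff_right hne (by finiteness)).1 h5
  have hlim : Filter.Tendsto (fun j : ℕ => volume (cthickening ((1/2:ℝ)^j) Z)) Filter.atTop (𝓝 (volume Z)) := by
    have h1 := tendsto_measure_cthickening_of_isCompact (μ := (volume : Measure (ι → ℝ))) hZ
    exact h1.comp (tendsto_pow_atTop_nhds_zero_of_lt_one (by norm_num) (by norm_num))
  have hlim2 := ENNReal.Tendsto.const_mul (a := ENNReal.ofReal C) hlim (Or.inr ENNReal.ofReal_ne_top)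
  have := ge_of_tendsto hlim2 (Filter.eventually_atTop.2 ⟨j0, fun j hj => step j hj⟩)
  rw [pos_iff_ne_zero]
  intro h0
  rw [h0, mul_zero] at this
  exact hν (pow_eq_zero_iff (two_ne_zero) |>.1 (le_antisymm this (zero_le)))

def cI {d : ℕ} (r : ℝ) (A : Fin d → Pt d) (z x y : Pt d) : ℝ≥0∞ :=
  indicator {w : Pt d | ‖w‖ ≤ r} 1 (x - actA A y - z)

lemma cI_meas {d : ℕ} (r : ℝ) {X : Type*} [MeasurableSpace X] (fA : X → Fin d → Pt d) (fz fx fy : X → Pt d)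
    (hA : Measurable fA) (hz : Measurable fz) (hx : Measurable fx) (hy : Measurable fy) :
    Measurable fun w => cI r (fA w) (fz w) (fx w) (fy w) := by
  unfold cI
  have h1 : Measurable (indicator {w : Pt d | ‖w‖ ≤ r} (1 : Pt d → ℝ≥0∞)) :=
    measurable_one.indicator (isClosed_le (by fun_prop) (by fun_prop)).measurableSet
  have h2 : Measurable fun w => actA (fA w) (fy w) :=
    (actA_continuous (d := d)).measurable.comp (hA.prodMk hy)
  exact h1.comp ((hx.sub h2).sub hz)

lemma cI_one {d : ℕ} {r : ℝ} {A : Fin d → Pt d} {z x y : Pt d} (h : ‖x - actA A y - z‖ ≤ r) : cI r A z x y = 1 := by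
  unfold cI; rw [indicator_of_mem (by exact h)]; rfl

lemma gK_low {d : ℕ} {ε r : ℝ} (hε : 0 < ε) (w : Pt d) (hw : ‖w‖ ≤ r * ε) :
    1 ≤ (Real.exp (r^2/4) / Real.pi^((d:ℝ)/2)) * ε^d * gK d (ε^2) w := by
  unfold gK
  have e1 : (Real.pi/ε^2)^((d:ℝ)/2) = Real.pi^((d:ℝ)/2) / ε^d := by
    rw [Real.div_rpow Real.pi_pos.le (by positivity), ← Real.rpow_natCast ε 2, ← Real.rpow_mul hε.le]
    congr 1
    rw [← Real.rpow_natCast]; congr 1; push_cast; ring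
  rw [e1]
  have hp : 0 < Real.pi^((d:ℝ)/2) := Real.rpow_pos_of_pos Real.pi_pos _
  have e2 : Real.exp (r^2/4) / Real.pi^((d:ℝ)/2) * ε^d * (Real.pi^((d:ℝ)/2) / ε^d * Real.exp (-(‖w‖^2/(4*ε^2)))) =
      Real.exp (r^2/4 - ‖w‖^2/(4*ε^2)) := by
    rw [sub_eq_add_neg, Real.exp_add]; field_simp
  rw [e2]
  refine Real.one_le_exp ?_
  rw [sub_nonneg, div_le_div_iff₀ (by positivity) (by norm_num)]
  have := pow_le_pow_left₀ (norm_nonneg w) hw 2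
  nlinarith

lemma cI_Lam {d : ℕ} {μ m : Measure (Pt d)} [IsProbabilityMeasure μ] [IsFiniteMeasure m] (hm : m ≤ μ) {ε r : ℝ} (hε : 0 < ε)
    (A : Fin d → Pt d) (z : Pt d) :
    ∫⁻ y, ∫⁻ x, cI (r*ε) A z x y ∂m ∂m ≤
      ENNReal.ofReal ((Real.exp (r^2/4) / Real.pi^((d:ℝ)/2)) * ε^d) * ENNReal.ofReal (Lam μ (ε^2) A z) := by
  have hm' : Measurable fun p : Pt d × Pt d => p.1 - actA A p.2 - z := ((nuA_meas A).sub continuous_const).measurable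
  have hp : 0 < Real.pi^((d:ℝ)/2) := Real.rpow_pos_of_pos Real.pi_pos _
  have hg : Measurable fun p : Pt d × Pt d => ENNReal.ofReal (gK d (ε^2) (p.1 - actA A p.2 - z)) :=
    ((gK_continuous (ε^2)).measurable.comp hm').ennreal_ofReal
  calc _ ≤ ∫⁻ y, ∫⁻ x, cI (r*ε) A z x y ∂μ ∂μ := by
        refine lintegral_mono' hm fun y => lintegral_mono' hm le_rfl
    _ ≤ ∫⁻ y, ∫⁻ x, ENNReal.ofReal ((Real.exp (r^2/4) / Real.pi^((d:ℝ)/2)) * ε^d) *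
          ENNReal.ofReal (gK d (ε^2) (x - actA A y - z)) ∂μ ∂μ := by
        refine lintegral_mono fun y => lintegral_mono fun x => ?_
        by_cases h : ‖x - actA A y - z‖ ≤ r * ε
        · rw [cI_one h, ← ENNReal.ofReal_mul (by positivity), ENNReal.one_le_ofReal]
          exact gK_low hε _ h
        · unfold cI
          rw [indicator_of_notMem (by exact h)]
          exact zero_le
    _ = ENNReal.ofReal ((Real.exp (r^2/4) / Real.pi^((d:ℝ)/2)) * ε^d) * ∫⁻ p, ENNReal.ofReal (gK d (ε^2) (p.1 - actA A p.2 - z)) ∂(μ.prod μ) := by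
        rw [lintegral_prod_symm' _ hg, ← lintegral_const_mul' _ _ ENNReal.ofReal_ne_top]
        congr 1; ext y
        rw [lintegral_const_mul' _ _ ENNReal.ofReal_ne_top]
    _ = _ := by
        unfold Lam
        rw [ofReal_integral_eq_lintegral_ofReal (gK_int_fin (by positivity) _ _ hm')
          (Filter.Eventually.of_forall fun p => gK_nonneg (by positivity) _)]

lemma vol_cb {d : ℕ} (x : Pt d) {r : ℝ} (hr : 0 ≤ r) :
    volume (closedBall x r) = ENNReal.ofReal ((volume (ball (0 : Pt d) 1)).toReal * r^d) := by
  rw [Measure.addHaar_closedBall _ _ hr, mul_comm (volume _).toReal, ENNReal.ofReal_mul (by positivity),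
    ENNReal.ofReal_toReal measure_ball_lt_top.ne]
  simp

lemma cI_vol {d : ℕ} {m : Measure (Pt d)} [IsFiniteMeasure m] (hm : m ≤ volume) {ε r : ℝ} (hε : 0 < ε) (hr : 0 < r)
    (A : Fin d → Pt d) (z : Pt d) :
    ∫⁻ y, ∫⁻ x, cI (r*ε) A z x y ∂m ∂m ≤
      ENNReal.ofReal ((volume (ball (0 : Pt d) 1)).toReal * r^d * (m univ).toReal * ε^d) := by
  calc _ ≤ ∫⁻ y, ∫⁻ x, indicator (closedBall (actA A y + z) (r*ε)) (1 : Pt d → ℝ≥0∞) x ∂volume ∂m := by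
        refine lintegral_mono fun y => lintegral_mono' hm fun x => ?_
        unfold cI
        by_cases h : ‖x - actA A y - z‖ ≤ r * ε
        · rw [indicator_of_mem (by exact h), indicator_of_mem]
          · rfl
          · rw [mem_closedBall, dist_eq_norm, ← sub_sub]; exact h
        · rw [indicator_of_notMem (by exact h)]; exact zero_le
    _ = ∫⁻ y, ENNReal.ofReal ((volume (ball (0 : Pt d) 1)).toReal * (r*ε)^d) ∂m := by
        congr 1; ext y
        rw [lintegral_indicator_one isClosed_closedBall.measurableSet, vol_cb _ (by positivity)]
    _ = _ := by
        rw [lintegral_const]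
        nth_rewrite 1 [← ENNReal.ofReal_toReal (measure_ne_top m univ)]
        rw [← ENNReal.ofReal_mul (by positivity)]
        congr 1; ring

lemma pi_cI {n d : ℕ} (m : Fin n → Measure (Pt d)) [∀ i, IsFiniteMeasure (m i)] (r : ℝ) (A : Fin d → Pt d) (z : Pt d) :
    ∫⁻ p, ∏ i, cI r A z (p.1 i) (p.2 i) ∂((Measure.pi m).prod (Measure.pi m)) = ∏ i, ∫⁻ y, ∫⁻ x, cI r A z x y ∂(m i) ∂(m i) := by
  rw [lintegral_prod_symm']
  · have : ∀ y : Fin n → Pt d, ∫⁻ x : Fin n → Pt d, ∏ i, cI r A z (x i) (y i) ∂(Measure.pi m) = ∏ i, ∫⁻ x, cI r A z x (y i) ∂(m i) := by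
      intro y
      exact lintegral_pi_prod m (fun i x => cI r A z x (y i)) fun i => cI_meas _ _ _ _ _ (by fun_prop) (by fun_prop) (by fun_prop) (by fun_prop)
    simp_rw [this]
    refine lintegral_pi_prod m (fun i y => ∫⁻ x, cI r A z x y ∂(m i)) fun i => ?_
    refine Measurable.lintegral_prod_right' (f := fun p : Pt d × Pt d => cI r A z p.2 p.1) ?_
    exact cI_meas _ _ _ _ _ (by fun_prop) (by fun_prop) (by fun_prop) (by fun_prop)
  · refine Finset.measurable_prod _ fun i _ => ?_
    exact cI_meas _ _ _ _ _ (by fun_prop) (by fun_prop) (by fun_prop) (by fun_prop)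

lemma card_le_k {n k : ℕ} (hkn : k ≤ n) : (Finset.univ.filter fun i : Fin (n+1) => i.val ≤ k).card = k+1 := by
  have := Fin.card_filter_val_lt (n := n+1) (m := k+1)
  simp only [Nat.lt_succ_iff] at this
  rw [this]; omega

theorem count_bound (n k : ℕ) (hk : 1 ≤ k) (hkn : k ≤ n+1) {μ : Measure (Pt (n+1))} [IsProbabilityMeasure μ] {s C : ℝ}
    (hC : 0 < C) (hs : s ≤ ((n+1:ℕ):ℝ)) (hs1 : ((n+1:ℕ):ℝ)*k < s*(k+1)) (h : PotB μ s C)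
    (m : Fin (n+2) → Measure (Pt (n+1))) [∀ i, IsFiniteMeasure (m i)]
    (h1 : ∀ i, i.val ≤ k → m i ≤ μ) (h2 : ∀ i, k < i.val → m i ≤ volume)
    {K : Set (Fin (n+2) → Pt (n+1))} (hK : IsCompact K) (hKd : ∀ x ∈ K, (Xm x).det ≠ 0) :
    ∃ (C' : ℝ) (j0 : ℕ), ∀ j, j0 ≤ j → ((Measure.pi m).prod (Measure.pi m))
      {p | p.1 ∈ K ∧ p.2 ∈ K ∧ ‖simMap (n+1) (n+1) p.1 - simMap (n+1) (n+1) p.2‖ ≤ (1/2)^j} ≤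
        ENNReal.ofReal (C' * ((1/2)^j)^(Fintype.card (PairIdx' (n+1)))) := by
  obtain ⟨ρ₀, ρ₁, C1, ε₀, hρ₀, hρ₁, hC1, hε₀, hgeo⟩ := count_geom hK hKd
  obtain ⟨C2, hC2, hlam⟩ := lam_bound n k hk ρ₀ ρ₁ hρ₀ hρ₁ hC hs hs1 h
  set D := Fintype.card (PairIdx' (n+1)) with hD
  set v : ℝ := (volume (ball (0 : Pt (n+1)) 1)).toReal with hv
  have hv0 : 0 < v := ENNReal.toReal_pos (measure_ball_pos _ _ one_pos).ne' measure_ball_lt_top.ne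
  set κ : ℝ := Real.exp (C1^2/4) / Real.pi^(((n+1:ℕ):ℝ)/2) with hκ
  have hκ0 : 0 < κ := div_pos (Real.exp_pos _) (Real.rpow_pos_of_pos Real.pi_pos _)
  set c : ℝ := κ + ∑ i, v * C1^(n+1) * (m i univ).toReal with hc
  have hc0 : 0 < c := add_pos_of_pos_of_nonneg hκ0 (Finset.sum_nonneg fun i _ => by positivity)
  obtain ⟨j0, hj0⟩ : ∃ j0 : ℕ, (1/2:ℝ)^j0 < min ε₀ (ρ₀/2/((n+1:ℕ)^2*C1)) :=
    exists_pow_lt_of_lt_one (lt_min hε₀ (by positivity)) (by norm_num)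
  refine ⟨(c/v)^(n+2) * (C2 * C1^D), j0, fun j hj => ?_⟩
  set ε : ℝ := (1/2)^j with hε
  have hεpos : 0 < ε := by positivity
  have hεle : ε ≤ (1/2:ℝ)^j0 := pow_le_pow_of_le_one (by norm_num) (by norm_num) hj
  have hε1 : ε ≤ ε₀ := hεle.trans (hj0.le.trans (min_le_left _ _))
  have hε2 : (n+1:ℝ)^2 * (C1*ε) ≤ ρ₀/2 := by
    have := hεle.trans (hj0.le.trans (min_le_right _ _))
    rw [le_div_iff₀ (by positivity)] at this
    push_cast at this
    linarith
  have hlam' := hlam (C1*ε) (by positivity) (by exact_mod_cast hε2) (2*j)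
  have ht : (1/2:ℝ)^(2*j) = ε^2 := by rw [hε, ← pow_mul, mul_comm]
  rw [ht] at hlam'
  set N := NN (n+1) ρ₀ ρ₁ (C1*ε) with hN
  set P := Measure.pi m with hP
  set Q : Measure ((Fin (n+1) → Pt (n+1)) × Pt (n+1)) := (volume.restrict N).prod volume with hQ
  set F : ((Fin (n+2) → Pt (n+1)) × (Fin (n+2) → Pt (n+1))) → ((Fin (n+1) → Pt (n+1)) × Pt (n+1)) → ℝ≥0∞ :=
    fun p q => ∏ i, cI (C1*ε) q.1 q.2 (p.1 i) (p.2 i) with hF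
  have hFm : Measurable (Function.uncurry F) := by
    refine Finset.measurable_prod _ fun i _ => ?_
    exact cI_meas _ _ _ _ _ (by fun_prop) (by fun_prop) (by fun_prop) (by fun_prop)
  have hlow : ∀ p : (Fin (n+2) → Pt (n+1)) × (Fin (n+2) → Pt (n+1)), p.1 ∈ K → p.2 ∈ K →
      ‖simMap (n+1) (n+1) p.1 - simMap (n+1) (n+1) p.2‖ ≤ ε →
      (ENNReal.ofReal (v * ε^(n+1)))^(n+2) ≤ ∫⁻ q, F p q ∂Q := by
    intro p hp1 hp2 hp
    obtain ⟨A₀, z₀, hA⟩ := hgeo ε hεpos hε1 p.1 hp1 p.2 hp2 hp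
    set B := (Set.pi univ fun i => closedBall (A₀ i) ε) ×ˢ closedBall z₀ ε with hB
    have hBm : MeasurableSet B :=
      (MeasurableSet.univ_pi fun i => isClosed_closedBall.measurableSet).prod isClosed_closedBall.measurableSet
    have hQB : Q B = (ENNReal.ofReal (v * ε^(n+1)))^(n+2) := by
      rw [hQ, hB, Measure.prod_prod, Measure.restrict_apply (MeasurableSet.univ_pi fun i => isClosed_closedBall.measurableSet),
        inter_eq_left.2, volume_pi_pi]
      · simp_rw [vol_cb _ hεpos.le]
        rw [Finset.prod_const, Finset.card_univ, Fintype.card_fin, ← pow_succ]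
      · intro A hAm
        refine (hA A z₀ (fun i => ?_) (by simpa using hεpos.le)).1
        have := hAm i (mem_univ i)
        rwa [mem_closedBall, dist_eq_norm] at this
    rw [← hQB, ← lintegral_indicator_one hBm]
    refine lintegral_mono fun q => ?_
    by_cases hq : q ∈ B
    · rw [indicator_of_mem hq]
      have := (hA q.1 q.2 (fun i => by
        have := hq.1 i (mem_univ i)
        rwa [mem_closedBall, dist_eq_norm] at this) (by
        have := hq.2
        rwa [mem_closedBall, dist_eq_norm] at this)).2
      rw [hF]
      simp only
      rw [Finset.prod_congr rfl fun i _ => cI_one (this i)]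
      simp
    · rw [indicator_of_notMem hq]; exact zero_le
  have hup : ∀ q : (Fin (n+1) → Pt (n+1)) × Pt (n+1), ∫⁻ p, F p q ∂(P.prod P) ≤
      (ENNReal.ofReal (c * ε^(n+1)))^(n+2) * ENNReal.ofReal ((Lam μ (ε^2) q.1 q.2)^(k+1)) := by
    intro q
    have hL0 : 0 ≤ Lam μ (ε^2) q.1 q.2 := integral_nonneg fun p => gK_nonneg (by positivity) _
    rw [hF, hP, pi_cI]
    calc _ ≤ ∏ i : Fin (n+2), (ENNReal.ofReal (c * ε^(n+1)) * (if i.val ≤ k then ENNReal.ofReal (Lam μ (ε^2) q.1 q.2) else 1)) := by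
          refine Finset.prod_le_prod' fun i _ => ?_
          by_cases hi : i.val ≤ k
          · rw [if_pos hi]
            refine (cI_Lam (h1 i hi) hεpos _ _).trans ?_
            gcongr
            rw [← hκ, hc]
            exact le_add_of_nonneg_right (Finset.sum_nonneg fun i _ => by positivity)
          · rw [if_neg hi, mul_one]
            refine (cI_vol (h2 i (by omega)) hεpos hC1 _ _).trans ?_
            gcongr
            rw [hc]
            have := Finset.single_le_sum (f := fun i => v * C1^(n+1) * (m i univ).toReal) (fun i _ => by positivity) (Finset.mem_univ i)
            linarith
      _ = _ := by
          rw [Finset.prod_mul_distrib, Finset.prod_const, Finset.card_univ, Fintype.card_fin, Finset.prod_ite,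
            Finset.prod_const, Finset.prod_const_one, mul_one, card_le_k hkn, ENNReal.ofReal_pow hL0]
  have hfin : (ENNReal.ofReal (v * ε^(n+1)))^(n+2) * (P.prod P)
      {p | p.1 ∈ K ∧ p.2 ∈ K ∧ ‖simMap (n+1) (n+1) p.1 - simMap (n+1) (n+1) p.2‖ ≤ ε} ≤
      (ENNReal.ofReal (c * ε^(n+1)))^(n+2) * ENNReal.ofReal (C2 * (C1*ε)^D) := by
    calc _ ≤ (ENNReal.ofReal (v * ε^(n+1)))^(n+2) * (P.prod P) {p | (ENNReal.ofReal (v * ε^(n+1)))^(n+2) ≤ ∫⁻ q, F p q ∂Q} := by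
          gcongr with p
          rintro ⟨ha, hb, hc⟩
          exact hlow p ha hb hc
      _ ≤ ∫⁻ p, ∫⁻ q, F p q ∂Q ∂(P.prod P) := mul_meas_ge_le_lintegral₀ hFm.lintegral_prod_right'.aemeasurable _
      _ = ∫⁻ q, ∫⁻ p, F p q ∂(P.prod P) ∂Q := lintegral_lintegral_swap hFm.aemeasurable
      _ ≤ ∫⁻ q, (ENNReal.ofReal (c * ε^(n+1)))^(n+2) * ENNReal.ofReal ((Lam μ (ε^2) q.1 q.2)^(k+1)) ∂Q := lintegral_mono hup
      _ = (ENNReal.ofReal (c * ε^(n+1)))^(n+2) * ∫⁻ q, ENNReal.ofReal ((Lam μ (ε^2) q.1 q.2)^(k+1)) ∂Q :=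
          lintegral_const_mul' _ _ (by finiteness)
      _ = (ENNReal.ofReal (c * ε^(n+1)))^(n+2) * ∫⁻ A in N, ∫⁻ z, ENNReal.ofReal ((Lam μ (ε^2) A z)^(k+1)) := by
          congr 1
          have hL : Measurable fun q : (Fin (n+1) → Pt (n+1)) × Pt (n+1) => Lam μ (ε^2) q.1 q.2 := by
            have : ∀ A z, Lam μ (ε^2) A z = FF μ {()} (fun _ => 1) (fun _ => ε^2) A z := by
              intro A z
              rw [FF_expand _ _ _ (by intros; positivity)]; simp
            simp_rw [this]; exact (FF_meas μ _ _ _).measurable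
          rw [hQ, lintegral_prod _ ((hL.pow_const _).ennreal_ofReal).aemeasurable]
      _ ≤ _ := by gcongr
  have hne : (ENNReal.ofReal (v * ε^(n+1)))^(n+2) ≠ 0 := by
    apply pow_ne_zero
    rw [ENNReal.ofReal_ne_zero_iff]; positivity
  refine (ENNReal.mul_le_mul_iff_right hne (by finiteness)).1 (hfin.trans (le_of_eq ?_))
  rw [← ENNReal.ofReal_pow (by positivity), ← ENNReal.ofReal_pow (by positivity), ← ENNReal.ofReal_mul (by positivity),
    ← ENNReal.ofReal_mul (by positivity)]
  congr 1
  simp only [mul_pow, div_pow]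
  field_simp

lemma simMap_meas (d k : ℕ) : Measurable (simMap d k) := by
  unfold simMap
  refine measurable_pi_lambda _ fun p => ?_
  exact Measurable.div (by fun_prop) (by fun_prop)

theorem top_pos (n k : ℕ) (hk : 1 ≤ k) (hkn : k ≤ n+1) {μ : Measure (Pt (n+1))} [IsProbabilityMeasure μ] {s C : ℝ}
    (hC : 0 < C) (hs : s ≤ ((n+1:ℕ):ℝ)) (hs1 : ((n+1:ℕ):ℝ)*k < s*(k+1)) (h : PotB μ s C)
    (m : Fin (n+2) → Measure (Pt (n+1))) [∀ i, IsFiniteMeasure (m i)]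
    (h1 : ∀ i, i.val ≤ k → m i ≤ μ) (h2 : ∀ i, k < i.val → m i ≤ volume)
    {K : Set (Fin (n+2) → Pt (n+1))} (hK : IsCompact K) (hKd : ∀ x ∈ K, (Xm x).det ≠ 0)
    (hm0 : Measure.pi m Kᶜ = 0) (hm1 : Measure.pi m univ ≠ 0) : 0 < volume (simMap (n+1) (n+1) '' K) := by
  obtain ⟨C', j0, hj⟩ := count_bound n k hk hkn hC hs hs1 h m h1 h2 hK hKd
  obtain ⟨M, hM, hb⟩ := unif_bds hK hKd
  have hΦ := simMap_meas (n+1) (n+1)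
  have hcont : ContinuousOn (simMap (n+1) (n+1)) K := by
    unfold simMap
    refine continuousOn_pi.2 fun p => ?_
    refine ContinuousOn.div (by fun_prop) (by fun_prop) fun x hx => (hb x hx).2.2.1.ne'
  have hZ := hK.image_of_continuousOn hcont
  set P := Measure.pi m with hP
  have : IsFiniteMeasure (P.map (simMap (n+1) (n+1))) := inferInstance
  refine pos_vol (P.map (simMap (n+1) (n+1))) _ hZ ?_ ?_ C' j0 fun j hj' => ?_
  · rw [Measure.map_apply hΦ hZ.measurableSet.compl]
    refine measure_mono_null ?_ hm0
    intro x hx hxK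
    exact hx ⟨x, hxK, rfl⟩
  · rw [Measure.map_apply hΦ MeasurableSet.univ]; exact hm1
  · refine le_trans ?_ (hj j hj')
    rw [Measure.map_prod_map _ _ hΦ hΦ, Measure.map_apply (hΦ.prodMap hΦ) (isClosed_le (by fun_prop) (by fun_prop)).measurableSet]
    have hnull : (P.prod P) (K ×ˢ K)ᶜ = 0 := by
      rw [compl_prod_eq_union]
      refine measure_union_null ?_ ?_ <;> rw [Measure.prod_prod, hm0] <;> simp
    refine (measure_mono (t := {p | p.1 ∈ K ∧ p.2 ∈ K ∧ ‖simMap (n+1) (n+1) p.1 - simMap (n+1) (n+1) p.2‖ ≤ (1/2)^j} ∪ (K ×ˢ K)ᶜ) ?_).trans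
      ((measure_union_le _ _).trans (by rw [hnull, add_zero]))
    rintro ⟨x, y⟩ hxy
    by_cases hK' : (x, y) ∈ K ×ˢ K
    · refine Or.inl ⟨hK'.1, hK'.2, ?_⟩
      rw [← dist_eq_norm]
      exact hxy
    · exact Or.inr hK'

lemma frost_null {d : ℕ} {μ : Measure (Pt d)} {s C : ℝ} (hs : 0 < s) (hC : 0 < C)
    (hμ : ∀ x : Pt d, ∀ r : ℝ, 0 < r → μ (ball x r) ≤ ENNReal.ofReal (C * r ^ s)) {S : Set (Pt d)}
    (hS : dimH S < ENNReal.ofReal s) : μ S = 0 := by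
  have key : ENNReal.ofReal (1/C) • μ ≤ Measure.hausdorffMeasure s := by
    refine Measure.le_hausdorffMeasure s _ 1 one_pos fun T hT => ?_
    rcases T.eq_empty_or_nonempty with rfl | ⟨x, hx⟩
    · simp
    have hTt : ediam T ≠ ⊤ := (hT.trans_lt ENNReal.one_lt_top).ne
    have hb : ∀ r, (ediam T).toReal < r → μ T ≤ ENNReal.ofReal (C * r^s) := by
      intro r hr
      refine (measure_mono fun y hy => ?_).trans (hμ x r (ENNReal.toReal_nonneg.trans_lt hr))
      rw [mem_ball, dist_edist]
      exact (ENNReal.toReal_mono hTt (edist_le_ediam_of_mem hy hx)).trans_lt hr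
    have hlim : Filter.Tendsto (fun r : ℝ => ENNReal.ofReal (C * r^s)) (𝓝[>] (ediam T).toReal) (𝓝 (ENNReal.ofReal (C * (ediam T).toReal^s))) := by
      have : Continuous fun r : ℝ => ENNReal.ofReal (C * r^s) :=
        ENNReal.continuous_ofReal.comp (continuous_const.mul (Real.continuous_rpow_const hs.le))
      exact (this.tendsto _).mono_left nhdsWithin_le_nhds
    have h1 : μ T ≤ ENNReal.ofReal (C * (ediam T).toReal^s) :=
      ge_of_tendsto hlim (Filter.eventually_of_mem self_mem_nhdsWithin fun r hr => hb r hr)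
    rw [Measure.smul_apply, smul_eq_mul]
    calc _ ≤ ENNReal.ofReal (1/C) * ENNReal.ofReal (C * (ediam T).toReal^s) := by gcongr
      _ = ENNReal.ofReal ((ediam T).toReal^s) := by
          rw [← ENNReal.ofReal_mul (by positivity)]; congr 1; field_simp
      _ = _ := by rw [← ENNReal.ofReal_rpow_of_nonneg ENNReal.toReal_nonneg hs.le, ENNReal.ofReal_toReal hTt]
  have h0 : Measure.hausdorffMeasure s S = 0 := by
    have := hausdorffMeasure_of_dimH_lt (d := s.toNNReal) hS
    rwa [Real.coe_toNNReal _ hs.le] at this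
  have := le_antisymm ((key S).trans h0.le) zero_le
  rw [Measure.smul_apply, smul_eq_mul, mul_eq_zero, ENNReal.ofReal_eq_zero] at this
  rcases this with h | h
  · exact absurd h (not_le.2 (by positivity))
  · exact h

lemma sub_null {d : ℕ} {μ : Measure (Pt d)} {s C : ℝ} (hs : 0 < s) (hC : 0 < C)
    (hμ : ∀ x : Pt d, ∀ r : ℝ, 0 < r → μ (ball x r) ≤ ENNReal.ofReal (C * r ^ s)) (V : Submodule ℝ (Pt d)) (x : Pt d)
    (hV : (Module.finrank ℝ V : ℝ) < s) : μ {y | y - x ∈ V} = 0 := by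
  refine frost_null hs hC hμ ?_
  have hc : ContDiff ℝ 1 (fun v : V => x + (v : Pt d)) := contDiff_const.add V.subtypeL.contDiff
  have e : {y | y - x ∈ V} = range (fun v : V => x + (v : Pt d)) := by
    ext y
    constructor
    · intro hy; exact ⟨⟨y - x, hy⟩, by simp⟩
    · rintro ⟨v, rfl⟩; simp
  rw [e]
  refine hc.dimH_range_le.trans_lt ?_
  rw [← ENNReal.ofReal_natCast]
  exact (ENNReal.ofReal_lt_ofReal_iff hs).2 hV

lemma select {d k : ℕ} (μ : Measure (Pt d)) [IsProbabilityMeasure μ]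
    (hnull : ∀ (V : Submodule ℝ (Pt d)) (x : Pt d), Module.finrank ℝ V < k → μ {y | y - x ∈ V} = 0) (j : ℕ) (hj : j ≤ d) :
    ∃ x : Fin (j+1) → Pt d, LinearIndependent ℝ (fun i : Fin j => x i.succ - x 0) ∧ ∀ i : Fin (j+1), i.val ≤ k → x i ∈ μ.support := by
  induction j with
  | zero =>
    obtain ⟨p, hp⟩ := Measure.nonempty_support (μ := μ) (IsProbabilityMeasure.ne_zero μ)
    exact ⟨fun _ => p, linearIndependent_empty_type, fun _ _ => hp⟩
  | succ j ih =>
    obtain ⟨x, hx, hxs⟩ := ih (by omega)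
    set V := Submodule.span ℝ (range fun i : Fin j => x i.succ - x 0) with hV
    have hVr : Module.finrank ℝ V = j := by
      rw [hV, finrank_span_eq_card hx, Fintype.card_fin]
    have hy : ∃ y, y - x 0 ∉ V ∧ (j+1 ≤ k → y ∈ μ.support) := by
      by_cases hjk : j+1 ≤ k
      · by_contra hcon
        push Not at hcon
        have h1 : μ univ ≤ μ ({y | y - x 0 ∈ V} ∪ μ.supportᶜ) := by
          refine measure_mono fun y _ => ?_
          by_cases hy : y - x 0 ∈ V
          · exact Or.inl hy
          · exact Or.inr (hcon y hy).2
        rw [measure_union_null (hnull V _ (by omega)) Measure.measure_compl_support, measure_univ] at h1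
        exact absurd h1 (by simp)
      · have : V ≠ ⊤ := by
          intro h
          rw [h, finrank_top, finrank_euclideanSpace_fin] at hVr
          omega
        obtain ⟨w, hw⟩ : ∃ w, w ∉ V := by
          by_contra hcon
          push Not at hcon
          exact this (Submodule.eq_top_iff'.2 hcon)
        exact ⟨x 0 + w, by simpa using hw, fun h => absurd h hjk⟩
    obtain ⟨y, hyV, hys⟩ := hy
    refine ⟨Fin.snoc (α := fun _ => Pt d) x y, ?_, ?_⟩
    · have e : (fun i : Fin (j+1) => (Fin.snoc (α := fun _ => Pt d) x y : Fin (j+2) → Pt d) i.succ - (Fin.snoc (α := fun _ => Pt d) x y : Fin (j+2) → Pt d) 0) =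
          Fin.snoc (α := fun _ => Pt d) (fun i : Fin j => x i.succ - x 0) (y - x 0) := by
        funext i
        have h0 : (Fin.snoc (α := fun _ => Pt d) x y : Fin (j+2) → Pt d) 0 = x 0 :=
          Fin.snoc_castSucc (α := fun _ => Pt d) y x 0
        rw [h0]
        refine Fin.lastCases ?_ (fun i => ?_) i
        · rw [Fin.succ_last, Fin.snoc_last, Fin.snoc_last]
        · rw [Fin.succ_castSucc, Fin.snoc_castSucc, Fin.snoc_castSucc]
      rw [e]
      exact linearIndependent_finSnoc.2 ⟨hx, hyV⟩
    · intro i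
      refine Fin.lastCases ?_ (fun i => ?_) i
      · intro h
        rw [Fin.snoc_last]
        exact hys (by simpa using h)
      · intro h
        rw [Fin.snoc_castSucc]
        exact hxs i (by simpa using h)

def eIdx {k n : ℕ} (hkn : k ≤ n) (p : PairIdx' (k+1)) : PairIdx' (n+1) :=
  ⟨(Fin.castLE (by omega) p.1.1, Fin.castLE (by omega) p.1.2), by
    refine ⟨p.2.1, fun h => p.2.2 ?_⟩
    rw [Prod.ext_iff] at h ⊢
    simp only [Fin.ext_iff, Fin.val_castLE] at h ⊢
    exact h⟩

lemma eIdx_inj {k n : ℕ} (hkn : k ≤ n) : Function.Injective (eIdx hkn) := by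
  intro p q h
  have h1 := congrArg (fun r : PairIdx' (n+1) => r.1.1.val) h
  have h2 := congrArg (fun r : PairIdx' (n+1) => r.1.2.val) h
  exact Subtype.ext (Prod.ext (Fin.ext h1) (Fin.ext h2))

lemma proj_pos {k n : ℕ} (hkn : k ≤ n) (Z : Set (PairIdx' (n+1) → ℝ)) (S : Set (PairIdx' (k+1) → ℝ))
    (hZ : 0 < volume Z) (h : ∀ ω ∈ Z, (fun p => ω (eIdx hkn p)) ∈ S) : 0 < volume S := by
  rw [pos_iff_ne_zero] at hZ ⊢
  intro h0
  apply hZ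
  set L := LinearMap.funLeft ℝ ℝ (eIdx hkn) with hL
  have hsurj : Function.Surjective L := LinearMap.funLeft_surjective_of_injective _ _ _ (eIdx_inj hkn)
  obtain ⟨c, -, hc⟩ := L.exists_map_addHaar_eq_smul_addHaar volume volume hsurj
  have hLm : Measurable L := L.continuous_of_finiteDimensional.measurable
  have hT : volume (toMeasurable volume S) = 0 := by rw [measure_toMeasurable, h0]
  refine measure_mono_null (t := L ⁻¹' (toMeasurable volume S)) (fun ω hω => ?_) ?_
  · exact subset_toMeasurable _ _ (h ω hω)
  · rw [← Measure.map_apply hLm (measurableSet_toMeasurable _ _), hc, Measure.smul_apply, hT, smul_zero]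

lemma sim_proj {k n : ℕ} (hkn : k ≤ n) (E : Set (Pt (n+1))) (x : Fin (n+2) → Pt (n+1)) (hx : Nondeg (n+1) (n+1) x)
    (hE : ∀ i : Fin (n+2), i.val ≤ k+1 → x i ∈ E) :
    (fun p => simMap (n+1) (n+1) x (eIdx hkn p)) ∈ Sconf (n+1) (k+1) E := by
  refine ⟨fun i => x (Fin.castLE (by omega) i), ⟨fun i => hE _ (by simpa using Nat.lt_succ_iff.1 i.2), ?_⟩, ?_⟩
  · exact LinearIndependent.comp hx (Fin.castLE (by omega : k+1 ≤ n+1)) (Fin.castLE_injective _)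
  · rfl

theorem main_aux (n k : ℕ) (hkn : k ≤ n) (hk : 1 ≤ k) (E : Set (Pt (n+1))) (hE : IsCompact E)
    (hdim : (((n+1)*(k+1) : ℕ) : ℝ≥0∞) / (((k+1)+1 : ℕ) : ℝ≥0∞) < dimH E) : 0 < volume (Sconf (n+1) (k+1) E) := by
  obtain ⟨s, hs0, hsl, hsu⟩ := ENNReal.lt_iff_exists_real_btwn.1 hdim
  have hsd : s ≤ ((n+1:ℕ):ℝ) := by
    have h1 : ENNReal.ofReal s ≤ ((n+1:ℕ):ℝ≥0∞) := by
      refine hsu.le.trans ((dimH_mono (subset_univ E)).trans ?_)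
      rw [Real.dimH_univ_eq_finrank, finrank_euclideanSpace_fin]
    rw [← ENNReal.ofReal_natCast] at h1
    exact (ENNReal.ofReal_le_ofReal_iff (by positivity)).1 h1
  have hs1 : ((n+1:ℕ):ℝ)*((k+1:ℕ):ℝ) < s*(((k+1:ℕ):ℝ)+1) := by
    rw [ENNReal.div_lt_iff (Or.inl (by simp)) (Or.inl (by simp)), ← ENNReal.ofReal_natCast, ← ENNReal.ofReal_natCast,
      ← ENNReal.ofReal_mul hs0, ENNReal.ofReal_lt_ofReal_iff_of_nonneg (by positivity)] at hsl
    push_cast at hsl ⊢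
    exact hsl
  have hsk : (k:ℝ) < s := by
    have h1 : (k:ℝ) ≤ n := by exact_mod_cast hkn
    push_cast at hs1
    by_contra hcon
    push Not at hcon
    have : (0:ℝ) ≤ k := by positivity
    nlinarith
  have hspos : 0 < s := lt_of_le_of_lt (by positivity) hsk
  obtain ⟨μ, hμp, hμE, C, hC, hμ⟩ := frostman E hE s hspos hsu
  obtain ⟨C', hC', hpot⟩ := gauss_pot μ s C hspos hC hμ
  have hPot : PotB μ s C' := hpot
  obtain ⟨x, hxi, hxs⟩ := select (k := k+1) μ (fun V p hV => sub_null hspos hC hμ V p (by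
    have : (Module.finrank ℝ V : ℝ) ≤ k := by exact_mod_cast Nat.lt_succ_iff.1 hV
    linarith)) (n+1) le_rfl
  have hdet : (Xm x).det ≠ 0 := (Nondeg_iff x).1 hxi
  have hopen : IsOpen {y : Fin (n+2) → Pt (n+1) | (Xm y).det ≠ 0} :=
    isOpen_ne_fun Xm_continuous.matrix_det continuous_const
  obtain ⟨η', hη', hball⟩ := Metric.isOpen_iff.1 hopen x hdet
  set η := η'/2 with hη
  have hη0 : 0 < η := by positivity
  set Kf : Fin (n+2) → Set (Pt (n+1)) := fun i => closedBall (x i) η ∩ (if i.val ≤ k+1 then E else univ) with hKf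
  have hKc : ∀ i, IsCompact (Kf i) := by
    intro i
    refine (isCompact_closedBall _ _).inter_right ?_
    split_ifs
    · exact hE.isClosed
    · exact isClosed_univ
  set m : Fin (n+2) → Measure (Pt (n+1)) := fun i => (if i.val ≤ k+1 then μ else volume).restrict (Kf i) with hm
  have hmf : ∀ i, IsFiniteMeasure (m i) := by
    intro i
    simp only [hm]
    split_ifs
    · infer_instance
    · exact ⟨by rw [Measure.restrict_apply_univ]; exact (hKc i).measure_lt_top⟩
  have hKcomp : IsCompact (Set.pi univ Kf) := isCompact_univ_pi hKc
  have hKd : ∀ y ∈ Set.pi univ Kf, (Xm y).det ≠ 0 := by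
    intro y hy
    refine hball ?_
    rw [mem_ball]
    refine lt_of_le_of_lt ((dist_pi_le_iff hη0.le).2 fun i => (hy i (mem_univ i)).1) (by rw [hη]; linarith)
  have hmu : ∀ i, m i (Kf i) = m i univ := by
    intro i
    simp only [hm]
    rw [Measure.restrict_apply_self, Measure.restrict_apply_univ]
  have hpos : ∀ i, m i univ ≠ 0 := by
    intro i
    simp only [hm]
    rw [Measure.restrict_apply_univ]
    simp only [hKf]
    split_ifs with hi
    · have h1 : 0 < μ (closedBall (x i) η) := (Measure.mem_support_iff_forall (x i)).1 (hxs i hi) _ (closedBall_mem_nhds _ hη0)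
      rw [measure_inter_conull hμE]
      exact h1.ne'
    · rw [inter_univ]
      exact (measure_closedBall_pos _ _ hη0).ne'
  have hPK : Measure.pi m (Set.pi univ Kf) = Measure.pi m univ := by
    rw [Measure.pi_pi, Measure.pi_univ]
    exact Finset.prod_congr rfl fun i _ => hmu i
  have hZ := top_pos n (k+1) (by omega) (by omega) hC' hsd (by exact_mod_cast hs1) hPot m
    (fun i hi => by simp only [hm, if_pos hi]; exact Measure.restrict_le_self)
    (fun i hi => by simp only [hm, if_neg (not_le.2 hi)]; exact Measure.restrict_le_self) hKcomp hKd
    (by rw [measure_compl hKcomp.measurableSet (measure_ne_top _ _), hPK, tsub_self])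
    (by rw [Measure.pi_univ]; exact Finset.prod_ne_zero_iff.2 fun i _ => hpos i)
  refine proj_pos hkn _ _ hZ ?_
  rintro ω ⟨y, hy, rfl⟩
  refine sim_proj hkn E y ((Nondeg_iff y).2 (hKd y hy)) fun i hi => ?_
  have := (hy i (mem_univ i)).2
  rwa [if_pos hi] at this

theorem stmt4' (d k : ℕ) (hd : 2 ≤ d) (hk : 2 ≤ k) (hkd : k ≤ d) (E : Set (Pt d)) (hE : IsCompact E)
    (hdim : ((d * k : ℕ) : ℝ≥0∞) / ((k + 1 : ℕ) : ℝ≥0∞) < dimH E) : 0 < volume (Sconf d k E) := by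
  obtain ⟨n, rfl⟩ : ∃ n, d = n+1 := ⟨d-1, by omega⟩
  obtain ⟨k, rfl⟩ : ∃ j, k = j+1 := ⟨k-1, by omega⟩
  exact main_aux n k (by omega) (by omega) E hE hdim

theorem stmt4 (d k : ℕ) (hd : 2 ≤ d) (hk : 2 ≤ k) (hkd : k ≤ d)
    (E : Set (Pt d)) (hE : IsCompact E)
    (hdim : ((d * k : ℕ) : ℝ≥0∞) / ((k + 1 : ℕ) : ℝ≥0∞) < dimH E) :
    0 < volume (Sconf d k E) := by
  exact stmt4' d k hd hk hkd E hE hdim
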